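/- arXiv:1312.0668 — 3 statements merged into one kernel-verified Lean document; each statement's English description precedes it below -/
import Mathlib

section
/- Let ω be a nondecreasing sequence of positive reals tending to +∞, let (n_k) be a sequence of distinct positive integers satisfying Condition A_ω, let f satisfy the stated conditions, and put S_N(x) = Σ_{k=1}^N f(n_k x) and σ_N = (∫₀¹ S_N(x)² dx)^{1/2}. Then there is an absolute constant C such that for every integer p ≥ 3 and every N large enough that ω_{⌊N^{1/4}⌋} ≥ 8p: if p is even then |∫₀¹ S_N(x)^p dx − (p!/((p/2)!)) 2^{-p/2} σ_N^p| ≤ C·exp(p²) N^{(p−1)/2} (log N)^p, and if p is odd then |∫₀¹ S_N(x)^p dx| ≤ C·exp(p²) N^{(p−1)/2} (log N)^p. -/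
/-!
Averaging the translates of `f` against the density proportional to `cos (πt) ^ (2d)` gives a
trigonometric polynomial `g` of degree `d` with `∫ |f - g| ≤ V / √(2d + 2)`, where `V` is the
variation of `f` on a period. For `d = M ^ (7p)` with `M = ⌊N ^ (1/4)⌋`, replacing `f` by `g`
changes the moments of `S_N` up to order `p` by less than the error allowed.

Condition `A_ω` at `M` says that a vanishing sum of at most `p` frequencies of dilates of `g` only
involves the `M` smallest terms of the sequence. Hence, in moments of order at most `p`, each of the
other dilates acts like an independent variable: up to order `p`, the exponential moment generating
series of `∑ g (n_k x)` is `A * F ^ j`, where `A` belongs to at most `M` dilates and `F` to `g`.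

A centred variable and the Gaussian of equal variance have moment series agreeing up to order two.
In the submultiplicative norm `∑ |a_m| r ^ m` with `r` of order `1 / √N`, their distance is thus
`O(N ^ (-3/2))`, and telescoping over the `j ≤ N` equal factors costs a factor `N`; the factor `A`
is closer to its Gaussian than `N ^ (-1/2)` because `M ^ 3 ≤ N`. The resulting relative error
`O(N ^ (-1/2))` contains no logarithm.
-/

open MeasureTheory Filter Real Topology

noncomputable section

/-- `n k` is among the `N` smallest elements of the sequence `n`. -/
def AmongSmallest (n : ℕ → ℕ) (N : ℕ) (k : ℕ) : Prop :=
  {j : ℕ | n j ≤ n k}.ncard ≤ N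

/-- Condition `A_ω` with explicit threshold `N₀`. -/
def CondAWith (ω : ℕ → ℝ) (n : ℕ → ℕ) (N₀ : ℕ) : Prop :=
  ∀ N : ℕ, N₀ ≤ N →
    ∀ (r : ℕ) (k : Fin r → ℕ) (a : Fin r → ℤ),
      2 ≤ r → (r : ℝ) ≤ ω N →
      Function.Injective k →
      (∀ i, a i ≠ 0) →
      (∀ i, (|a i| : ℝ) ≤ (N : ℝ) ^ ω N) →
      (∑ i, a i * (n (k i) : ℤ)) = 0 →
      ∀ i, AmongSmallest n N (k i)

/-- Condition `A_ω`. -/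
def CondA (ω : ℕ → ℝ) (n : ℕ → ℕ) : Prop := ∃ N₀, CondAWith ω n N₀

open scoped PowerSeries
open PowerSeries (coeff)

/-- The weighted `ℓ¹` norm `∑_{m ≤ p} ‖aₘ‖ rᵐ` of the truncation of `∑ aₘ Xᵐ` at order `p`. It is
submultiplicative, which turns comparison of moments into comparison in a normed algebra. -/
def truncNorm {A : Type*} [SeminormedRing A] (p : ℕ) (r : ℝ) (F : A⟦X⟧) : ℝ :=
  ∑ m ∈ Finset.range (p + 1), ‖coeff m F‖ * r ^ m

section TruncNorm

variable {A : Type*} [SeminormedRing A] {p : ℕ} {r : ℝ} {F G : A⟦X⟧}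

lemma truncNorm_nonneg (hr : 0 ≤ r) : 0 ≤ truncNorm p r F :=
  Finset.sum_nonneg fun _ _ => by positivity

lemma norm_coeff_mul_pow_le_truncNorm (hr : 0 ≤ r) {m : ℕ} (hm : m ≤ p) :
    ‖coeff m F‖ * r ^ m ≤ truncNorm p r F :=
  Finset.single_le_sum (f := fun m => ‖coeff m F‖ * r ^ m) (fun _ _ => by positivity)
    (Finset.mem_range_succ_iff.2 hm)

lemma truncNorm_add_le (hr : 0 ≤ r) :
    truncNorm p r (F + G) ≤ truncNorm p r F + truncNorm p r G := by
  simp only [truncNorm, ← Finset.sum_add_distrib, ← add_mul, map_add]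
  gcongr
  exact norm_add_le _ _

lemma truncNorm_sub_le (hr : 0 ≤ r) :
    truncNorm p r (F - G) ≤ truncNorm p r F + truncNorm p r G := by
  simp only [truncNorm, ← Finset.sum_add_distrib, ← add_mul, map_sub]
  gcongr
  exact norm_sub_le _ _

lemma truncNorm_mul_le (hr : 0 ≤ r) :
    truncNorm p r (F * G) ≤ truncNorm p r F * truncNorm p r G := by
  have hcoeff : ∀ m, ‖coeff m (F * G)‖ * r ^ m ≤ ∑ i ∈ Finset.range (m + 1),
      (‖coeff i F‖ * r ^ i) * (‖coeff (m - i) G‖ * r ^ (m - i)) := fun m => by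
    rw [PowerSeries.coeff_mul,
      Finset.Nat.sum_antidiagonal_eq_sum_range_succ fun i j => coeff i F * coeff j G]
    refine (mul_le_mul_of_nonneg_right (norm_sum_le _ _) (by positivity)).trans ?_
    rw [Finset.sum_mul]
    refine Finset.sum_le_sum fun i hi => ?_
    have hpow : r ^ m = r ^ i * r ^ (m - i) := by
      rw [← pow_add, Nat.add_sub_cancel' (Finset.mem_range_succ_iff.1 hi)]
    rw [hpow, mul_mul_mul_comm]
    gcongr
    exact norm_mul_le _ _
  calc truncNorm p r (F * G)
    _ ≤ ∑ m ∈ Finset.range (p + 1), ∑ i ∈ Finset.range (m + 1),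
          (‖coeff i F‖ * r ^ i) * (‖coeff (m - i) G‖ * r ^ (m - i)) :=
      Finset.sum_le_sum fun m _ => hcoeff m
    _ = ∑ i ∈ Finset.range (p + 1), ∑ m ∈ Finset.range (p + 1 - i),
          (‖coeff i F‖ * r ^ i) * (‖coeff m G‖ * r ^ m) :=
      Finset.sum_range_diag_flip (p + 1) fun i m =>
        (‖coeff i F‖ * r ^ i) * (‖coeff m G‖ * r ^ m)
    _ ≤ ∑ i ∈ Finset.range (p + 1), (‖coeff i F‖ * r ^ i) * truncNorm p r G := by
      simp only [truncNorm, Finset.mul_sum]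
      refine Finset.sum_le_sum fun i _ => Finset.sum_le_sum_of_subset_of_nonneg ?_ ?_
      · exact Finset.range_mono (Nat.sub_le _ _)
      · intros; positivity
    _ = truncNorm p r F * truncNorm p r G := by rw [← Finset.sum_mul]; rfl

lemma truncNorm_smul_radius_le {θ : ℝ} (hr : 0 ≤ r) (hθ : 0 ≤ θ) (hθ' : θ ≤ 1) {k : ℕ}
    (hF : ∀ m < k, coeff m F = 0) : truncNorm p (θ * r) F ≤ θ ^ k * truncNorm p r F := by
  rw [truncNorm, truncNorm, Finset.mul_sum]
  refine Finset.sum_le_sum fun m _ => ?_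
  obtain hm | hm := lt_or_ge m k
  · simp [hF m hm]
  · rw [mul_pow, mul_left_comm]
    gcongr ?_ * _
    exact pow_le_pow_of_le_one hθ hθ' hm

lemma truncNorm_le_exp {c : ℝ} (hr : 0 ≤ r) (hc : 0 ≤ c)
    (hF : ∀ m, ‖coeff m F‖ ≤ c ^ m / m.factorial) : truncNorm p r F ≤ exp (c * r) := by
  refine le_trans (Finset.sum_le_sum fun m _ => ?_)
    (Real.sum_le_exp_of_nonneg (mul_nonneg hc hr) (p + 1))
  calc ‖coeff m F‖ * r ^ m ≤ c ^ m / m.factorial * r ^ m := by gcongr; exact hF m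
    _ = (c * r) ^ m / m.factorial := by rw [mul_pow]; ring

section NormOneClass

variable [NormOneClass A]

lemma truncNorm_one : truncNorm p r (1 : A⟦X⟧) = 1 := by
  rw [truncNorm, Finset.sum_eq_single 0] <;> simp +contextual [PowerSeries.coeff_one]

lemma truncNorm_eq_one_add (hF : PowerSeries.constantCoeff F = 1) :
    truncNorm p r F = 1 + truncNorm p r (F - 1) := by
  simp [truncNorm, Finset.sum_range_succ' _ p, hF, PowerSeries.coeff_one, add_comm]

variable {B : ℝ}

lemma truncNorm_pow_le (hr : 0 ≤ r) (hF : truncNorm p r F ≤ B) (j : ℕ) :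
    truncNorm p r (F ^ j) ≤ B ^ j := by
  induction j with
  | zero => simp [truncNorm_one]
  | succ j ih =>
    rw [pow_succ, pow_succ]
    exact (truncNorm_mul_le hr).trans
      (mul_le_mul ih hF (truncNorm_nonneg hr) ((truncNorm_nonneg hr).trans ih))

lemma truncNorm_pow_sub_pow_le (hr : 0 ≤ r) (hB : 1 ≤ B) (hF : truncNorm p r F ≤ B)
    (hG : truncNorm p r G ≤ B) (j : ℕ) :
    truncNorm p r (F ^ j - G ^ j) ≤ j * B ^ j * truncNorm p r (F - G) := by
  induction j with
  | zero => simp [truncNorm]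
  | succ j ih =>
    have htelescope : F ^ (j + 1) - G ^ (j + 1) = F ^ j * (F - G) + (F ^ j - G ^ j) * G := by
      noncomm_ring
    have hFj : truncNorm p r (F ^ j) ≤ B ^ (j + 1) :=
      (truncNorm_pow_le hr hF j).trans (pow_le_pow_right₀ hB (Nat.le_succ j))
    calc truncNorm p r (F ^ (j + 1) - G ^ (j + 1))
      _ ≤ truncNorm p r (F ^ j) * truncNorm p r (F - G) +
            truncNorm p r (F ^ j - G ^ j) * truncNorm p r G := by
        rw [htelescope]
        exact (truncNorm_add_le hr).trans (add_le_add (truncNorm_mul_le hr) (truncNorm_mul_le hr))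
      _ ≤ B ^ (j + 1) * truncNorm p r (F - G) + j * B ^ j * truncNorm p r (F - G) * B := by
        have hdiff : 0 ≤ truncNorm p r (F - G) := truncNorm_nonneg hr
        have := truncNorm_nonneg (p := p) (F := G) hr
        gcongr
      _ = _ := by push_cast; ring

end NormOneClass

end TruncNorm

section GaussianSeries

/-- The exponential generating function `exp (v X² / 2)` of the moments of a centred Gaussian
variable of variance `v`. -/
def gaussianSeries (v : ℝ) : ℝ⟦X⟧ :=
  PowerSeries.expand 2 two_ne_zero (PowerSeries.rescale (v / 2) (PowerSeries.exp ℝ))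

lemma coeff_two_mul_gaussianSeries (v : ℝ) (l : ℕ) :
    coeff (2 * l) (gaussianSeries v) = (v / 2) ^ l / l.factorial := by
  simp [gaussianSeries, PowerSeries.coeff_expand_mul, PowerSeries.coeff_exp, div_eq_mul_inv]

lemma coeff_gaussianSeries_of_odd (v : ℝ) {m : ℕ} (hm : Odd m) :
    coeff m (gaussianSeries v) = 0 :=
  PowerSeries.coeff_expand_of_not_dvd _ _ _ fun h =>
    Nat.not_even_iff_odd.2 hm (even_iff_two_dvd.2 h)

lemma constantCoeff_gaussianSeries (v : ℝ) :
    PowerSeries.constantCoeff (gaussianSeries v) = 1 := by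
  simpa using coeff_two_mul_gaussianSeries v 0

lemma gaussianSeries_zero : gaussianSeries 0 = 1 := by
  simp [gaussianSeries]

lemma gaussianSeries_add (v w : ℝ) :
    gaussianSeries (v + w) = gaussianSeries v * gaussianSeries w := by
  rw [gaussianSeries, add_div, ← PowerSeries.exp_mul_exp_eq_exp_add, map_mul]
  rfl

lemma gaussianSeries_nat_mul (j : ℕ) (v : ℝ) :
    gaussianSeries (j * v) = gaussianSeries v ^ j := by
  induction j with
  | zero => simp [gaussianSeries_zero]
  | succ j ih => rw [Nat.cast_succ, add_one_mul, gaussianSeries_add, ih, pow_succ]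

variable {p : ℕ} {r : ℝ}

lemma hasSum_abs_coeff_gaussianSeries_mul_pow (v r : ℝ) :
    HasSum (fun m => |coeff m (gaussianSeries v)| * r ^ m) (exp (|v| * r ^ 2 / 2)) := by
  have hcoeff : ∀ l, |coeff (2 * l) (gaussianSeries v)| * r ^ (2 * l) =
      (|v| * r ^ 2 / 2) ^ l / l.factorial := fun l => by
    rw [coeff_two_mul_gaussianSeries, abs_div, abs_pow, abs_div, abs_two, Nat.abs_cast, pow_mul,
      mul_div_right_comm |v|, mul_pow]
    ring
  have heven : HasSum (fun l => |coeff (2 * l) (gaussianSeries v)| * r ^ (2 * l))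
      (exp (|v| * r ^ 2 / 2)) := by
    simpa only [hcoeff, Real.exp_eq_exp_ℝ] using
      NormedSpace.expSeries_div_hasSum_exp (|v| * r ^ 2 / 2)
  have hodd : HasSum (fun l => |coeff (2 * l + 1) (gaussianSeries v)| * r ^ (2 * l + 1)) 0 := by
    simp only [coeff_gaussianSeries_of_odd v (odd_two_mul_add_one _), abs_zero, zero_mul]
    exact hasSum_zero
  rw [← add_zero (exp _)]
  exact heven.even_add_odd hodd

lemma truncNorm_gaussianSeries_le (p : ℕ) (v : ℝ) (hr : 0 ≤ r) :
    truncNorm p r (gaussianSeries v) ≤ exp (|v| * r ^ 2 / 2) :=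
  sum_le_hasSum _ (fun _ _ => by positivity) (hasSum_abs_coeff_gaussianSeries_mul_pow v r)

lemma truncNorm_gaussianSeries_sub_le (v w : ℝ) (hr : 0 ≤ r) :
    truncNorm p r (gaussianSeries w - gaussianSeries v) ≤
      exp (|v| * r ^ 2 / 2) * (exp (|w - v| * r ^ 2 / 2) - 1) := by
  have hfactor : gaussianSeries w - gaussianSeries v =
      gaussianSeries v * (gaussianSeries (w - v) - 1) := by
    rw [mul_sub, ← gaussianSeries_add, mul_one, add_sub_cancel]
  have hsub : truncNorm p r (gaussianSeries (w - v) - 1) ≤ exp (|w - v| * r ^ 2 / 2) - 1 := by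
    have hone := truncNorm_eq_one_add (p := p) (r := r)
      (constantCoeff_gaussianSeries (w - v))
    linarith [truncNorm_gaussianSeries_le p (w - v) hr]
  rw [hfactor]
  exact (truncNorm_mul_le hr).trans (mul_le_mul (truncNorm_gaussianSeries_le p v hr) hsub
    (truncNorm_nonneg hr) (exp_pos _).le)

/-- The `p`-th moment of a centred Gaussian variable of variance `v`. -/
def gaussianMoment (p : ℕ) (v : ℝ) : ℝ := p.factorial * coeff p (gaussianSeries v)

lemma gaussianMoment_sq_of_even {p : ℕ} (hp : Even p) (σ : ℝ) :
    gaussianMoment p (σ ^ 2) = p.factorial / ((p / 2).factorial * 2 ^ (p / 2)) * σ ^ p := by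
  obtain ⟨l, rfl⟩ := even_iff_exists_two_mul.1 hp
  rw [gaussianMoment, coeff_two_mul_gaussianSeries, Nat.mul_div_cancel_left l two_pos, div_pow,
    pow_mul]
  ring

lemma gaussianMoment_of_odd {p : ℕ} (hp : Odd p) (v : ℝ) : gaussianMoment p v = 0 := by
  rw [gaussianMoment, coeff_gaussianSeries_of_odd v hp, mul_zero]

lemma abs_gaussianMoment_sub_mul_pow_le (v w : ℝ) (hr : 0 ≤ r) :
    |gaussianMoment p w - gaussianMoment p v| * r ^ p ≤
      p.factorial * (exp (|v| * r ^ 2 / 2) * (exp (|w - v| * r ^ 2 / 2) - 1)) := by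
  rw [gaussianMoment, gaussianMoment, ← mul_sub, abs_mul, Nat.abs_cast, mul_assoc, ← map_sub]
  exact mul_le_mul_of_nonneg_left ((norm_coeff_mul_pow_le_truncNorm hr le_rfl).trans
    (truncNorm_gaussianSeries_sub_le v w hr)) (by positivity)

lemma abs_gaussianMoment_sub_le {v w ρ ε : ℝ} (hρ : 0 < ρ) (hε : 0 ≤ ε) (hε_le : ε ≤ 1)
    (hv : |v| ≤ 2 * ρ ^ 2) (hwv : |w - v| ≤ 2 * ρ ^ 2 * ε) :
    |gaussianMoment p w - gaussianMoment p v| ≤ 6 * p.factorial * ρ ^ p * ε := by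
  have hρ_sq : 2 * ρ ^ 2 * ρ⁻¹ ^ 2 / 2 = 1 := by field_simp
  have hv_exp : exp (|v| * ρ⁻¹ ^ 2 / 2) ≤ 3 :=
    calc exp (|v| * ρ⁻¹ ^ 2 / 2) ≤ exp (2 * ρ ^ 2 * ρ⁻¹ ^ 2 / 2) := by gcongr
      _ ≤ 3 := by rw [hρ_sq]; linarith [Real.exp_one_lt_d9]
  have hwv_exp : exp (|w - v| * ρ⁻¹ ^ 2 / 2) - 1 ≤ 2 * ε :=
    calc exp (|w - v| * ρ⁻¹ ^ 2 / 2) - 1 ≤ exp (2 * ρ ^ 2 * ε * ρ⁻¹ ^ 2 / 2) - 1 := by gcongr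
      _ = exp ε - 1 := by congr 2; linear_combination ε * hρ_sq
      _ ≤ 2 * ε := by
        have := Real.abs_exp_sub_one_le (x := ε) (by rwa [abs_of_nonneg hε])
        rwa [abs_of_nonneg hε, abs_of_nonneg (by linarith [Real.add_one_le_exp ε])] at this
  have h := abs_gaussianMoment_sub_mul_pow_le (p := p) v w (inv_nonneg.2 hρ.le)
  rw [inv_pow, ← div_eq_mul_inv, div_le_iff₀ (by positivity)] at h
  calc |gaussianMoment p w - gaussianMoment p v|
    _ ≤ p.factorial * (exp (|v| * ρ⁻¹ ^ 2 / 2) * (exp (|w - v| * ρ⁻¹ ^ 2 / 2) - 1)) * ρ ^ p := h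
    _ ≤ p.factorial * (3 * (2 * ε)) * ρ ^ p := by
      have : 0 ≤ exp (|w - v| * ρ⁻¹ ^ 2 / 2) - 1 :=
        sub_nonneg.2 (Real.one_le_exp (by positivity))
      gcongr
    _ = 6 * p.factorial * ρ ^ p * ε := by ring

/-- The second moment of a variable whose exponential moment generating function is `F`. -/
def secondMoment (F : ℝ⟦X⟧) : ℝ := 2 * coeff 2 F

/-- The properties of the exponential moment generating function of a centred variable bounded by
`c` which are used to compare it with that of a Gaussian variable. -/
structure IsCentredMomentSeries (c : ℝ) (F : ℝ⟦X⟧) : Prop where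
  constantCoeff_eq_one : PowerSeries.constantCoeff F = 1
  coeff_one_eq_zero : coeff 1 F = 0
  abs_coeff_le (m : ℕ) : |coeff m F| ≤ c ^ m / m.factorial

lemma exp_half_le_two : exp (1 / 2) ≤ 2 := by
  have : exp (1 / 2) ^ 2 = exp 1 := by rw [← exp_nat_mul]; norm_num
  nlinarith [exp_one_lt_three, exp_pos (1 / 2)]

lemma exp_two_mul_sq_pow_le {θ : ℝ} {j : ℕ} (hj : j * θ ^ 2 ≤ 1) : exp (2 * θ ^ 2) ^ j ≤ 9 := by
  rw [← exp_nat_mul]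
  calc exp (j * (2 * θ ^ 2)) ≤ exp (1 + 1) := exp_le_exp.2 (by linarith)
    _ ≤ 9 := by rw [exp_add]; nlinarith [exp_one_lt_three, exp_pos 1]

namespace IsCentredMomentSeries

variable {F A : ℝ⟦X⟧} {a c θ : ℝ} {p : ℕ}

lemma secondMoment_mul_pow (hA : IsCentredMomentSeries a A) (hF : IsCentredMomentSeries c F)
    (j : ℕ) : secondMoment (A * F ^ j) = secondMoment A + j * secondMoment F := by
  have hmul : ∀ G : ℝ⟦X⟧, secondMoment (G * F) =
      secondMoment G + PowerSeries.constantCoeff G * secondMoment F := fun G => by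
    have hcoeff : coeff 2 (G * F) = coeff 2 G + PowerSeries.constantCoeff G * coeff 2 F := by
      simp [PowerSeries.coeff_mul, Finset.Nat.antidiagonal_succ, hF.constantCoeff_eq_one,
        hF.coeff_one_eq_zero, add_comm]
    rw [secondMoment, hcoeff, secondMoment, secondMoment]
    ring
  induction j with
  | zero => simp
  | succ j ih =>
    have hconst : PowerSeries.constantCoeff (A * F ^ j) = 1 := by
      rw [map_mul, map_pow, hA.constantCoeff_eq_one, hF.constantCoeff_eq_one, one_pow, one_mul]
    rw [pow_succ, ← mul_assoc, hmul, ih, hconst, Nat.cast_succ]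
    ring

lemma abs_secondMoment_le (hF : IsCentredMomentSeries c F) : |secondMoment F| ≤ c ^ 2 := by
  have h := hF.abs_coeff_le 2
  rw [Nat.factorial_two, Nat.cast_two] at h
  rw [secondMoment, abs_mul, abs_two]
  linarith

lemma truncNorm_le_exp_one (hF : IsCentredMomentSeries c F) (hc : 0 < c) :
    truncNorm p (1 / c) F ≤ exp 1 := by
  simpa [hc.ne'] using truncNorm_le_exp (p := p) (r := 1 / c) (by positivity) hc.le hF.abs_coeff_le

lemma truncNorm_le (hF : IsCentredMomentSeries c F) (hc : 0 < c) (hθ : 0 ≤ θ) (hθ' : θ ≤ 1) :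
    truncNorm p (θ / c) F ≤ exp (2 * θ ^ 2) := by
  have hsub : truncNorm p (1 / c) (F - 1) ≤ 2 := by
    have := hF.truncNorm_le_exp_one (p := p) hc
    rw [truncNorm_eq_one_add hF.constantCoeff_eq_one] at this
    linarith [exp_one_lt_three]
  have hvanish : ∀ m < 2, coeff m (F - 1) = 0 := fun m hm => by
    interval_cases m <;>
      simp [hF.constantCoeff_eq_one, hF.coeff_one_eq_zero, PowerSeries.coeff_one]
  calc truncNorm p (θ / c) F
    _ = 1 + truncNorm p (θ * (1 / c)) (F - 1) := by
      rw [truncNorm_eq_one_add hF.constantCoeff_eq_one, mul_one_div]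
    _ ≤ 1 + θ ^ 2 * truncNorm p (1 / c) (F - 1) := by
      gcongr
      exact truncNorm_smul_radius_le (by positivity) hθ hθ' hvanish
    _ ≤ 2 * θ ^ 2 + 1 := by nlinarith [sq_nonneg θ]
    _ ≤ exp (2 * θ ^ 2) := add_one_le_exp _

lemma truncNorm_gaussianSeries_le (hF : IsCentredMomentSeries c F) (hc : 0 < c) (hθ : 0 ≤ θ) :
    truncNorm p (θ / c) (gaussianSeries (secondMoment F)) ≤ exp (θ ^ 2 / 2) := by
  refine (_root_.truncNorm_gaussianSeries_le p _ (by positivity)).trans (exp_le_exp.2 ?_)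
  calc |secondMoment F| * (θ / c) ^ 2 / 2
    _ ≤ c ^ 2 * (θ / c) ^ 2 / 2 := by gcongr; exact hF.abs_secondMoment_le
    _ = θ ^ 2 / 2 := by rw [← mul_pow, mul_div_cancel₀ _ hc.ne']

lemma truncNorm_sub_gaussianSeries_le (hF : IsCentredMomentSeries c F) (hc : 0 < c)
    (hθ : 0 ≤ θ) (hθ' : θ ≤ 1) :
    truncNorm p (θ / c) (F - gaussianSeries (secondMoment F)) ≤ 5 * θ ^ 3 := by
  have hvanish : ∀ m < 3, coeff m (F - gaussianSeries (secondMoment F)) = 0 := fun m hm => by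
    have hcoeff_two : coeff 2 (gaussianSeries (secondMoment F)) = coeff 2 F := by
      simpa [secondMoment] using coeff_two_mul_gaussianSeries (secondMoment F) 1
    interval_cases m
    · simp [hF.constantCoeff_eq_one, constantCoeff_gaussianSeries]
    · rw [map_sub, hF.coeff_one_eq_zero, coeff_gaussianSeries_of_odd _ odd_one, sub_zero]
    · rw [map_sub, hcoeff_two, sub_self]
  rw [← mul_one_div]
  calc truncNorm p (θ * (1 / c)) (F - gaussianSeries (secondMoment F))
    _ ≤ θ ^ 3 * truncNorm p (1 / c) (F - gaussianSeries (secondMoment F)) :=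
      truncNorm_smul_radius_le (by positivity) hθ hθ' hvanish
    _ ≤ θ ^ 3 * (3 + 2) := by
      gcongr
      exact (truncNorm_sub_le (by positivity)).trans (add_le_add
        ((hF.truncNorm_le_exp_one hc).trans exp_one_lt_three.le)
        ((hF.truncNorm_gaussianSeries_le hc zero_le_one).trans (by simpa using exp_half_le_two)))
    _ = 5 * θ ^ 3 := by ring

lemma truncNorm_pow_sub_gaussianSeries_pow_le (hF : IsCentredMomentSeries c F) (hc : 0 < c)
    (hθ : 0 ≤ θ) (hθ' : θ ≤ 1) {j : ℕ} (hj : j * θ ^ 2 ≤ 1) :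
    truncNorm p (θ / c) (F ^ j - gaussianSeries (secondMoment F) ^ j) ≤ 45 * θ := by
  have hG : truncNorm p (θ / c) (gaussianSeries (secondMoment F)) ≤ exp (2 * θ ^ 2) :=
    (hF.truncNorm_gaussianSeries_le hc hθ).trans (exp_le_exp.2 (by nlinarith [sq_nonneg θ]))
  calc truncNorm p (θ / c) (F ^ j - gaussianSeries (secondMoment F) ^ j)
    _ ≤ j * exp (2 * θ ^ 2) ^ j * truncNorm p (θ / c) (F - gaussianSeries (secondMoment F)) :=
      truncNorm_pow_sub_pow_le (by positivity) (one_le_exp (by positivity))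
        (hF.truncNorm_le hc hθ hθ') hG j
    _ ≤ j * 9 * (5 * θ ^ 3) := by
      gcongr
      · exact truncNorm_nonneg (by positivity)
      · exact exp_two_mul_sq_pow_le hj
      · exact hF.truncNorm_sub_gaussianSeries_le hc hθ hθ'
    _ = 45 * (j * θ ^ 2) * θ := by ring
    _ ≤ 45 * θ := by gcongr; linarith

/-- Telescoping replaces the factors of `A * F ^ j` one at a time by Gaussian series. -/
theorem truncNorm_mul_pow_sub_gaussianSeries_le (hA : IsCentredMomentSeries (a * c) A)
    (hF : IsCentredMomentSeries c F) (ha : 1 ≤ a) (hc : 0 < c) (hθ : 0 ≤ θ)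
    (haθ : a ^ 3 * θ ^ 2 ≤ 1) {j : ℕ} (hj : j * θ ^ 2 ≤ 1) :
    truncNorm p (θ / c) (A * F ^ j - gaussianSeries (secondMoment (A * F ^ j))) ≤ 135 * θ := by
  set GA := gaussianSeries (secondMoment A)
  set GF := gaussianSeries (secondMoment F)
  have hr : 0 ≤ θ / c := by positivity
  have hac : 0 < a * c := by positivity
  have hθ' : θ ≤ 1 := by nlinarith [one_le_pow₀ ha (n := 3), sq_nonneg θ]
  have haθ' : a * θ ≤ 1 := by
    have : (a * θ) ^ 2 ≤ a ^ 3 * θ ^ 2 := by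
      rw [mul_pow]; gcongr; norm_num
    nlinarith [mul_nonneg (zero_le_one.trans ha) hθ]
  have hradius : θ / c = a * θ / (a * c) := by field_simp
  have hA_sub : truncNorm p (θ / c) (A - GA) ≤ 5 * θ := by
    rw [hradius]
    refine (hA.truncNorm_sub_gaussianSeries_le hac (by positivity) haθ').trans ?_
    nlinarith [mul_le_mul_of_nonneg_right haθ hθ]
  have hGA : truncNorm p (θ / c) GA ≤ 2 := by
    rw [hradius]
    refine (hA.truncNorm_gaussianSeries_le hac (by positivity)).trans (le_trans ?_ exp_half_le_two)
    gcongr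
    nlinarith [mul_nonneg (zero_le_one.trans ha) hθ]
  have hF_pow : truncNorm p (θ / c) (F ^ j) ≤ 9 :=
    (truncNorm_pow_le hr (hF.truncNorm_le hc hθ hθ') j).trans (exp_two_mul_sq_pow_le hj)
  have hF_pow_sub := hF.truncNorm_pow_sub_gaussianSeries_pow_le (p := p) hc hθ hθ' hj
  have hsplit : A * F ^ j - gaussianSeries (secondMoment (A * F ^ j)) =
      (A - GA) * F ^ j + GA * (F ^ j - GF ^ j) := by
    rw [hA.secondMoment_mul_pow hF, gaussianSeries_add, gaussianSeries_nat_mul]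
    ring
  calc truncNorm p (θ / c) (A * F ^ j - gaussianSeries (secondMoment (A * F ^ j)))
    _ ≤ truncNorm p (θ / c) (A - GA) * truncNorm p (θ / c) (F ^ j) +
          truncNorm p (θ / c) GA * truncNorm p (θ / c) (F ^ j - GF ^ j) := by
      rw [hsplit]
      exact (truncNorm_add_le hr).trans (add_le_add (truncNorm_mul_le hr) (truncNorm_mul_le hr))
    _ ≤ 5 * θ * 9 + 2 * (45 * θ) :=
      add_le_add (mul_le_mul hA_sub hF_pow (truncNorm_nonneg hr) (by positivity))
        (mul_le_mul hGA hF_pow_sub (truncNorm_nonneg hr) zero_le_two)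
    _ = 135 * θ := by ring

end IsCentredMomentSeries

end GaussianSeries

section MomentSeries

variable {Ω : Type*} [MeasurableSpace Ω] {μ : Measure Ω}

/-- The exponential moment generating function of `U`, as a formal power series. -/
def momentSeries (μ : Measure Ω) (U : Ω → ℝ) : ℝ⟦X⟧ :=
  PowerSeries.mk fun m => (∫ x, U x ^ m ∂μ) / m.factorial

lemma coeff_momentSeries (U : Ω → ℝ) (m : ℕ) :
    coeff m (momentSeries μ U) = (∫ x, U x ^ m ∂μ) / m.factorial :=
  PowerSeries.coeff_mk _ _

lemma secondMoment_momentSeries (U : Ω → ℝ) :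
    secondMoment (momentSeries μ U) = ∫ x, U x ^ 2 ∂μ := by
  rw [secondMoment, coeff_momentSeries, Nat.factorial_two, Nat.cast_two,
    mul_div_cancel₀ _ two_ne_zero]

lemma isCentredMomentSeries_momentSeries [IsProbabilityMeasure μ] {U : Ω → ℝ} {c : ℝ}
    (hU : ∀ x, |U x| ≤ c) (hmean : ∫ x, U x ∂μ = 0) :
    IsCentredMomentSeries c (momentSeries μ U) where
  constantCoeff_eq_one := by
    simp [← PowerSeries.coeff_zero_eq_constantCoeff_apply, coeff_momentSeries]
  coeff_one_eq_zero := by simp [coeff_momentSeries, hmean]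
  abs_coeff_le m := by
    rw [coeff_momentSeries, abs_div, Nat.abs_cast]
    gcongr
    have hpow : ∀ x, ‖U x ^ m‖ ≤ c ^ m := fun x => by
      rw [norm_pow]
      exact pow_le_pow_left₀ (abs_nonneg _) (hU x) m
    simpa using norm_integral_le_of_norm_le_const (μ := μ) (ae_of_all μ hpow)

/-- Only mixed moments of total order `m` enter, so uncorrelated powers up to order `m` are as good
as independence. -/
lemma coeff_momentSeries_add {U V : Ω → ℝ} {m : ℕ}
    (hint : ∀ i j, i + j = m → Integrable (fun x => U x ^ i * V x ^ j) μ)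
    (huncor : ∀ i j, i + j = m →
      ∫ x, U x ^ i * V x ^ j ∂μ = (∫ x, U x ^ i ∂μ) * ∫ x, V x ^ j ∂μ) :
    coeff m (momentSeries μ (U + V)) = coeff m (momentSeries μ U * momentSeries μ V) := by
  rw [PowerSeries.coeff_mul, coeff_momentSeries, div_eq_iff (by positivity), Finset.sum_mul]
  simp only [Pi.add_apply, fun x => (Commute.all (U x) (V x)).add_pow' m, nsmul_eq_mul]
  rw [integral_finsetSum _ fun ij hij =>
    (hint ij.1 ij.2 (Finset.HasAntidiagonal.mem_antidiagonal.1 hij)).const_mul _]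
  refine Finset.sum_congr rfl fun ⟨i, j⟩ hij => ?_
  obtain rfl : i + j = m := Finset.HasAntidiagonal.mem_antidiagonal.1 hij
  rw [integral_const_mul, huncor i j rfl, coeff_momentSeries, coeff_momentSeries]
  have hchoose : ((i + j).choose i : ℝ) = (i + j).factorial / (i.factorial * j.factorial) :=
    Nat.cast_add_choose ℝ
  rw [hchoose]
  ring

lemma abs_integral_pow_sub_integral_pow_le [IsFiniteMeasure μ] {U V : Ω → ℝ} {B : ℝ}
    (hU : AEStronglyMeasurable U μ) (hV : AEStronglyMeasurable V μ)
    (hUB : ∀ x, |U x| ≤ B) (hVB : ∀ x, |V x| ≤ B) (p : ℕ) :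
    |(∫ x, U x ^ p ∂μ) - ∫ x, V x ^ p ∂μ| ≤ p * B ^ (p - 1) * ∫ x, |U x - V x| ∂μ := by
  have hpow : ∀ {W : Ω → ℝ}, AEStronglyMeasurable W μ → (∀ x, |W x| ≤ B) →
      Integrable (fun x => W x ^ p) μ := fun hW hWB =>
    .of_bound (hW.pow p) (B ^ p) (ae_of_all _ fun x => by
      rw [norm_pow]
      exact pow_le_pow_left₀ (abs_nonneg _) (hWB x) p)
  have hsub : Integrable (fun x => |U x - V x|) μ :=
    ((Integrable.of_bound hU B (ae_of_all _ hUB)).sub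
      (Integrable.of_bound hV B (ae_of_all _ hVB))).abs
  rw [← integral_sub (hpow hU hUB) (hpow hV hVB), ← integral_const_mul]
  refine norm_integral_le_of_norm_le (f := fun x => U x ^ p - V x ^ p) (hsub.const_mul _)
    (ae_of_all _ fun x => ?_)
  rw [Real.norm_eq_abs]
  have hmax : max |U x| |V x| ≤ B := max_le (hUB x) (hVB x)
  calc |U x ^ p - V x ^ p|
    _ ≤ |U x - V x| * p * max |U x| |V x| ^ (p - 1) := abs_pow_sub_pow_le _ _ p
    _ ≤ |U x - V x| * p * B ^ (p - 1) := by gcongr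
    _ = p * B ^ (p - 1) * |U x - V x| := by ring

end MomentSeries

section TrigPoly

/-- The character `x ↦ exp (2πibx)` of frequency `b` on the circle `ℝ / ℤ`. -/
def trigExp (b : ℤ) (x : ℝ) : ℂ := Complex.exp (2 * π * Complex.I * b * x)

lemma trigExp_zero : trigExp 0 = 1 := by
  funext x
  simp [trigExp]

lemma trigExp_add (a b : ℤ) : trigExp (a + b) = trigExp a * trigExp b := by
  funext x
  simp only [trigExp, Pi.mul_apply, ← Complex.exp_add]
  congr 1
  push_cast
  ring

lemma trigExp_natCast_mul (b : ℤ) (m : ℕ) (x : ℝ) : trigExp b (m * x) = trigExp (b * m) x := by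
  simp only [trigExp]
  congr 1
  push_cast
  ring

lemma continuous_trigExp (b : ℤ) : Continuous (trigExp b) := by
  unfold trigExp
  fun_prop

lemma integral_trigExp_of_ne_zero {b : ℤ} (hb : b ≠ 0) : ∫ x in (0 : ℝ)..1, trigExp b x = 0 := by
  have hc : (2 * π * Complex.I * b : ℂ) ≠ 0 := by simp [Real.pi_ne_zero, hb]
  have hperiod : Complex.exp (2 * π * Complex.I * b * (1 : ℝ)) = 1 :=
    Complex.exp_eq_one_iff.2 ⟨b, by push_cast; ring⟩
  simp only [trigExp]
  rw [integral_exp_mul_complex hc, hperiod]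
  simp

/-- The trigonometric polynomials with frequencies in `Φ`. -/
def TrigPoly (Φ : Set ℤ) : Submodule ℂ (ℝ → ℂ) := Submodule.span ℂ (trigExp '' Φ)

namespace TrigPoly

variable {Φ Ψ Θ : Set ℤ} {u w : ℝ → ℂ}

lemma trigExp_mem {b : ℤ} (hb : b ∈ Φ) : trigExp b ∈ TrigPoly Φ :=
  Submodule.subset_span ⟨b, hb, rfl⟩

lemma one_mem (h : 0 ∈ Φ) : 1 ∈ TrigPoly Φ :=
  trigExp_zero ▸ trigExp_mem h

lemma mul_mem (h : ∀ a ∈ Φ, ∀ b ∈ Ψ, a + b ∈ Θ) (hu : u ∈ TrigPoly Φ) (hw : w ∈ TrigPoly Ψ) :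
    u * w ∈ TrigPoly Θ := by
  have := Submodule.mul_mem_mul hu hw
  rw [TrigPoly, TrigPoly, Submodule.span_mul_span] at this
  refine Submodule.span_mono ?_ this
  rintro _ ⟨_, ⟨a, ha, rfl⟩, _, ⟨b, hb, rfl⟩, rfl⟩
  exact ⟨a + b, h a ha b hb, trigExp_add a b⟩

lemma pow_mem {F : ℕ → Set ℤ} (hzero : 0 ∈ F 0)
    (hadd : ∀ i, ∀ a ∈ F i, ∀ b ∈ F 1, a + b ∈ F (i + 1)) (hu : u ∈ TrigPoly (F 1)) (i : ℕ) :
    u ^ i ∈ TrigPoly (F i) := by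
  induction i with
  | zero => simpa using one_mem hzero
  | succ i ih => simpa only [pow_succ] using mul_mem (hadd i) ih hu

lemma continuous (hu : u ∈ TrigPoly Φ) : Continuous u := by
  induction hu using Submodule.span_induction with
  | mem x h => obtain ⟨b, -, rfl⟩ := h; exact continuous_trigExp b
  | zero => exact continuous_zero
  | add x y _ _ hx hy => exact hx.add hy
  | smul a x _ hx => exact hx.const_smul a

lemma continuous_of_ofReal {g : ℝ → ℝ} (hg : (fun x => (g x : ℂ)) ∈ TrigPoly Φ) : Continuous g :=
  Complex.continuous_re.comp (continuous hg)

lemma dilate_mem {m : ℕ} (h : ∀ a ∈ Φ, a * m ∈ Ψ) (hu : u ∈ TrigPoly Φ) :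
    (fun x => u (m * x)) ∈ TrigPoly Ψ := by
  induction hu using Submodule.span_induction with
  | mem x hx =>
    obtain ⟨b, hb, rfl⟩ := hx
    simp only [trigExp_natCast_mul]
    exact trigExp_mem (h b hb)
  | zero => exact Submodule.zero_mem _
  | add x y _ _ hx hy => exact Submodule.add_mem _ hx hy
  | smul a x _ hx => exact Submodule.smul_mem _ a hx

lemma integral_mul (hΦΨ : ∀ a ∈ Φ, ∀ b ∈ Ψ, a + b = 0 → b = 0) (hu : u ∈ TrigPoly Φ)
    (hw : w ∈ TrigPoly Ψ) :
    ∫ x in (0 : ℝ)..1, u x * w x = (∫ x in (0 : ℝ)..1, u x) * ∫ x in (0 : ℝ)..1, w x := by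
  have hi : ∀ {v : ℝ → ℂ}, Continuous v → IntervalIntegrable v volume 0 1 :=
    fun hv => hv.intervalIntegrable _ _
  refine Submodule.span_induction₂ (p := fun u w _ _ => ∫ x in (0 : ℝ)..1, u x * w x =
    (∫ x in (0 : ℝ)..1, u x) * ∫ x in (0 : ℝ)..1, w x) ?_ ?_ ?_ ?_ ?_ ?_ ?_ hu hw
  · rintro _ _ ⟨a, ha, rfl⟩ ⟨b, hb, rfl⟩
    by_cases hb0 : b = 0
    · simp [hb0, trigExp_zero]
    · have hmul : ∀ x, trigExp a x * trigExp b x = trigExp (a + b) x := fun x => by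
        rw [trigExp_add, Pi.mul_apply]
      simp only [hmul]
      rw [integral_trigExp_of_ne_zero hb0,
        integral_trigExp_of_ne_zero fun h => hb0 (hΦΨ a ha b hb h), mul_zero]
  · intros; simp
  · intros; simp
  · intro u₁ u₂ w hu₁ hu₂ hw h₁ h₂
    have := continuous hu₁; have := continuous hu₂; have := continuous hw
    simp only [Pi.add_apply, add_mul]
    rw [intervalIntegral.integral_add (hi (by fun_prop)) (hi (by fun_prop)), h₁, h₂,
      intervalIntegral.integral_add (hi (by fun_prop)) (hi (by fun_prop)), add_mul]
  · intro u w₁ w₂ hu hw₁ hw₂ h₁ h₂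
    have := continuous hu; have := continuous hw₁; have := continuous hw₂
    simp only [Pi.add_apply, mul_add]
    rw [intervalIntegral.integral_add (hi (by fun_prop)) (hi (by fun_prop)), h₁, h₂,
      intervalIntegral.integral_add (hi (by fun_prop)) (hi (by fun_prop)), mul_add]
  · intro r u w _ _ h
    simp only [Pi.smul_apply, smul_eq_mul, mul_assoc, intervalIntegral.integral_const_mul, h]
  · intro r u w _ _ h
    simp only [Pi.smul_apply, smul_eq_mul, mul_left_comm _ r,
      intervalIntegral.integral_const_mul, h]

end TrigPoly

end TrigPoly

section Resonance

lemma AmongSmallest.card_le {n : ℕ → ℕ} (hn : Function.Injective n) {M : ℕ} {B : Finset ℕ}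
    (hB : ∀ k ∈ B, AmongSmallest n M k) : B.card ≤ M := by
  obtain rfl | hne := B.eq_empty_or_nonempty
  · simp
  obtain ⟨k, hk, hmax⟩ := B.exists_max_image n hne
  have hfin : {j : ℕ | n j ≤ n k}.Finite := (Set.finite_Iic (n k)).preimage hn.injOn
  calc B.card = (B : Set ℕ).ncard := (Set.ncard_coe_finset B).symm
    _ ≤ {j : ℕ | n j ≤ n k}.ncard := Set.ncard_le_ncard (fun j hj => hmax j hj) hfin
    _ ≤ M := hB k hk

/-- No linear relation of length at most `p` with coefficients at most `p d` involves a term of `n`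
beyond the `M` smallest ones. This is what Condition `A_ω` says about products of at most `p`
dilates of a trigonometric polynomial of degree `d`. -/
def NonresonantBeyond (n : ℕ → ℕ) (M p d : ℕ) : Prop :=
  ∀ c : ℕ →₀ ℤ, c.support.card ≤ p → (∀ i, |c i| ≤ (p * d : ℕ)) →
    (c.sum fun i z => z * (n i : ℤ)) = 0 → ∀ k ∈ c.support, AmongSmallest n M k

variable {n : ℕ → ℕ} {M p d : ℕ}

lemma CondAWith.nonresonantBeyond {ω : ℕ → ℝ} {N₀ : ℕ} (hA : CondAWith ω n N₀) (hM : N₀ ≤ M)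
    (hn : ∀ k, 0 < n k) (hp : (p : ℝ) ≤ ω M) (hd : ((p * d : ℕ) : ℝ) ≤ (M : ℝ) ^ ω M) :
    NonresonantBeyond n M p d := by
  intro c hcard hcoeff hsum k hk
  have hcard_two : 2 ≤ c.support.card := by
    by_contra h
    have hsupp : c.support = {k} := Finset.eq_singleton_iff_unique_mem.2
      ⟨hk, fun i hi => Finset.card_le_one.1 (by omega) i hi k hk⟩
    rw [Finsupp.sum, hsupp, Finset.sum_singleton] at hsum
    exact mul_ne_zero (Finsupp.mem_support_iff.1 hk) (by exact_mod_cast (hn k).ne') hsum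
  let e := c.support.equivFin
  have := hA M hM c.support.card (fun i => e.symm i) (fun i => c (e.symm i)) hcard_two
    (le_trans (by exact_mod_cast hcard) hp)
    (Subtype.val_injective.comp e.symm.injective)
    (fun i => Finsupp.mem_support_iff.1 (e.symm i).2)
    (fun i => le_trans (by exact_mod_cast hcoeff _) hd)
    (by
      rw [Equiv.sum_comp e.symm fun i : c.support => c i * (n i : ℤ),
        Finset.sum_coe_sort c.support fun i => c i * (n i : ℤ)]
      exact hsum)
    (e ⟨k, hk⟩)
  simpa using this

/-- The integers `∑ cᵢ nᵢ` with `c` supported on at most `m` elements of `s` and `|cᵢ| ≤ m d`. These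
are the frequencies of products of `m` dilates `g (nᵢ ·)`, `i ∈ s`, of a trigonometric polynomial
`g` of degree `d`. -/
def dilateFreq (n : ℕ → ℕ) (d : ℕ) (s : Finset ℕ) (m : ℕ) : Set ℤ :=
  {b | ∃ c : ℕ →₀ ℤ, c.support ⊆ s ∧ c.support.card ≤ m ∧ (∀ i, |c i| ≤ m * d) ∧
    b = c.sum fun i z => z * n i}

namespace dilateFreq

variable {s t : Finset ℕ} {i j : ℕ} {a b : ℤ}

lemma zero_mem : 0 ∈ dilateFreq n d s 0 := ⟨0, by simp, by simp, by simp, by simp⟩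

lemma mul_mem (hj : j ∈ s) (ha : a ∈ Set.Icc (-d : ℤ) d) : a * n j ∈ dilateFreq n d s 1 := by
  refine ⟨.single j a, ?_, ?_, fun l => ?_, by simp⟩
  · exact Finsupp.support_single_subset.trans (by simpa using hj)
  · exact (Finset.card_le_card Finsupp.support_single_subset).trans (by simp)
  · rw [Finsupp.single_apply]
    split_ifs
    · simpa [abs_le] using ha
    · simp

lemma abs_add_apply_le {c c' : ℕ →₀ ℤ} (hc : ∀ l, |c l| ≤ i * d) (hc' : ∀ l, |c' l| ≤ j * d)
    (l : ℕ) : |(c + c') l| ≤ (i + j : ℕ) * d := by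
  rw [Nat.cast_add, add_mul]
  exact (abs_add_le _ _).trans (add_le_add (hc l) (hc' l))

lemma card_support_add_le {c c' : ℕ →₀ ℤ} (hc : c.support.card ≤ i) (hc' : c'.support.card ≤ j) :
    (c + c').support.card ≤ i + j :=
  (Finset.card_le_card Finsupp.support_add).trans
    ((Finset.card_union_le _ _).trans (add_le_add hc hc'))

lemma sum_add (c c' : ℕ →₀ ℤ) : ((c + c').sum fun i z => z * (n i : ℤ)) =
    (c.sum fun i z => z * (n i : ℤ)) + c'.sum fun i z => z * (n i : ℤ) :=
  Finsupp.sum_add_index' (by simp) (by simp [add_mul])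

lemma add_mem (ha : a ∈ dilateFreq n d s i) (hb : b ∈ dilateFreq n d s j) :
    a + b ∈ dilateFreq n d s (i + j) := by
  obtain ⟨c, hs, hcard, hc, rfl⟩ := ha
  obtain ⟨c', hs', hcard', hc', rfl⟩ := hb
  exact ⟨c + c', Finsupp.support_add.trans (Finset.union_subset hs hs'),
    card_support_add_le hcard hcard', abs_add_apply_le hc hc', (sum_add c c').symm⟩

lemma eq_zero_of_add_eq_zero (hres : NonresonantBeyond n M p d) (hst : Disjoint s t)
    (ht : ∀ k ∈ t, ¬ AmongSmallest n M k) (hij : i + j ≤ p) (ha : a ∈ dilateFreq n d s i)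
    (hb : b ∈ dilateFreq n d t j) (hab : a + b = 0) : b = 0 := by
  obtain ⟨c, hs, hcard, hc, rfl⟩ := ha
  obtain ⟨c', hs', hcard', hc', rfl⟩ := hb
  suffices c' = 0 by simp [this]
  by_contra hne
  obtain ⟨k, hk⟩ := Finsupp.support_nonempty_iff.2 hne
  have hck : c k = 0 :=
    Finsupp.notMem_support_iff.1 fun h => Finset.disjoint_left.1 hst (hs h) (hs' hk)
  have hcoeff : ∀ l, |(c + c') l| ≤ (p * d : ℕ) := fun l =>
    (abs_add_apply_le hc hc' l).trans (by exact_mod_cast Nat.mul_le_mul_right d hij)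
  exact ht k (hs' hk) (hres (c + c') ((card_support_add_le hcard hcard').trans hij) hcoeff
    ((sum_add c c').trans hab) k (by simpa [hck] using hk))

end dilateFreq

/-- The sum `∑_{i ∈ s} g (nᵢ x)` of dilates of `g`. -/
def dilateSum {R : Type*} [AddCommMonoid R] (g : ℝ → R) (n : ℕ → ℕ) (s : Finset ℕ) (x : ℝ) : R :=
  ∑ i ∈ s, g (n i * x)

lemma dilateSum_pow_mem {g : ℝ → ℂ} (hg : g ∈ TrigPoly (Set.Icc (-d) d)) (s : Finset ℕ) (i : ℕ) :
    dilateSum g n s ^ i ∈ TrigPoly (dilateFreq n d s i) := by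
  refine TrigPoly.pow_mem dilateFreq.zero_mem (fun _ _ ha _ hb => dilateFreq.add_mem ha hb) ?_ i
  have hsum : dilateSum g n s = ∑ j ∈ s, fun x => g (n j * x) := by
    funext x
    simp [dilateSum]
  rw [hsum]
  exact Submodule.sum_mem _ fun j hj =>
    TrigPoly.dilate_mem (fun a ha => dilateFreq.mul_mem hj ha) hg

lemma integral_dilateSum_pow_mul (hres : NonresonantBeyond n M p d) {g : ℝ → ℝ}
    (hg : (fun x => (g x : ℂ)) ∈ TrigPoly (Set.Icc (-d) d)) {s t : Finset ℕ} (hst : Disjoint s t)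
    (ht : ∀ k ∈ t, ¬ AmongSmallest n M k) {i j : ℕ} (hij : i + j ≤ p) :
    ∫ x in (0 : ℝ)..1, dilateSum g n s x ^ i * dilateSum g n t x ^ j =
      (∫ x in (0 : ℝ)..1, dilateSum g n s x ^ i) * ∫ x in (0 : ℝ)..1, dilateSum g n t x ^ j := by
  have hmul := TrigPoly.integral_mul
    (fun _ ha _ hb => dilateFreq.eq_zero_of_add_eq_zero hres hst ht hij ha hb)
    (dilateSum_pow_mem (n := n) hg s i) (dilateSum_pow_mem (n := n) hg t j)
  simp only [Pi.pow_apply, dilateSum, ← Complex.ofReal_sum, ← Complex.ofReal_pow,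
    ← Complex.ofReal_mul, intervalIntegral.integral_ofReal] at hmul
  exact_mod_cast hmul

/-- The uniform probability measure on the period `(0, 1]`. -/
abbrev periodMeasure : Measure ℝ := volume.restrict (Set.Ioc 0 1)

instance : IsProbabilityMeasure periodMeasure := ⟨by simp⟩

lemma integral_periodMeasure {E : Type*} [NormedAddCommGroup E] [NormedSpace ℝ E] (φ : ℝ → E) :
    ∫ x, φ x ∂periodMeasure = ∫ x in (0 : ℝ)..1, φ x :=
  (intervalIntegral.integral_of_le zero_le_one).symm

lemma integrable_periodMeasure_of_continuous {φ : ℝ → ℝ} (hφ : Continuous φ) :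
    Integrable φ periodMeasure :=
  (hφ.integrableOn_Icc (a := 0) (b := 1)).mono_set Set.Ioc_subset_Icc_self

lemma integral_natCast_mul_of_periodic {φ : ℝ → ℝ} (hφ : Function.Periodic φ 1)
    (hint : ∀ a b, IntervalIntegrable φ volume a b) {m : ℕ} (hm : 0 < m) :
    ∫ x in (0 : ℝ)..1, φ (m * x) = ∫ x in (0 : ℝ)..1, φ x := by
  have h := hφ.intervalIntegral_add_zsmul_eq m 0 hint
  simp only [zero_add, zsmul_eq_mul, Int.cast_natCast, mul_one] at h
  rw [intervalIntegral.integral_comp_mul_left _ (by positivity), mul_zero, mul_one, h, smul_eq_mul,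
    inv_mul_cancel_left₀ (by positivity)]

section DilateSum

variable {g : ℝ → ℝ} {n : ℕ → ℕ} {M p d : ℕ}

lemma abs_dilateSum_le {K : ℝ} (hK : ∀ x, |g x| ≤ K) (n : ℕ → ℕ) (s : Finset ℕ) (x : ℝ) :
    |dilateSum g n s x| ≤ s.card * K :=
  (Finset.abs_sum_le_sum_abs _ _).trans
    ((Finset.sum_le_card_nsmul _ _ K fun _ _ => hK _).trans_eq (nsmul_eq_mul _ _))

lemma continuous_dilateSum (hg : Continuous g) (n : ℕ → ℕ) (s : Finset ℕ) :
    Continuous (dilateSum g n s) := by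
  unfold dilateSum
  fun_prop

lemma integral_dilateSum_eq_zero (hg : Continuous g) (hper : Function.Periodic g 1)
    (hmean : ∫ x in (0 : ℝ)..1, g x = 0) (hn : ∀ k, 0 < n k) (s : Finset ℕ) :
    ∫ x in (0 : ℝ)..1, dilateSum g n s x = 0 := by
  simp only [dilateSum]
  rw [intervalIntegral.integral_finsetSum fun i _ =>
    Continuous.intervalIntegrable (by fun_prop) _ _]
  exact Finset.sum_eq_zero fun i _ =>
    (integral_natCast_mul_of_periodic hper hg.intervalIntegrable (hn i)).trans hmean

lemma momentSeries_dilateSum_singleton (hg : Continuous g) (hper : Function.Periodic g 1)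
    (hn : ∀ k, 0 < n k) (k : ℕ) :
    momentSeries periodMeasure (dilateSum g n {k}) = momentSeries periodMeasure g := by
  ext m
  have hperm : Function.Periodic (fun x => g x ^ m) 1 := fun x => by simp only [hper x]
  have := integral_natCast_mul_of_periodic hperm (hg.pow m).intervalIntegrable (hn k)
  simp only [coeff_momentSeries, dilateSum, Finset.sum_singleton, integral_periodMeasure, this]

lemma coeff_momentSeries_dilateSum_union (hn : ∀ k, 0 < n k) (hres : NonresonantBeyond n M p d)
    (hg : (fun x => (g x : ℂ)) ∈ TrigPoly (Set.Icc (-d) d)) (hper : Function.Periodic g 1)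
    {B G : Finset ℕ} (hBG : Disjoint B G) (hG : ∀ k ∈ G, ¬ AmongSmallest n M k) :
    ∀ m ≤ p, coeff m (momentSeries periodMeasure (dilateSum g n (B ∪ G))) =
      coeff m (momentSeries periodMeasure (dilateSum g n B) *
        momentSeries periodMeasure g ^ G.card) := by
  have hgc : Continuous g := TrigPoly.continuous_of_ofReal hg
  induction G using Finset.induction_on with
  | empty => simp
  | insert k G hk ih =>
    rw [Finset.disjoint_insert_right] at hBG
    have hkBG : Disjoint (B ∪ G) {k} := by simpa using ⟨hBG.1, hk⟩
    have hsplit : dilateSum g n (B ∪ insert k G) = dilateSum g n (B ∪ G) + dilateSum g n {k} := by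
      funext x
      rw [Finset.union_insert, ← Finset.union_singleton]
      exact Finset.sum_union hkBG
    intro m hm
    have hadd := coeff_momentSeries_add (μ := periodMeasure) (m := m)
      (U := dilateSum g n (B ∪ G)) (V := dilateSum g n {k})
      (fun i j _ => integrable_periodMeasure_of_continuous
        (((continuous_dilateSum hgc n _).pow i).mul ((continuous_dilateSum hgc n _).pow j)))
      (fun i j hij => by
        simpa only [integral_periodMeasure] using integral_dilateSum_pow_mul hres hg hkBG
          (by simpa using hG k (Finset.mem_insert_self k G)) (hij.trans_le hm))
    rw [hsplit, hadd, momentSeries_dilateSum_singleton hgc hper hn, Finset.card_insert_of_notMem hk,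
      pow_succ, ← mul_assoc, PowerSeries.coeff_mul, PowerSeries.coeff_mul]
    refine Finset.sum_congr rfl fun ij hij => ?_
    rw [ih hBG.2 (fun l hl => hG l (Finset.mem_insert_of_mem hl)) ij.1
      ((Finset.HasAntidiagonal.antidiagonal.fst_le hij).trans hm)]

variable {K : ℝ} {N : ℕ}

/-- The dilates resonating with others, at most `M` in number, form the starting variable; each of
the remaining dilates acts up to order `p` like an independent variable. -/
lemma exists_coeff_momentSeries_dilateSum_eq (hn : ∀ k, 0 < n k) (hinj : Function.Injective n)
    (hres : NonresonantBeyond n M p d) (hg : (fun x => (g x : ℂ)) ∈ TrigPoly (Set.Icc (-d) d))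
    (hper : Function.Periodic g 1) (hmean : ∫ x in (0 : ℝ)..1, g x = 0) (hK : ∀ x, |g x| ≤ K)
    (N : ℕ) :
    ∃ A j, IsCentredMomentSeries (M * K) A ∧ j ≤ N ∧
      ∀ m ≤ p, coeff m (momentSeries periodMeasure (dilateSum g n (Finset.range N))) =
        coeff m (A * momentSeries periodMeasure g ^ j) := by
  classical
  have hgc : Continuous g := TrigPoly.continuous_of_ofReal hg
  set B := (Finset.range N).filter fun k => AmongSmallest n M k
  set G := (Finset.range N).filter fun k => ¬ AmongSmallest n M k
  have hBM : B.card ≤ M := AmongSmallest.card_le hinj fun k hk => (Finset.mem_filter.1 hk).2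
  have hGN : G.card ≤ N := (Finset.card_filter_le _ _).trans_eq (Finset.card_range N)
  have hKnonneg : 0 ≤ K := (abs_nonneg _).trans (hK 0)
  refine ⟨momentSeries periodMeasure (dilateSum g n B), G.card,
    isCentredMomentSeries_momentSeries (fun x => (abs_dilateSum_le hK n B x).trans (by gcongr)) ?_,
    hGN, ?_⟩
  · rw [integral_periodMeasure, integral_dilateSum_eq_zero hgc hper hmean hn]
  · rw [← Finset.filter_union_filter_not_eq (fun k => AmongSmallest n M k) (Finset.range N)]
    exact coeff_momentSeries_dilateSum_union hn hres hg hper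
      (Finset.disjoint_filter_filter_not _ _ _) fun k hk => (Finset.mem_filter.1 hk).2

theorem integral_dilateSum_sq_le (hn : ∀ k, 0 < n k) (hinj : Function.Injective n)
    (hres : NonresonantBeyond n M p d) (hg : (fun x => (g x : ℂ)) ∈ TrigPoly (Set.Icc (-d) d))
    (hper : Function.Periodic g 1) (hmean : ∫ x in (0 : ℝ)..1, g x = 0) (hK : ∀ x, |g x| ≤ K)
    (hp : 2 ≤ p) (hMN : M ^ 2 ≤ N) :
    ∫ x in (0 : ℝ)..1, dilateSum g n (Finset.range N) x ^ 2 ≤ 2 * K ^ 2 * N := by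
  obtain ⟨A, j, hA, hj, hcoeff⟩ :=
    exists_coeff_momentSeries_dilateSum_eq hn hinj hres hg hper hmean hK N
  have hF := isCentredMomentSeries_momentSeries (μ := periodMeasure) hK
    (by rwa [integral_periodMeasure])
  rw [← integral_periodMeasure, ← secondMoment_momentSeries, secondMoment, hcoeff 2 hp,
    ← secondMoment, hA.secondMoment_mul_pow hF]
  have hA_le := (le_abs_self _).trans hA.abs_secondMoment_le
  have hF_le := (le_abs_self _).trans hF.abs_secondMoment_le
  calc secondMoment A + j * secondMoment (momentSeries periodMeasure g)
    _ ≤ (M * K) ^ 2 + j * K ^ 2 := by gcongr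
    _ ≤ (M * K) ^ 2 + N * K ^ 2 := by gcongr
    _ = ((M ^ 2 : ℕ) + N) * K ^ 2 := by push_cast; ring
    _ ≤ (N + N) * K ^ 2 := by gcongr
    _ = 2 * K ^ 2 * N := by ring

theorem abs_integral_dilateSum_pow_sub_gaussianMoment_le (hn : ∀ k, 0 < n k)
    (hinj : Function.Injective n) (hres : NonresonantBeyond n M p d)
    (hg : (fun x => (g x : ℂ)) ∈ TrigPoly (Set.Icc (-d) d)) (hper : Function.Periodic g 1)
    (hmean : ∫ x in (0 : ℝ)..1, g x = 0) (hK : ∀ x, |g x| ≤ K) (hKpos : 0 < K) (hp : 2 ≤ p)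
    (hM : 1 ≤ M) (hMN : M ^ 3 ≤ N) :
    |(∫ x in (0 : ℝ)..1, dilateSum g n (Finset.range N) x ^ p) -
        gaussianMoment p (∫ x in (0 : ℝ)..1, dilateSum g n (Finset.range N) x ^ 2)| ≤
      135 * p.factorial * (K * √N) ^ p / √N := by
  obtain ⟨A, j, hA, hj, hcoeff⟩ :=
    exists_coeff_momentSeries_dilateSum_eq hn hinj hres hg hper hmean hK N
  have hF := isCentredMomentSeries_momentSeries (μ := periodMeasure) hK
    (by rwa [integral_periodMeasure])
  set T := dilateSum g n (Finset.range N)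
  have hNpos : 0 < (N : ℝ) := by exact_mod_cast (Nat.one_le_pow 3 M hM).trans hMN
  have hsq : (√N)⁻¹ ^ 2 = (N : ℝ)⁻¹ := by rw [inv_pow, Real.sq_sqrt hNpos.le]
  have hcompare := hA.truncNorm_mul_pow_sub_gaussianSeries_le (p := p) hF (θ := (√N)⁻¹)
    (by exact_mod_cast hM) hKpos (by positivity)
    (by rw [hsq, ← div_eq_mul_inv, div_le_one hNpos]; exact_mod_cast hMN) (j := j)
    (by rw [hsq, ← div_eq_mul_inv, div_le_one hNpos]; exact_mod_cast hj)
  have hvariance : secondMoment (A * momentSeries periodMeasure g ^ j) =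
      ∫ x in (0 : ℝ)..1, T x ^ 2 := by
    rw [secondMoment, ← hcoeff 2 hp, ← secondMoment, secondMoment_momentSeries,
      integral_periodMeasure]
  have hmoment : p.factorial * coeff p (A * momentSeries periodMeasure g ^ j) =
      ∫ x in (0 : ℝ)..1, T x ^ p := by
    rw [← hcoeff p le_rfl, coeff_momentSeries, integral_periodMeasure,
      mul_div_cancel₀ _ (by positivity)]
  have hcoeff_le := (norm_coeff_mul_pow_le_truncNorm (by positivity) le_rfl).trans hcompare
  rw [hvariance, map_sub, Real.norm_eq_abs, inv_div_left, inv_pow, ← div_eq_mul_inv,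
    div_le_iff₀ (by positivity)] at hcoeff_le
  rw [← hmoment, gaussianMoment, ← mul_sub, abs_mul, Nat.abs_cast]
  calc _ ≤ p.factorial * (135 * (√N)⁻¹ * (K * √N) ^ p) := by gcongr
    _ = 135 * p.factorial * (K * √N) ^ p / √N := by ring

end DilateSum

end Resonance

section BoundedVariation

variable {f : ℝ → ℝ}

lemma integral_translate_sub_le_of_monotoneOn {v : ℝ → ℝ} {a b t : ℝ} (hab : a ≤ b) (ht : 0 ≤ t)
    (hv : MonotoneOn v (Set.Icc a (b + t))) :
    ∫ x in a..b, (v (x + t) - v x) ≤ t * (v (b + t) - v a) := by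
  have hint : ∀ {c d}, c ∈ Set.Icc a (b + t) → d ∈ Set.Icc a (b + t) →
      IntervalIntegrable v volume c d := fun hc hd =>
    (hv.mono (Set.ordConnected_Icc.uIcc_subset hc hd)).intervalIntegrable
  have ha : a ∈ Set.Icc a (b + t) := ⟨le_rfl, by linarith⟩
  have hb : b ∈ Set.Icc a (b + t) := ⟨hab, by linarith⟩
  have hat : a + t ∈ Set.Icc a (b + t) := ⟨by linarith, by linarith⟩
  have hbt : b + t ∈ Set.Icc a (b + t) := ⟨by linarith, le_rfl⟩
  have hshift : IntervalIntegrable (fun x => v (x + t)) volume a b := by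
    simpa using (hint hat hbt).comp_add_right t
  have hupper : ∫ x in b..b + t, v x ≤ t * v (b + t) := by
    simpa using intervalIntegral.integral_mono_on (le_add_of_nonneg_right ht) (hint hb hbt)
      intervalIntegrable_const fun x hx => hv ⟨hab.trans hx.1, hx.2⟩ hbt hx.2
  have hlower : t * v a ≤ ∫ x in a..a + t, v x := by
    simpa using intervalIntegral.integral_mono_on (le_add_of_nonneg_right ht)
      intervalIntegrable_const (hint ha hat) fun x hx => hv ha ⟨hx.1, by linarith [hx.2]⟩ hx.1
  have hcomm := intervalIntegral.integral_interval_sub_interval_comm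
    (hint hat hbt) (hint ha hb) (hint hat ha)
  rw [intervalIntegral.integral_sub hshift (hint ha hb), intervalIntegral.integral_comp_add_right,
    hcomm, intervalIntegral.integral_symm a (a + t), intervalIntegral.integral_symm b (b + t)]
  linarith

lemma integral_abs_translate_sub_le_of_boundedVariationOn {a b t : ℝ} (hab : a ≤ b) (ht : 0 ≤ t)
    (hf : BoundedVariationOn f (Set.Icc a (b + t))) :
    ∫ x in a..b, |f (x + t) - f x| ≤ t * (eVariationOn f (Set.Icc a (b + t))).toReal := by
  have ha : a ∈ Set.Icc a (b + t) := ⟨le_rfl, by linarith⟩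
  have hloc := hf.locallyBoundedVariationOn
  set v := variationOnFromTo f (Set.Icc a (b + t)) a with hv_def
  have hv : MonotoneOn v (Set.Icc a (b + t)) := variationOnFromTo.monotoneOn hloc ha
  have hle : ∀ x ∈ Set.Icc a b, |f (x + t) - f x| ≤ v (x + t) - v x := fun x hx =>
    variationOnFromTo.abs_sub_le_sub_of_le hloc ha ⟨hx.1, by linarith [hx.2]⟩
      ⟨by linarith [hx.1], by linarith [hx.2]⟩ (le_add_of_nonneg_right ht)
  have hint : IntervalIntegrable (fun x => v (x + t) - v x) volume a b := by
    have hshift : MonotoneOn (fun x => v (x + t)) (Set.uIcc a b) := fun x hx y hy hxy => by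
      rw [Set.uIcc_of_le hab] at hx hy
      exact hv ⟨by linarith [hx.1], by linarith [hx.2]⟩ ⟨by linarith [hy.1], by linarith [hy.2]⟩
        (by linarith)
    refine hshift.intervalIntegrable.sub (hv.mono ?_).intervalIntegrable
    rw [Set.uIcc_of_le hab]
    exact Set.Icc_subset_Icc_right (by linarith)
  calc ∫ x in a..b, |f (x + t) - f x| ≤ ∫ x in a..b, (v (x + t) - v x) := by
        rw [intervalIntegral.integral_of_le hab, intervalIntegral.integral_of_le hab]
        refine integral_mono_of_nonneg (ae_of_all _ fun x => abs_nonneg _) hint.1 ?_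
        filter_upwards [ae_restrict_mem measurableSet_Ioc] with x hx
        exact hle x (Set.Ioc_subset_Icc_self hx)
    _ ≤ t * (v (b + t) - v a) := integral_translate_sub_le_of_monotoneOn hab ht hv
    _ = _ := by
      rw [hv_def, variationOnFromTo.self, sub_zero,
        variationOnFromTo.eq_of_le _ _ (by linarith), Set.inter_self]

lemma eVariationOn_Icc_zero_two_of_periodic (hper : Function.Periodic f 1) :
    eVariationOn f (Set.Icc 0 2) = 2 * eVariationOn f (Set.Icc 0 1) := by
  have hshift : eVariationOn f (Set.Icc 1 2) = eVariationOn f (Set.Icc 0 1) := by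
    have h := eVariationOn.comp_eq_of_monotoneOn f (t := Set.Icc 0 1) (fun x : ℝ => x + 1)
      (fun a _ b _ hab => by simpa using hab)
    rw [Set.image_add_const_Icc, zero_add, one_add_one_eq_two] at h
    rw [← h]
    exact congrArg (eVariationOn · _) (funext hper)
  have hsplit := eVariationOn.Icc_add_Icc f (s := Set.univ) zero_le_one one_le_two
    (Set.mem_univ (1 : ℝ))
  simp only [Set.univ_inter] at hsplit
  rw [← hsplit, hshift, two_mul]

lemma integral_abs_translate_neg_sub_of_periodic (hper : Function.Periodic f 1) (t : ℝ) :
    ∫ x in (0 : ℝ)..1, |f (x + -t) - f x| = ∫ x in (0 : ℝ)..1, |f (x + t) - f x| := by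
  have hφ : Function.Periodic (fun x => |f (x + t) - f x|) 1 := fun x => by
    simp only [add_right_comm x 1 t, hper x, hper (x + t)]
  have h := intervalIntegral.integral_comp_add_right (fun x => |f (x + t) - f x|) (-t)
    (a := 0) (b := 1)
  rw [zero_add, add_comm 1, hφ.intervalIntegral_add_eq (-t) 0, zero_add] at h
  simpa only [neg_add_cancel_right, abs_sub_comm] using h

lemma integral_abs_translate_sub_le_of_periodic (hper : Function.Periodic f 1)
    (hf : BoundedVariationOn f (Set.Icc 0 1)) {t : ℝ} (ht : |t| ≤ 1) :
    ∫ x in (0 : ℝ)..1, |f (x + t) - f x| ≤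
      |t| * (2 * (eVariationOn f (Set.Icc 0 1)).toReal) := by
  wlog ht₀ : 0 ≤ t generalizing t
  · rw [← integral_abs_translate_neg_sub_of_periodic hper, ← abs_neg t]
    exact this (by rwa [abs_neg]) (by linarith)
  rw [abs_of_nonneg ht₀] at ht ⊢
  have hvar := eVariationOn_Icc_zero_two_of_periodic hper
  have htop : eVariationOn f (Set.Icc 0 2) ≠ ⊤ := hvar ▸ ENNReal.mul_ne_top (by simp) hf
  have hmono : eVariationOn f (Set.Icc 0 (1 + t)) ≤ eVariationOn f (Set.Icc 0 2) :=
    eVariationOn.mono f (Set.Icc_subset_Icc_right (by linarith))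
  calc ∫ x in (0 : ℝ)..1, |f (x + t) - f x|
    _ ≤ t * (eVariationOn f (Set.Icc 0 (1 + t))).toReal :=
      integral_abs_translate_sub_le_of_boundedVariationOn zero_le_one ht₀
        (ne_top_of_le_ne_top htop hmono)
    _ ≤ t * (eVariationOn f (Set.Icc 0 2)).toReal := by
      gcongr
    _ = t * (2 * (eVariationOn f (Set.Icc 0 1)).toReal) := by
      rw [hvar, ENNReal.toReal_mul, ENNReal.toReal_ofNat]

lemma exists_abs_le_of_periodic_of_boundedVariationOn (hper : Function.Periodic f 1)
    (hf : BoundedVariationOn f (Set.Icc 0 1)) : ∃ K, ∀ x, |f x| ≤ K := by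
  refine ⟨(eVariationOn f (Set.Icc 0 1)).toReal + |f 0|, fun x => ?_⟩
  obtain ⟨y, hy, hxy⟩ := hper.exists_mem_Ico₀ zero_lt_one x
  have hdist := hf.dist_le (Set.Ico_subset_Icc_self hy) (Set.left_mem_Icc.2 zero_le_one)
  rw [hxy, ← sub_add_cancel (f y) (f 0)]
  exact (abs_add_le _ _).trans (by gcongr; exact hdist)

end BoundedVariation

section TranslationAverage

/-- The average `∫ f (x - t) dν(t)` of the translates of `f`, that is the convolution `f * ν`. -/
def translationAverage (ν : Measure ℝ) (f : ℝ → ℝ) (x : ℝ) : ℝ := ∫ t, f (x - t) ∂ν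

lemma integrable_of_measurable_of_abs_le {α : Type*} [MeasurableSpace α] {μ : Measure α}
    [IsFiniteMeasure μ] {φ : α → ℝ} {K : ℝ} (hφ : Measurable φ) (hK : ∀ x, |φ x| ≤ K) :
    Integrable φ μ :=
  .of_bound hφ.aestronglyMeasurable K (ae_of_all _ hK)

lemma periodic_translationAverage {ν : Measure ℝ} {f : ℝ → ℝ}
    (hper : Function.Periodic f 1) : Function.Periodic (translationAverage ν f) 1 := fun x => by
  simp only [translationAverage, add_sub_right_comm, hper _]

variable {ν : Measure ℝ} [IsProbabilityMeasure ν] {f : ℝ → ℝ} {K : ℝ}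

lemma abs_translationAverage_le (hK : ∀ x, |f x| ≤ K) (x : ℝ) : |translationAverage ν f x| ≤ K := by
  simpa [translationAverage] using norm_integral_le_of_norm_le_const (μ := ν)
    (f := fun t => f (x - t)) (ae_of_all _ fun t => hK (x - t))

lemma integral_translationAverage (hf : Measurable f) (hper : Function.Periodic f 1)
    (hK : ∀ x, |f x| ≤ K) :
    ∫ x in (0 : ℝ)..1, translationAverage ν f x = ∫ x in (0 : ℝ)..1, f x := by
  have hint : Integrable (Function.uncurry fun x t => f (x - t)) (periodMeasure.prod ν) :=
    integrable_of_measurable_of_abs_le (hf.comp (measurable_fst.sub measurable_snd))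
      fun z => hK (z.1 - z.2)
  have htranslate : ∀ t, ∫ x, f (x - t) ∂periodMeasure = ∫ x, f x ∂periodMeasure := fun t => by
    rw [integral_periodMeasure, integral_periodMeasure, intervalIntegral.integral_comp_sub_right,
      zero_sub, sub_eq_neg_add, hper.intervalIntegral_add_eq (-t) 0, zero_add]
  simp only [← integral_periodMeasure, translationAverage]
  rw [integral_integral_swap hint]
  simp only [htranslate, integral_const, probReal_univ, one_smul]

lemma integral_abs_sub_translationAverage_le (hf : Measurable f) (hK : ∀ x, |f x| ≤ K) {W : ℝ}
    (hW : ∀ᵐ t ∂ν, ∫ x in (0 : ℝ)..1, |f (x - t) - f x| ≤ |t| * W)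
    (hν : Integrable (fun t => |t|) ν) :
    ∫ x in (0 : ℝ)..1, |f x - translationAverage ν f x| ≤ (∫ t, |t| ∂ν) * W := by
  have hint : Integrable (Function.uncurry fun x t => |f (x - t) - f x|) (periodMeasure.prod ν) :=
    integrable_of_measurable_of_abs_le (K := K + K)
      (((hf.comp (measurable_fst.sub measurable_snd)).sub (hf.comp measurable_fst)).abs)
      fun z => (abs_abs _).trans_le ((abs_sub _ _).trans (add_le_add (hK _) (hK _)))
  have hpointwise : ∀ x, |f x - translationAverage ν f x| ≤ ∫ t, |f (x - t) - f x| ∂ν := fun x => by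
    have hdiff : translationAverage ν f x - f x = ∫ t, (f (x - t) - f x) ∂ν := by
      have htranslate : Integrable (fun t => f (x - t)) ν :=
        integrable_of_measurable_of_abs_le (by fun_prop) fun t => hK (x - t)
      simp [translationAverage, integral_sub htranslate (integrable_const _)]
    rw [abs_sub_comm, hdiff]
    exact abs_integral_le_integral_abs
  calc ∫ x in (0 : ℝ)..1, |f x - translationAverage ν f x|
    _ ≤ ∫ x, ∫ t, |f (x - t) - f x| ∂ν ∂periodMeasure := by
      rw [← integral_periodMeasure]
      exact integral_mono_of_nonneg (ae_of_all _ fun _ => abs_nonneg _) hint.integral_prod_left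
        (ae_of_all _ hpointwise)
    _ = ∫ t, (∫ x in (0 : ℝ)..1, |f (x - t) - f x|) ∂ν := by
      simp only [integral_integral_swap hint, integral_periodMeasure]
    _ ≤ ∫ t, |t| * W ∂ν :=
      integral_mono_of_nonneg (ae_of_all _ fun t => intervalIntegral.integral_nonneg zero_le_one
        fun _ _ => abs_nonneg _) (hν.mul_const W) hW
    _ = (∫ t, |t| ∂ν) * W := integral_mul_const _ _

end TranslationAverage

section CosineKernel

variable {d : ℕ}

/-- The mass of `cos (πt) ^ (2d)` over a period. -/
def cosPowMass (d : ℕ) : ℝ := ∫ t in -(1 / 2 : ℝ)..1 / 2, cos (π * t) ^ (2 * d)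

/-- The probability density `cos (πt) ^ (2d)`, normalised on a period: a nonnegative trigonometric
polynomial of degree `d`, concentrated near the integers at scale `1 / √d`. -/
def cosKernel (d : ℕ) (t : ℝ) : ℝ := cos (π * t) ^ (2 * d) / cosPowMass d

/-- The probability measure on `(-1/2, 1/2]` with density `cosKernel d`. -/
def cosMeasure (d : ℕ) : Measure ℝ :=
  (volume.restrict (Set.Ioc (-(1 / 2)) (1 / 2))).withDensity fun t => ENNReal.ofReal (cosKernel d t)

lemma cosPowMass_pos (d : ℕ) : 0 < cosPowMass d := by
  refine intervalIntegral.intervalIntegral_pos_of_pos_on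
    (Continuous.intervalIntegrable (by fun_prop) _ _) (fun t ht => ?_) (by norm_num)
  exact pow_pos (cos_pos_of_mem_Ioo ⟨by nlinarith [ht.1, pi_pos], by nlinarith [ht.2, pi_pos]⟩) _

lemma cosPowMass_succ (d : ℕ) : cosPowMass (d + 1) = (2 * d + 1) / (2 * d + 2) * cosPowMass d := by
  have hscale : ∀ j : ℕ, ∫ t in -(1 / 2 : ℝ)..1 / 2, cos (π * t) ^ j =
      π⁻¹ * ∫ t in -(π / 2)..π / 2, cos t ^ j := fun j => by
    rw [intervalIntegral.integral_comp_mul_left (fun t => cos t ^ j) pi_ne_zero, smul_eq_mul]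
    congr 2 <;> ring
  simp only [cosPowMass, hscale]
  rw [mul_add_one, integral_cos_pow, cos_pi_div_two, cos_neg, cos_pi_div_two]
  push_cast
  ring

lemma continuous_cosKernel (d : ℕ) : Continuous (cosKernel d) := by
  unfold cosKernel
  fun_prop

lemma cosKernel_nonneg (d : ℕ) (t : ℝ) : 0 ≤ cosKernel d t :=
  div_nonneg ((even_two_mul d).pow_nonneg _) (cosPowMass_pos d).le

lemma periodic_cosKernel (d : ℕ) : Function.Periodic (cosKernel d) 1 := fun t => by
  rw [cosKernel, mul_add_one, cos_add_pi, (even_two_mul d).neg_pow, cosKernel]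

lemma integral_cosKernel (d : ℕ) : ∫ t in -(1 / 2 : ℝ)..1 / 2, cosKernel d t = 1 := by
  simp only [cosKernel, intervalIntegral.integral_div]
  exact div_self (cosPowMass_pos d).ne'

lemma integral_sin_sq_mul_cosKernel (d : ℕ) :
    ∫ t in -(1 / 2 : ℝ)..1 / 2, sin (π * t) ^ 2 * cosKernel d t = 1 / (2 * d + 2) := by
  have hmass := cosPowMass_pos d
  have hsin : ∀ t, sin (π * t) ^ 2 * cosKernel d t =
      (cos (π * t) ^ (2 * d) - cos (π * t) ^ (2 * (d + 1))) / cosPowMass d := fun t => by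
    rw [sin_sq, cosKernel]
    ring
  simp only [hsin]
  rw [intervalIntegral.integral_div, intervalIntegral.integral_sub
    (Continuous.intervalIntegrable (by fun_prop) _ _)
    (Continuous.intervalIntegrable (by fun_prop) _ _), ← cosPowMass, ← cosPowMass, cosPowMass_succ]
  field_simp
  ring

lemma integral_cosMeasure (d : ℕ) (φ : ℝ → ℝ) :
    ∫ t, φ t ∂cosMeasure d = ∫ t in -(1 / 2 : ℝ)..1 / 2, φ t * cosKernel d t := by
  rw [cosMeasure, integral_withDensity_eq_integral_toReal_smul
    (continuous_cosKernel d).measurable.ennreal_ofReal (ae_of_all _ fun _ => ENNReal.ofReal_lt_top),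
    intervalIntegral.integral_of_le (by norm_num)]
  simp only [ENNReal.toReal_ofReal (cosKernel_nonneg d _), smul_eq_mul, mul_comm]

instance : IsProbabilityMeasure (cosMeasure d) := ⟨by
  rw [cosMeasure, withDensity_apply _ MeasurableSet.univ, Measure.restrict_univ,
    ← ofReal_integral_eq_lintegral_ofReal
      ((continuous_cosKernel d).integrableOn_Icc.mono_set Set.Ioc_subset_Icc_self)
      (ae_of_all _ (cosKernel_nonneg d)),
    ← intervalIntegral.integral_of_le (by norm_num), integral_cosKernel, ENNReal.ofReal_one]⟩

lemma ae_cosMeasure_abs_le (d : ℕ) : ∀ᵐ t ∂cosMeasure d, |t| ≤ 1 / 2 := by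
  refine (withDensity_absolutelyContinuous _ _).ae_le ?_
  filter_upwards [ae_restrict_mem measurableSet_Ioc] with t ht
  exact abs_le.2 ⟨ht.1.le, ht.2⟩

lemma abs_le_add_mul_sin_sq {t r : ℝ} (ht : |t| ≤ 1 / 2) (hr : 0 < r) :
    |t| ≤ (1 / r + r * sin (π * t) ^ 2) / 4 := by
  have hjordan : 2 * |t| ≤ |sin (π * t)| := by
    have h := mul_abs_le_abs_sin (x := π * t) (by
      rw [abs_mul, abs_of_pos pi_pos]
      nlinarith [pi_pos])
    rwa [abs_mul, abs_of_pos pi_pos, ← mul_assoc, div_mul_cancel₀ _ pi_ne_zero] at h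
  have hamgm : 2 * |sin (π * t)| ≤ 1 / r + r * sin (π * t) ^ 2 := by
    have h : 0 ≤ (r * |sin (π * t)| - 1) ^ 2 / r := by positivity
    rw [sub_sq, mul_pow, sq_abs] at h
    field_simp at h ⊢
    linarith
  linarith

lemma integral_abs_cosMeasure_le (d : ℕ) : ∫ t, |t| ∂cosMeasure d ≤ 1 / (2 * √(2 * d + 2)) := by
  have hk := continuous_cosKernel d
  set r := √(2 * d + 2)
  have hr : 0 < r := Real.sqrt_pos.2 (by positivity)
  have hr_sq : (2 * d + 2 : ℝ) = r ^ 2 := (Real.sq_sqrt (by positivity)).symm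
  rw [integral_cosMeasure]
  calc ∫ t in -(1 / 2 : ℝ)..1 / 2, |t| * cosKernel d t
    _ ≤ ∫ t in -(1 / 2 : ℝ)..1 / 2,
          (1 / (4 * r) * cosKernel d t + r / 4 * (sin (π * t) ^ 2 * cosKernel d t)) := by
      refine intervalIntegral.integral_mono_on (by norm_num)
        (Continuous.intervalIntegrable (by fun_prop) _ _)
        (Continuous.intervalIntegrable (by fun_prop) _ _) fun t ht => ?_
      refine (mul_le_mul_of_nonneg_right (abs_le_add_mul_sin_sq (abs_le.2 ht) hr)
        (cosKernel_nonneg d t)).trans_eq ?_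
      field_simp
    _ = 1 / (4 * r) + r / 4 * (1 / (2 * d + 2)) := by
      rw [intervalIntegral.integral_add (Continuous.intervalIntegrable (by fun_prop) _ _)
        (Continuous.intervalIntegrable (by fun_prop) _ _), intervalIntegral.integral_const_mul,
        intervalIntegral.integral_const_mul, integral_cosKernel, integral_sin_sq_mul_cosKernel,
        mul_one]
    _ = 1 / (2 * r) := by
      rw [hr_sq]
      field_simp
      norm_num

/-- As `cos (πt) ^ 2 = (2 + exp (2πit) + exp (-2πit)) / 4`. -/
lemma cosKernel_mem_trigPoly (d : ℕ) :
    (fun t => (cosKernel d t : ℂ)) ∈ TrigPoly (Set.Icc (-d) d) := by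
  have hcos_sq : (fun t : ℝ => (cos (π * t) : ℂ) ^ 2) ∈ TrigPoly (Set.Icc (-(1 : ℕ)) (1 : ℕ)) := by
    have hexpand : (fun t : ℝ => (cos (π * t) : ℂ) ^ 2) =
        (1 / 2 : ℂ) • trigExp 0 + (1 / 4 : ℂ) • (trigExp 1 + trigExp (-1)) := by
      funext t
      simp only [Pi.add_apply, Pi.smul_apply, trigExp, smul_eq_mul]
      push_cast
      rw [Complex.cos_sq, Complex.cos]
      ring_nf
      rw [Complex.exp_zero]
      ring
    rw [hexpand]
    exact add_mem (Submodule.smul_mem _ _ (TrigPoly.trigExp_mem (by simp)))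
      (Submodule.smul_mem _ _ (add_mem (TrigPoly.trigExp_mem (by simp))
        (TrigPoly.trigExp_mem (by simp))))
  have hpow := TrigPoly.pow_mem (F := fun i => Set.Icc (-(i : ℤ)) i) (by simp)
    (fun i a ha b hb => by simp only [Set.mem_Icc] at *; push_cast at *; omega) hcos_sq d
  have hnormalize : (fun t => (cosKernel d t : ℂ)) =
      ((cosPowMass d)⁻¹ : ℂ) • (fun t : ℝ => (cos (π * t) : ℂ) ^ 2) ^ d := by
    funext t
    simp only [cosKernel, Pi.smul_apply, Pi.pow_apply, smul_eq_mul, ← pow_mul]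
    push_cast
    ring
  rw [hnormalize]
  exact Submodule.smul_mem _ _ hpow

end CosineKernel

section Approximation

variable {f : ℝ → ℝ}

lemma TrigPoly.convolution_mem {Φ : Set ℤ} {f k : ℝ → ℂ} (hf : IntervalIntegrable f volume 0 1)
    (hk : k ∈ TrigPoly Φ) : (fun x => ∫ u in (0 : ℝ)..1, f u * k (x - u)) ∈ TrigPoly Φ := by
  have hint : ∀ {w}, w ∈ TrigPoly Φ → ∀ x,
      IntervalIntegrable (fun u => f u * w (x - u)) volume 0 1 := fun hw x =>
    hf.mul_continuousOn ((TrigPoly.continuous hw).comp (continuous_sub_left x)).continuousOn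
  induction hk using Submodule.span_induction with
  | mem k h =>
    obtain ⟨b, hb, rfl⟩ := h
    have hsplit : (fun x => ∫ u in (0 : ℝ)..1, f u * trigExp b (x - u)) =
        (∫ u in (0 : ℝ)..1, f u * trigExp b (-u)) • trigExp b := by
      funext x
      rw [Pi.smul_apply, smul_eq_mul, ← intervalIntegral.integral_mul_const]
      congr 1 with u
      rw [mul_assoc, trigExp, trigExp, trigExp, ← Complex.exp_add]
      push_cast
      ring_nf
    rw [hsplit]
    exact Submodule.smul_mem _ _ (TrigPoly.trigExp_mem hb)
  | zero =>
    simp only [Pi.zero_apply, mul_zero, intervalIntegral.integral_zero]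
    exact (TrigPoly Φ).zero_mem
  | add k₁ k₂ h₁ h₂ ih₁ ih₂ =>
    simp only [Pi.add_apply, mul_add, intervalIntegral.integral_add (hint h₁ _) (hint h₂ _)]
    exact Submodule.add_mem _ ih₁ ih₂
  | smul c k _ ih =>
    simp only [Pi.smul_apply, smul_eq_mul, mul_left_comm _ c, intervalIntegral.integral_const_mul]
    exact Submodule.smul_mem _ c ih

lemma translationAverage_cosMeasure (hper : Function.Periodic f 1) (d : ℕ) (x : ℝ) :
    translationAverage (cosMeasure d) f x = ∫ u in (0 : ℝ)..1, f u * cosKernel d (x - u) := by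
  have hφ : Function.Periodic (fun u => f u * cosKernel d (x - u)) 1 := fun u => by
    simp only [hper u, sub_add_eq_sub_sub, (periodic_cosKernel d).sub_eq]
  have h := intervalIntegral.integral_comp_sub_left (fun u => f u * cosKernel d (x - u)) x
    (a := -(1 / 2)) (b := 1 / 2)
  simp only [sub_sub_cancel] at h
  rw [translationAverage, integral_cosMeasure, h, show x - -(1 / 2) = x - 1 / 2 + 1 by ring,
    hφ.intervalIntegral_add_eq _ 0, zero_add]

theorem exists_trigPoly_integral_abs_sub_le (hf : Measurable f) (hper : Function.Periodic f 1)
    (hbv : BoundedVariationOn f (Set.Icc 0 1)) {K : ℝ} (hK : ∀ x, |f x| ≤ K) (d : ℕ) :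
    ∃ g : ℝ → ℝ, (fun x => (g x : ℂ)) ∈ TrigPoly (Set.Icc (-d) d) ∧ Function.Periodic g 1 ∧
      ∫ x in (0 : ℝ)..1, g x = ∫ x in (0 : ℝ)..1, f x ∧ (∀ x, |g x| ≤ K) ∧
      ∫ x in (0 : ℝ)..1, |f x - g x| ≤
        (eVariationOn f (Set.Icc 0 1)).toReal / √(2 * d + 2) := by
  have habs : Integrable (fun t => |t|) (cosMeasure d) :=
    .of_bound continuous_abs.aestronglyMeasurable (1 / 2) (by simpa using ae_cosMeasure_abs_le d)
  have hW : ∀ᵐ t ∂cosMeasure d, ∫ x in (0 : ℝ)..1, |f (x - t) - f x| ≤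
      |t| * (2 * (eVariationOn f (Set.Icc 0 1)).toReal) := by
    filter_upwards [ae_cosMeasure_abs_le d] with t ht
    rw [← abs_neg]
    exact integral_abs_translate_sub_le_of_periodic hper hbv (by rw [abs_neg]; linarith)
  refine ⟨translationAverage (cosMeasure d) f, ?_, periodic_translationAverage hper,
    integral_translationAverage hf hper hK, abs_translationAverage_le hK, ?_⟩
  · have hfint : IntervalIntegrable (fun u => (f u : ℂ)) volume 0 1 :=
      (intervalIntegrable_iff_integrableOn_Ioc_of_le zero_le_one).2
        (integrable_of_measurable_of_abs_le hf hK).ofReal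
    simpa only [translationAverage_cosMeasure hper, ← intervalIntegral.integral_ofReal,
      Complex.ofReal_mul] using TrigPoly.convolution_mem hfint (cosKernel_mem_trigPoly d)
  · calc ∫ x in (0 : ℝ)..1, |f x - translationAverage (cosMeasure d) f x|
      _ ≤ (∫ t, |t| ∂cosMeasure d) * (2 * (eVariationOn f (Set.Icc 0 1)).toReal) :=
        integral_abs_sub_translationAverage_le hf hK hW habs
      _ ≤ 1 / (2 * √(2 * d + 2)) * (2 * (eVariationOn f (Set.Icc 0 1)).toReal) := by
        gcongr
        exact integral_abs_cosMeasure_le d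
      _ = (eVariationOn f (Set.Icc 0 1)).toReal / √(2 * d + 2) := by
        field_simp

end Approximation

section Comparison

variable {f g : ℝ → ℝ} {n : ℕ → ℕ} {K : ℝ}

lemma measurable_dilateSum (hf : Measurable f) (n : ℕ → ℕ) (s : Finset ℕ) :
    Measurable (dilateSum f n s) := by
  unfold dilateSum
  fun_prop

lemma intervalIntegrable_of_measurable_of_abs_le (hf : Measurable f) (hK : ∀ x, |f x| ≤ K)
    (a b : ℝ) : IntervalIntegrable f volume a b :=
  ⟨integrable_of_measurable_of_abs_le hf hK, integrable_of_measurable_of_abs_le hf hK⟩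

lemma integral_abs_dilateSum_sub_le (hf : Measurable f) (hg : Measurable g)
    (hfper : Function.Periodic f 1) (hgper : Function.Periodic g 1) (hfK : ∀ x, |f x| ≤ K)
    (hgK : ∀ x, |g x| ≤ K) (hn : ∀ k, 0 < n k) (s : Finset ℕ) :
    ∫ x in (0 : ℝ)..1, |dilateSum f n s x - dilateSum g n s x| ≤
      s.card * ∫ x in (0 : ℝ)..1, |f x - g x| := by
  have hint : ∀ {φ : ℝ → ℝ} {B : ℝ}, Measurable φ → (∀ x, |φ x| ≤ B) →
      ∀ a b, IntervalIntegrable φ volume a b := intervalIntegrable_of_measurable_of_abs_le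
  have habs : ∀ x, |(|f x - g x|)| ≤ K + K := fun x => by
    rw [abs_abs]
    exact (abs_sub _ _).trans (add_le_add (hfK x) (hgK x))
  have hdilate : ∀ i, IntervalIntegrable (fun x => |f (n i * x) - g (n i * x)|) volume 0 1 :=
    fun i => hint (by fun_prop) (fun x => habs (n i * x)) 0 1
  have hsum : IntervalIntegrable (fun x => ∑ i ∈ s, |f (n i * x) - g (n i * x)|) volume 0 1 := by
    rw [← Finset.sum_fn]
    exact .sum s fun i _ => hdilate i
  calc ∫ x in (0 : ℝ)..1, |dilateSum f n s x - dilateSum g n s x|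
    _ ≤ ∫ x in (0 : ℝ)..1, ∑ i ∈ s, |f (n i * x) - g (n i * x)| := by
      refine intervalIntegral.integral_mono_on zero_le_one
        (((hint (measurable_dilateSum hf n s) (abs_dilateSum_le hfK n s) 0 1).sub
          (hint (measurable_dilateSum hg n s) (abs_dilateSum_le hgK n s) 0 1)).abs)
        hsum fun x _ => ?_
      rw [dilateSum, dilateSum, ← Finset.sum_sub_distrib]
      exact Finset.abs_sum_le_sum_abs _ _
    _ = ∑ i ∈ s, ∫ x in (0 : ℝ)..1, |f (n i * x) - g (n i * x)| :=
      intervalIntegral.integral_finsetSum fun i _ => hdilate i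
    _ = s.card * ∫ x in (0 : ℝ)..1, |f x - g x| := by
      rw [← nsmul_eq_mul, ← Finset.sum_const]
      exact Finset.sum_congr rfl fun i _ => integral_natCast_mul_of_periodic
        (φ := fun x => |f x - g x|) (fun x => by simp only [hfper x, hgper x])
        (hint (by fun_prop) habs) (hn i)

lemma abs_integral_dilateSum_pow_sub_le (hf : Measurable f) (hg : Measurable g)
    (hfper : Function.Periodic f 1) (hgper : Function.Periodic g 1) (hfK : ∀ x, |f x| ≤ K)
    (hgK : ∀ x, |g x| ≤ K) (hn : ∀ k, 0 < n k) (s : Finset ℕ) (p : ℕ) :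
    |(∫ x in (0 : ℝ)..1, dilateSum f n s x ^ p) - ∫ x in (0 : ℝ)..1, dilateSum g n s x ^ p| ≤
      p * (s.card * K) ^ (p - 1) * (s.card * ∫ x in (0 : ℝ)..1, |f x - g x|) := by
  have hKnonneg : 0 ≤ K := (abs_nonneg _).trans (hfK 0)
  have h := abs_integral_pow_sub_integral_pow_le (μ := periodMeasure)
    (measurable_dilateSum hf n s).aestronglyMeasurable
    (measurable_dilateSum hg n s).aestronglyMeasurable
    (abs_dilateSum_le hfK n s) (abs_dilateSum_le hgK n s) p
  simp only [integral_periodMeasure] at h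
  refine h.trans ?_
  gcongr
  exact integral_abs_dilateSum_sub_le hf hg hfper hgper hfK hgK hn s

lemma abs_integral_dilateSum_pow_sub_le_of_degree (hf : Measurable f) (hg : Measurable g)
    (hfper : Function.Periodic f 1) (hgper : Function.Periodic g 1) (hfK : ∀ x, |f x| ≤ K)
    (hgK : ∀ x, |g x| ≤ K) (hn : ∀ k, 0 < n k) {N p d : ℕ} (hp : 1 ≤ p) (hN : 1 ≤ N)
    (hd : N ^ (p + 1) ≤ d) (hfg : ∫ x in (0 : ℝ)..1, |f x - g x| ≤ K / √(2 * d + 2)) :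
    |(∫ x in (0 : ℝ)..1, dilateSum f n (Finset.range N) x ^ p) -
        ∫ x in (0 : ℝ)..1, dilateSum g n (Finset.range N) x ^ p| ≤ p * (K * √N) ^ p / √N := by
  have hKnonneg : 0 ≤ K := (abs_nonneg _).trans (hfK 0)
  have hNpos : 0 < (N : ℝ) := by exact_mod_cast hN
  have hsqrt : √N ^ (p + 1) ≤ √(2 * d + 2) := by
    refine Real.le_sqrt_of_sq_le ?_
    have hd' : (N : ℝ) ^ (p + 1) ≤ d := by exact_mod_cast hd
    rw [pow_right_comm, Real.sq_sqrt hNpos.le]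
    linarith [d.cast_nonneg (α := ℝ)]
  obtain ⟨q, rfl⟩ := Nat.exists_eq_add_of_le' hp
  have h := abs_integral_dilateSum_pow_sub_le hf hg hfper hgper hfK hgK hn (Finset.range N) (q + 1)
  rw [Finset.card_range, Nat.add_sub_cancel] at h
  have hNsq : (N : ℝ) = √N ^ 2 := (Real.sq_sqrt hNpos.le).symm
  have : 0 < √(N : ℝ) := Real.sqrt_pos.2 hNpos
  calc _ ≤ (q + 1 : ℕ) * (N * K) ^ q * (N * ∫ x in (0 : ℝ)..1, |f x - g x|) := h
    _ ≤ (q + 1 : ℕ) * (N * K) ^ q * (N * (K / √N ^ (q + 1 + 1))) := by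
      gcongr
      exact hfg.trans (by gcongr)
    _ = (q + 1 : ℕ) * (√N ^ 2 * K) ^ q * (√N ^ 2 * (K / √N ^ (q + 1 + 1))) := by rw [← hNsq]
    _ = (q + 1 : ℕ) * (K * √N) ^ (q + 1) / √N := by
      field_simp
      ring

end Comparison

section BoundedVariationMoments

variable {f : ℝ → ℝ} {n : ℕ → ℕ} {K : ℝ} {M N p d : ℕ}

theorem abs_integral_dilateSum_pow_sub_gaussianMoment_le_of_boundedVariationOn
    (hn : ∀ k, 0 < n k) (hinj : Function.Injective n) (hres : NonresonantBeyond n M p d)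
    (hf : Measurable f) (hper : Function.Periodic f 1) (hmean : ∫ x in (0 : ℝ)..1, f x = 0)
    (hbv : BoundedVariationOn f (Set.Icc 0 1)) (hK : ∀ x, |f x| ≤ K) (hKpos : 0 < K)
    (hvar : (eVariationOn f (Set.Icc 0 1)).toReal ≤ K) (hp : 2 ≤ p) (hM : 1 ≤ M)
    (hMN : M ^ 3 ≤ N) (hd : N ^ (p + 1) ≤ d) :
    |(∫ x in (0 : ℝ)..1, dilateSum f n (Finset.range N) x ^ p) -
        gaussianMoment p (∫ x in (0 : ℝ)..1, dilateSum f n (Finset.range N) x ^ 2)| ≤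
      142 * p.factorial * (K * √N) ^ p / √N := by
  obtain ⟨g, hg, hgper, hgmean, hgK, hfg⟩ := exists_trigPoly_integral_abs_sub_le hf hper hbv hK d
  have hgc : Continuous g := TrigPoly.continuous_of_ofReal hg
  have hN : 1 ≤ N := (Nat.one_le_pow 3 M hM).trans hMN
  have hsqrtN : 1 ≤ √(N : ℝ) := Real.one_le_sqrt.2 (by exact_mod_cast hN)
  have hcompare : ∀ {q}, 1 ≤ q → q ≤ p →
      |(∫ x in (0 : ℝ)..1, dilateSum f n (Finset.range N) x ^ q) -
        ∫ x in (0 : ℝ)..1, dilateSum g n (Finset.range N) x ^ q| ≤ q * (K * √N) ^ q / √N :=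
    fun hq hqp => abs_integral_dilateSum_pow_sub_le_of_degree hf hgc.measurable hper hgper hK hgK
      hn hq hN ((Nat.pow_le_pow_right hN (by omega)).trans hd) (hfg.trans (by gcongr))
  have hgauss := abs_integral_dilateSum_pow_sub_gaussianMoment_le hn hinj hres hg hgper
    (hgmean.trans hmean) hgK hKpos hp hM hMN
  have hvariance := integral_dilateSum_sq_le hn hinj hres hg hgper (hgmean.trans hmean) hgK hp
    ((Nat.pow_le_pow_right hM (by norm_num)).trans hMN)
  set w := ∫ x in (0 : ℝ)..1, dilateSum f n (Finset.range N) x ^ 2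
  set v := ∫ x in (0 : ℝ)..1, dilateSum g n (Finset.range N) x ^ 2
  have hv : |v| ≤ 2 * (K * √N) ^ 2 := by
    rw [abs_of_nonneg (intervalIntegral.integral_nonneg zero_le_one fun x _ => sq_nonneg _),
      mul_pow, Real.sq_sqrt N.cast_nonneg, ← mul_assoc]
    exact hvariance
  have hperturb : |gaussianMoment p w - gaussianMoment p v| ≤
      6 * p.factorial * (K * √N) ^ p * (√N)⁻¹ :=
    abs_gaussianMoment_sub_le (by positivity) (by positivity) (inv_le_one_of_one_le₀ hsqrtN) hv
      (by simpa [div_eq_mul_inv] using hcompare one_le_two hp)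
  calc _ ≤ p * (K * √N) ^ p / √N + 135 * p.factorial * (K * √N) ^ p / √N +
        6 * p.factorial * (K * √N) ^ p * (√N)⁻¹ :=
      (abs_sub_le _ (gaussianMoment p v) _).trans (add_le_add
        ((abs_sub_le _ _ _).trans (add_le_add (hcompare (one_le_two.trans hp) le_rfl) hgauss))
        ((abs_sub_comm _ _).trans_le hperturb))
    _ ≤ p.factorial * (K * √N) ^ p / √N + 135 * p.factorial * (K * √N) ^ p / √N +
        6 * p.factorial * (K * √N) ^ p * (√N)⁻¹ := by
      gcongr
      exact Nat.self_le_factorial p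
    _ = 142 * p.factorial * (K * √N) ^ p / √N := by ring

end BoundedVariationMoments

section Parameters

variable {M N p : ℕ}

lemma natCast_mul_pow_le_rpow {a : ℝ} (hM : 2 ≤ M) (ha : 8 * p ≤ a) :
    ((p * M ^ (7 * p) : ℕ) : ℝ) ≤ (M : ℝ) ^ a :=
  calc ((p * M ^ (7 * p) : ℕ) : ℝ) ≤ (M ^ p * M ^ (7 * p) : ℕ) := by
        gcongr
        exact (Nat.lt_pow_self hM).le
    _ = (M : ℝ) ^ (8 * p : ℝ) := by
      rw [← pow_add, show p + 7 * p = 8 * p by ring, Nat.cast_pow, ← Real.rpow_natCast]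
      push_cast
      rfl
    _ ≤ (M : ℝ) ^ a := by
      gcongr
      exact_mod_cast one_le_two.trans hM

lemma pow_succ_le_pow_of_lt_succ_pow (hM : 4 ≤ M) (hp : 3 ≤ p) (hN : N < (M + 1) ^ 4) :
    N ^ (p + 1) ≤ M ^ (7 * p) := by
  have hfive : (4 * (M + 1)) ^ 4 ≤ (5 * M) ^ 4 := Nat.pow_le_pow_left (by omega) 4
  have hN_le : N ≤ M ^ 5 := by
    rw [mul_pow, mul_pow] at hfive
    have : 4 * M ^ 4 ≤ M ^ 5 := (Nat.mul_le_mul_right _ hM).trans_eq (by ring)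
    omega
  calc N ^ (p + 1) ≤ (M ^ 5) ^ (p + 1) := Nat.pow_le_pow_left hN_le _
    _ = M ^ (5 * (p + 1)) := (pow_mul _ _ _).symm
    _ ≤ M ^ (7 * p) := Nat.pow_le_pow_right (by omega) (by omega)

lemma pow_le_and_lt_succ_pow_of_eq_floor (hM : M = ⌊(N : ℝ) ^ ((1 : ℝ) / 4)⌋₊) :
    M ^ 4 ≤ N ∧ N < (M + 1) ^ 4 := by
  have hroot : ((N : ℝ) ^ ((1 : ℝ) / 4)) ^ 4 = N := by
    rw [← Real.rpow_mul_natCast N.cast_nonneg]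
    norm_num
  have hnonneg : 0 ≤ (N : ℝ) ^ ((1 : ℝ) / 4) := by positivity
  subst hM
  constructor
  · exact_mod_cast (pow_le_pow_left₀ (by positivity) (Nat.floor_le hnonneg) 4).trans_eq hroot
  · exact_mod_cast hroot.symm.trans_lt
      (pow_lt_pow_left₀ (Nat.lt_floor_add_one _) hnonneg four_ne_zero)

lemma factorial_sq_le_exp_sq (p : ℕ) : (p.factorial : ℝ) ^ 2 ≤ exp ((p : ℝ) ^ 2) := by
  have hp : (p : ℝ) ≤ exp (p / 2) := by linarith [Real.two_mul_le_exp (x := (p / 2 : ℝ))]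
  calc (p.factorial : ℝ) ^ 2 ≤ ((p : ℝ) ^ p) ^ 2 := by
        gcongr
        exact_mod_cast Nat.factorial_le_pow p
    _ ≤ (exp (p / 2) ^ p) ^ 2 := by gcongr
    _ = exp ((p : ℝ) ^ 2) := by
      rw [← pow_mul, ← Real.exp_nat_mul]
      congr 1
      push_cast
      ring

lemma factorial_mul_pow_le_exp_mul_exp {K : ℝ} (hK : 0 ≤ K) (p : ℕ) :
    p.factorial * K ^ p ≤ exp K * exp ((p : ℝ) ^ 2) :=
  calc p.factorial * K ^ p ≤ p.factorial * (exp K * p.factorial) := by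
        gcongr
        exact (div_le_iff₀ (by positivity)).1 (Real.pow_div_factorial_le_exp K hK p)
    _ = exp K * (p.factorial : ℝ) ^ 2 := by ring
    _ ≤ exp K * exp ((p : ℝ) ^ 2) := by
      gcongr
      exact factorial_sq_le_exp_sq p

lemma sqrt_pow_div_sqrt {x : ℝ} (hx : 0 < x) (p : ℕ) : √x ^ p / √x = x ^ (((p : ℝ) - 1) / 2) := by
  rw [Real.sqrt_eq_rpow, ← Real.rpow_mul_natCast hx.le, ← Real.rpow_sub hx]
  ring_nf

lemma le_mul_log_pow {a x : ℝ} (ha : 0 ≤ a) (hx : 3 ≤ x) (p : ℕ) : a ≤ a * log x ^ p :=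
  le_mul_of_one_le_right ha <| one_le_pow₀ <|
    (Real.le_log_iff_exp_le (by linarith)).2 (exp_one_lt_three.le.trans hx)

end Parameters

/-- The degree `M ^ (7 * p)` is large enough for the approximation of `f` to be accurate, and small
enough for Condition `A_ω` at `M` to control `p`-fold products of the approximating sums. -/
lemma CondAWith.abs_integral_dilateSum_pow_sub_gaussianMoment_le {ω : ℕ → ℝ} {n : ℕ → ℕ}
    {f : ℝ → ℝ} {N₀ M N p : ℕ} {K : ℝ} (hA : CondAWith ω n N₀) (hM₀ : N₀ ≤ M)
    (hn : ∀ k, 0 < n k) (hinj : Function.Injective n) (hf : Measurable f)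
    (hper : Function.Periodic f 1) (hmean : ∫ x in (0 : ℝ)..1, f x = 0)
    (hbv : BoundedVariationOn f (Set.Icc 0 1)) (hK : ∀ x, |f x| ≤ K) (hKpos : 0 < K)
    (hvar : (eVariationOn f (Set.Icc 0 1)).toReal ≤ K) (hp : 3 ≤ p) (hω : 8 * p ≤ ω M)
    (hM : 4 ≤ M) (hMN : M ^ 4 ≤ N) (hNM : N < (M + 1) ^ 4) :
    |(∫ x in (0 : ℝ)..1, dilateSum f n (Finset.range N) x ^ p) -
        gaussianMoment p (∫ x in (0 : ℝ)..1, dilateSum f n (Finset.range N) x ^ 2)| ≤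
      142 * p.factorial * (K * √N) ^ p / √N :=
  have hp_le : (p : ℝ) ≤ ω M := by linarith [p.cast_nonneg (α := ℝ)]
  abs_integral_dilateSum_pow_sub_gaussianMoment_le_of_boundedVariationOn hn hinj
    (hA.nonresonantBeyond hM₀ hn hp_le (natCast_mul_pow_le_rpow (by omega) hω)) hf hper hmean hbv
    hK hKpos hvar (by omega) (by omega) ((Nat.pow_le_pow_right (by omega) (by omega)).trans hMN)
    (pow_succ_le_pow_of_lt_succ_pow hM hp hNM)

theorem statement7_general {f : ℝ → ℝ} (hf : Measurable f) (hper : Function.Periodic f 1)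
    (hmean : ∫ x in (0 : ℝ)..1, f x = 0) (hbv : BoundedVariationOn f (Set.Icc 0 1)) :
    ∃ C : ℝ, 0 < C ∧ ∀ (ω : ℕ → ℝ) (n : ℕ → ℕ), (∀ k, 0 < n k) → Function.Injective n →
      CondA ω n → ∃ N₁ : ℕ, ∀ p N : ℕ, 3 ≤ p → N₁ ≤ N →
      8 * (p : ℝ) ≤ ω ⌊(N : ℝ) ^ ((1 : ℝ) / 4)⌋₊ →
      (Even p →
        |(∫ x in (0 : ℝ)..1, (∑ k ∈ Finset.range N, f (n k * x)) ^ p) -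
            ((p.factorial : ℝ) / ((p / 2).factorial * 2 ^ (p / 2))) *
              √(∫ x in (0 : ℝ)..1, (∑ k ∈ Finset.range N, f (n k * x)) ^ 2) ^ p|
          ≤ C * exp ((p : ℝ) ^ 2) * (N : ℝ) ^ (((p : ℝ) - 1) / 2)) ∧
      (Odd p →
        |∫ x in (0 : ℝ)..1, (∑ k ∈ Finset.range N, f (n k * x)) ^ p|
          ≤ C * exp ((p : ℝ) ^ 2) * (N : ℝ) ^ (((p : ℝ) - 1) / 2)) := by
  obtain ⟨B, hB⟩ := exists_abs_le_of_periodic_of_boundedVariationOn hper hbv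
  set K := max 1 (max B (eVariationOn f (Set.Icc 0 1)).toReal)
  have hKpos : 0 < K := zero_lt_one.trans_le (le_max_left _ _)
  have hBK : ∀ x, |f x| ≤ K := fun x => (hB x).trans ((le_max_left _ _).trans (le_max_right _ _))
  have hvar : (eVariationOn f (Set.Icc 0 1)).toReal ≤ K :=
    (le_max_right _ _).trans (le_max_right _ _)
  refine ⟨142 * exp K, by positivity, fun ω n hn hinj ⟨N₀, hA⟩ =>
    ⟨max N₀ 4 ^ 4, fun p N hp hN hω => ?_⟩⟩
  obtain ⟨hMN, hNM⟩ := pow_le_and_lt_succ_pow_of_eq_floor (N := N) rfl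
  set M := ⌊(N : ℝ) ^ ((1 : ℝ) / 4)⌋₊
  have hM : max N₀ 4 ≤ M :=
    Nat.lt_succ_iff.1 (lt_of_pow_lt_pow_left₀ 4 (Nat.zero_le _) (hN.trans_lt hNM))
  have hNpos : 0 < N := lt_of_lt_of_le (by positivity) hN
  have hbound := (hA.abs_integral_dilateSum_pow_sub_gaussianMoment_le
    ((le_max_left _ _).trans hM) hn hinj hf hper hmean hbv hBK hKpos hvar hp hω
    ((le_max_right _ _).trans hM) hMN hNM).trans <|
    calc 142 * p.factorial * (K * √N) ^ p / √N
      _ = 142 * (p.factorial * K ^ p) * (√N ^ p / √N) := by ring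
      _ ≤ 142 * (exp K * exp ((p : ℝ) ^ 2)) * (N : ℝ) ^ (((p : ℝ) - 1) / 2) := by
        rw [sqrt_pow_div_sqrt (by exact_mod_cast hNpos)]
        gcongr 142 * ?_ * _
        exact factorial_mul_pow_le_exp_mul_exp hKpos.le p
      _ = 142 * exp K * exp ((p : ℝ) ^ 2) * (N : ℝ) ^ (((p : ℝ) - 1) / 2) := by ring
  refine ⟨fun heven => ?_, fun hodd => ?_⟩
  · rwa [← gaussianMoment_sq_of_even heven, Real.sq_sqrt
      (intervalIntegral.integral_nonneg zero_le_one fun x _ => sq_nonneg _)]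
  · rwa [gaussianMoment_of_odd hodd, sub_zero] at hbound

/-- Lemma 1 of the paper: moment estimates for `S_N = ∑_{k<N} f(n_k ·)` under
Condition `A_ω`: for `p ≥ 3` and `N` large enough that `ω_{⌊N^{1/4}⌋} ≥ 8p`,
`∫₀¹ S_N^p = (p!/((p/2)!)) 2^{-p/2} σ_N^p + O(exp(p²) N^{(p-1)/2} (log N)^p)` for even `p`,
and `∫₀¹ S_N^p = O(exp(p²) N^{(p-1)/2} (log N)^p)` for odd `p`, with an absolute constant. -/
theorem statement7
    (ω : ℕ → ℝ) (hω_pos : ∀ k, 0 < ω k) (hω_mono : Monotone ω)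
    (hω_top : Tendsto ω atTop atTop)
    (n : ℕ → ℕ) (hn_pos : ∀ k, 0 < n k) (hn_inj : Function.Injective n)
    (hA : CondA ω n)
    (f : ℝ → ℝ) (hf_meas : Measurable f)
    (hf_per : ∀ x, f (x + 1) = f x)
    (hf_int : ∫ x in (0:ℝ)..1, f x = 0)
    (hf_bv : BoundedVariationOn f (Set.Icc 0 1))
    (S : ℕ → ℝ → ℝ) (hS : ∀ N x, S N x = ∑ k ∈ Finset.range N, f (n k * x))
    (σ' : ℕ → ℝ) (hσ' : ∀ N, σ' N = Real.sqrt (∫ x in (0:ℝ)..1, (S N x) ^ 2)) :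
    ∃ C : ℝ, 0 < C ∧ ∃ N₁ : ℕ, ∀ (p N : ℕ), 3 ≤ p → N₁ ≤ N →
      (8 * (p : ℝ)) ≤ ω (⌊(N : ℝ) ^ ((1 : ℝ) / 4)⌋₊) →
      (Even p →
        |(∫ x in (0:ℝ)..1, (S N x) ^ p) -
            ((p.factorial : ℝ) / ((p / 2).factorial * 2 ^ (p / 2))) * (σ' N) ^ p|
          ≤ C * Real.exp ((p : ℝ) ^ 2) * (N : ℝ) ^ (((p : ℝ) - 1) / 2) * (Real.log N) ^ p) ∧
      (Odd p →
        |∫ x in (0:ℝ)..1, (S N x) ^ p|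
          ≤ C * Real.exp ((p : ℝ) ^ 2) * (N : ℝ) ^ (((p : ℝ) - 1) / 2) * (Real.log N) ^ p) := by
  obtain ⟨C, hC, hmain⟩ := statement7_general hf_meas hf_per hf_int hf_bv
  obtain ⟨N₁, hmoment⟩ := hmain ω n hn_pos hn_inj hA
  simp only [hσ', hS]
  exact ⟨C, hC, max N₁ 3, fun p N hp hN hω =>
    have hlog := le_mul_log_pow (a := C * Real.exp ((p : ℝ) ^ 2) * (N : ℝ) ^ (((p : ℝ) - 1) / 2))
      (by positivity) (by exact_mod_cast (le_max_right N₁ 3).trans hN) p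
    (hmoment p N hp ((le_max_left _ _).trans hN) hω).imp
      (fun h heven => (h heven).trans hlog) fun h hodd => (h hodd).trans hlog⟩
end
end

section
/- Let ω be a nondecreasing sequence of positive reals tending to +∞ and let (n_k) be a sequence of distinct positive integers satisfying Condition A_ω. Then for any f satisfying the stated conditions, ∫₀¹ ( Σ_{k=1}^N f(n_k x) )² dx ∼ ‖f‖² N as N → ∞, i.e. the ratio of the two sides tends to 1 (when ‖f‖ > 0; if ‖f‖ = 0 the left side is o(N)). -/
/-!
Write `∫₀¹ (∑ f(n_k x))² dx` as `‖f‖² N` plus twice the sum of the correlations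
`∫₀¹ f(n_k x) f(n_l x) dx` over the pairs with `n_l < n_k`.

To bound a correlation, divide out the gcd, so that it becomes `∫₀¹ f(ax) f(bx) dx` with `a`, `b`
coprime, and average over the shifts `x ↦ x + i/a`. These fix `f(ax)` and, by coprimality, permute
the points `bx + i/a` modulo `1`, so `f(bx)` is replaced by `S(bx)/a` with
`S(y) = ∑_{i<a} f(y + i/a)`. This `S` is `1/a`-periodic with mean zero and oscillates by at most the
variation `V` of `f`, whence `|S| ≤ V`. The correlation is therefore at most
`V ‖f‖₁ gcd(n_k, n_l) / n_k`.

If `n_k` has exactly `M` smaller elements of the sequence below it, it is not among the `M`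
smallest, so Condition `A_ω` at level `M` excludes the relation `b n_k - a n_l = 0` unless
`a = n_k / gcd(n_k, n_l)` exceeds `M ^ ω_M ≥ M²`. The `M` correlations attached to `k` thus add up
to `O(1/M)`. Since `M → ∞` with `k`, the average over `k < N` tends to zero.
-/

open MeasureTheory Filter Real Topology

noncomputable section

section PeriodicIntegrals

variable {E : Type*} [NormedAddCommGroup E]

lemma intervalIntegrable_comp_mul {f : ℝ → E} (hf : ∀ s t, IntervalIntegrable f volume s t)
    (c s t : ℝ) : IntervalIntegrable (fun x => f (c * x)) volume s t := by
  rcases eq_or_ne c 0 with rfl | hc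
  · simp
  · simpa [hc] using (hf (c * s) (c * t)).comp_mul_left (c := c)

lemma intervalIntegrable_comp_mul_smul [NormedSpace ℝ E] {g : ℝ → ℝ} {f : ℝ → E} {K : ℝ}
    (hg : ∀ s t, IntervalIntegrable g volume s t) (hf : ∀ s t, IntervalIntegrable f volume s t)
    (hK : ∀ x, ‖f x‖ ≤ K) (a b s t : ℝ) :
    IntervalIntegrable (fun x => g (a * x) • f (b * x)) volume s t := by
  have hga := intervalIntegrable_comp_mul hg a s t
  have hfb := intervalIntegrable_comp_mul hf b s t
  rw [intervalIntegrable_iff] at *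
  exact hga.smul_bdd K hfb.aestronglyMeasurable (ae_of_all _ fun x => hK _)

lemma periodic_comp_natCast_mul {α : Type*} {f : ℝ → α} {T : ℝ} (hf : Function.Periodic f T)
    (a : ℕ) : Function.Periodic (fun x => f (a * x)) T := fun x => by
  simpa only [mul_add] using hf.nat_mul a (a * x)

lemma periodic_comp_natCast_mul_smul {R α : Type*} [SMul R α] {g : ℝ → R} {f : ℝ → α} {T : ℝ}
    (hg : Function.Periodic g T) (hf : Function.Periodic f T) (a b : ℕ) :
    Function.Periodic (fun x => g (a * x) • f (b * x)) T := fun x =>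
  congrArg₂ (· • ·) (periodic_comp_natCast_mul hg a x) (periodic_comp_natCast_mul hf b x)

variable [NormedSpace ℝ E] {f : ℝ → E} {T : ℝ}

lemma integral_comp_add_right_of_periodic (hf : Function.Periodic f T) (c : ℝ) :
    ∫ x in (0 : ℝ)..T, f (x + c) = ∫ x in (0 : ℝ)..T, f x := by
  simpa [add_comm] using hf.intervalIntegral_add_eq c 0

lemma integral_comp_natCast_mul_of_periodic (hf : Function.Periodic f T)
    (hf_int : ∀ s t, IntervalIntegrable f volume s t) {d : ℕ} (hd : d ≠ 0) :
    ∫ x in (0 : ℝ)..T, f (d * x) = ∫ x in (0 : ℝ)..T, f x := by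
  have hd' : (d : ℝ) ≠ 0 := by exact_mod_cast hd
  have hsum := hf.intervalIntegral_add_zsmul_eq d 0 hf_int
  simp only [zero_add, zsmul_eq_mul, Int.cast_natCast, natCast_zsmul] at hsum
  rw [intervalIntegral.integral_comp_mul_left _ hd', mul_zero, hsum, ← Nat.cast_smul_eq_nsmul ℝ,
    inv_smul_smul₀ hd']

end PeriodicIntegrals

section ShiftSum

variable {E : Type*}

lemma sum_edist_le_eVariationOn {α : Type*} [LinearOrder α] [PseudoEMetricSpace E] (f : α → E)
    {I : ℕ → α} (hI : Monotone I) {y z : ℕ → α} (hy : ∀ i, y i ∈ Set.Icc (I i) (I (i + 1)))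
    (hz : ∀ i, z i ∈ Set.Icc (I i) (I (i + 1))) (m : ℕ) :
    ∑ i ∈ Finset.range m, edist (f (y i)) (f (z i)) ≤ eVariationOn f (Set.Icc (I 0) (I m)) := by
  rw [← eVariationOn.sum' f hI]
  exact Finset.sum_le_sum fun i _ => eVariationOn.edist_le f (hy i) (hz i)

/-- The sum of `f` over the `a` points of the translate by `y` of `(1/a)ℤ` modulo `1`; up to the
factor `a`, it is the average of a `1`-periodic function `f` over the shifts by multiples of
`1/a`. -/
def shiftSum [AddCommMonoid E] (f : ℝ → E) (a : ℕ) (y : ℝ) : E :=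
  ∑ i ∈ Finset.range a, f (y + i / a)

lemma shiftSum_one [AddCommMonoid E] (f : ℝ → E) : shiftSum f 1 = f := by
  ext y
  simp [shiftSum]

lemma shiftSum_periodic [AddCommGroup E] {f : ℝ → E} (hf : Function.Periodic f 1) {a : ℕ}
    (ha : a ≠ 0) : Function.Periodic (shiftSum f a) (1 / a) := fun y => by
  rw [← sub_eq_zero]
  calc shiftSum f a (y + 1 / a) - shiftSum f a y
      = ∑ i ∈ Finset.range a, (f (y + (i + 1 : ℕ) / a) - f (y + i / a)) := by
        rw [shiftSum, shiftSum, ← Finset.sum_sub_distrib]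
        refine Finset.sum_congr rfl fun i _ => ?_
        push_cast
        ring_nf
    _ = f (y + a / a) - f (y + (0 : ℕ) / a) :=
        Finset.sum_range_sub (fun i : ℕ => f (y + i / a)) a
    _ = 0 := by
        rw [div_self (by exact_mod_cast ha), hf y, Nat.cast_zero, zero_div, add_zero, sub_self]

lemma dist_shiftSum_le_of_mem_Ico [SeminormedAddCommGroup E] {f : ℝ → E}
    (hf_bv : BoundedVariationOn f (Set.Icc 0 1)) {a : ℕ} {y z : ℝ}
    (hy : y ∈ Set.Ico (0 : ℝ) (1 / a)) (hz : z ∈ Set.Ico (0 : ℝ) (1 / a)) :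
    dist (shiftSum f a y) (shiftSum f a z) ≤ (eVariationOn f (Set.Icc 0 1)).toReal := by
  have ha : (a : ℝ) ≠ 0 := fun h => by simp [h] at hy
  have hI : Monotone fun i : ℕ => (i : ℝ) / a := fun i j hij => by dsimp only; gcongr
  have hmem : ∀ w ∈ Set.Ico (0 : ℝ) (1 / a), ∀ i : ℕ,
      w + i / a ∈ Set.Icc ((i : ℝ) / a) ((i + 1 : ℕ) / a) := fun w hw i => by
    rw [Nat.cast_succ, add_div, add_comm w]
    exact ⟨by linarith [hw.1], by linarith [hw.2]⟩
  have hvar := sum_edist_le_eVariationOn f hI (hmem y hy) (hmem z hz) a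
  simp only [Nat.cast_zero, zero_div, div_self ha] at hvar
  calc dist (shiftSum f a y) (shiftSum f a z)
      ≤ ∑ i ∈ Finset.range a, dist (f (y + i / a)) (f (z + i / a)) := dist_sum_sum_le _ _ _
    _ = (∑ i ∈ Finset.range a, edist (f (y + i / a)) (f (z + i / a))).toReal := by
        simp only [ENNReal.toReal_sum fun _ _ => edist_ne_top _ _, dist_edist]
    _ ≤ (eVariationOn f (Set.Icc 0 1)).toReal := ENNReal.toReal_mono hf_bv hvar

lemma dist_shiftSum_le [SeminormedAddCommGroup E] {f : ℝ → E} (hf_per : Function.Periodic f 1)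
    (hf_bv : BoundedVariationOn f (Set.Icc 0 1)) {a : ℕ} (ha : a ≠ 0) (y z : ℝ) :
    dist (shiftSum f a y) (shiftSum f a z) ≤ (eVariationOn f (Set.Icc 0 1)).toReal := by
  have hp : (0 : ℝ) < 1 / a := by positivity
  obtain ⟨y', hy', hy⟩ := (shiftSum_periodic hf_per ha).exists_mem_Ico₀ hp y
  obtain ⟨z', hz', hz⟩ := (shiftSum_periodic hf_per ha).exists_mem_Ico₀ hp z
  rw [hy, hz]
  exact dist_shiftSum_le_of_mem_Ico hf_bv hy' hz'

/-- Multiplication by an integer coprime to `a` permutes `(1/a)ℤ` modulo `1`. -/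
lemma sum_comp_add_mul_div_eq_shiftSum [AddCommMonoid E] {f : ℝ → E}
    (hf : Function.Periodic f 1) {a b : ℕ} (hab : a.Coprime b) (y : ℝ) :
    ∑ i ∈ Finset.range a, f (y + b * (i / a)) = shiftSum f a y := by
  have hmaps : Set.MapsTo (fun i => b * i % a) (Finset.range a) (Finset.range a) := fun i hi =>
    Finset.mem_coe.2 <| Finset.mem_range.2 <|
      Nat.mod_lt _ ((Nat.zero_le i).trans_lt (Finset.mem_range.1 hi))
  have hinj : Set.InjOn (fun i => b * i % a) (Finset.range a) := fun i hi j hj hij =>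
    (Nat.ModEq.cancel_left_of_coprime hab hij).eq_of_lt_of_lt
      (Finset.mem_range.1 hi) (Finset.mem_range.1 hj)
  refine Finset.sum_nbij (fun i => b * i % a) hmaps hinj
    (Finset.surjOn_of_injOn_of_card_le _ hmaps hinj le_rfl) fun i hi => ?_
  have ha : (a : ℝ) ≠ 0 := by
    exact_mod_cast ((Nat.zero_le i).trans_lt (Finset.mem_range.1 hi)).ne'
  have hdivmod : (b : ℝ) * i = (b * i % a : ℕ) + a * (b * i / a : ℕ) := by
    exact_mod_cast (Nat.mod_add_div (b * i) a).symm
  have hpoint : y + b * ((i : ℝ) / a) = y + (b * i % a : ℕ) / a + (b * i / a : ℕ) * 1 := by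
    rw [← mul_div_assoc, hdivmod]
    field_simp
    ring
  rw [hpoint]
  exact hf.nat_mul _ _

lemma shiftSum_comp_mul_smul [AddCommGroup E] [Module ℝ E] {g : ℝ → ℝ} {f : ℝ → E}
    (hg : Function.Periodic g 1) (hf : Function.Periodic f 1) {a b : ℕ} (ha : a ≠ 0)
    (hab : a.Coprime b) (x : ℝ) :
    shiftSum (fun x => g (a * x) • f (b * x)) a x = g (a * x) • shiftSum f a (b * x) := by
  rw [← sum_comp_add_mul_div_eq_shiftSum hf hab, Finset.smul_sum, shiftSum]
  refine Finset.sum_congr rfl fun i _ => ?_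
  have hshift : (a : ℝ) * (x + i / a) = a * x + i * 1 := by field_simp
  rw [hshift, hg.nat_mul i, mul_add]

variable [NormedAddCommGroup E] {f : ℝ → E}

lemma intervalIntegrable_shiftSum (hf : ∀ s t, IntervalIntegrable f volume s t) (a : ℕ)
    (s t : ℝ) : IntervalIntegrable (shiftSum f a) volume s t := by
  have hsum : shiftSum f a = ∑ i ∈ Finset.range a, fun z => f (z + i / a) := by
    ext z
    simp only [shiftSum, Finset.sum_apply]
  rw [hsum]
  exact IntervalIntegrable.sum _ fun i _ => by
    simpa using (hf (s + i / a) (t + i / a)).comp_add_right (i / a)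

variable [NormedSpace ℝ E]

lemma integral_shiftSum (hf_per : Function.Periodic f 1)
    (hf : ∀ s t, IntervalIntegrable f volume s t) (a : ℕ) :
    ∫ x in (0 : ℝ)..1, shiftSum f a x = a • ∫ x in (0 : ℝ)..1, f x := by
  unfold shiftSum
  rw [intervalIntegral.integral_finsetSum fun i _ => by
    simpa using (hf (0 + i / a) (1 + i / a)).comp_add_right (i / a)]
  simp only [integral_comp_add_right_of_periodic hf_per, Finset.sum_const, Finset.card_range]

variable [CompleteSpace E]

lemma norm_shiftSum_le (hf_per : Function.Periodic f 1)
    (hf : ∀ s t, IntervalIntegrable f volume s t) (hf_mean : ∫ x in (0 : ℝ)..1, f x = 0)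
    (hf_bv : BoundedVariationOn f (Set.Icc 0 1)) {a : ℕ} (ha : a ≠ 0) (y : ℝ) :
    ‖shiftSum f a y‖ ≤ (eVariationOn f (Set.Icc 0 1)).toReal := by
  have hmean : ∫ z in (0 : ℝ)..1, (shiftSum f a y - shiftSum f a z) = shiftSum f a y := by
    rw [intervalIntegral.integral_sub intervalIntegrable_const
      (intervalIntegrable_shiftSum hf a 0 1), integral_shiftSum hf_per hf, hf_mean]
    simp
  have hle := intervalIntegral.norm_integral_le_of_norm_le_const (a := 0) (b := 1)
    fun z _ => (dist_eq_norm (shiftSum f a y) (shiftSum f a z)).symm.trans_le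
      (dist_shiftSum_le hf_per hf_bv ha y z)
  simpa [hmean] using hle

lemma norm_le_eVariationOn_of_integral_eq_zero (hf_per : Function.Periodic f 1)
    (hf : ∀ s t, IntervalIntegrable f volume s t) (hf_mean : ∫ x in (0 : ℝ)..1, f x = 0)
    (hf_bv : BoundedVariationOn f (Set.Icc 0 1)) (x : ℝ) :
    ‖f x‖ ≤ (eVariationOn f (Set.Icc 0 1)).toReal := by
  simpa only [shiftSum_one] using norm_shiftSum_le hf_per hf hf_mean hf_bv one_ne_zero x

end ShiftSum

section Correlation

lemma natCast_gcd_mul_right_div_mul {K : Type*} [Field K] [CharZero K] {a b d : ℕ}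
    (hab : a.Coprime b) (hd : d ≠ 0) : ((a * d).gcd (b * d) : K) / (a * d : ℕ) = 1 / a := by
  rw [Nat.gcd_mul_right, hab.gcd_eq_one, one_mul, Nat.cast_mul, div_mul_cancel_right₀
    (Nat.cast_ne_zero.2 hd), one_div]

variable {E : Type*} [NormedAddCommGroup E] [NormedSpace ℝ E] [CompleteSpace E]
  {g : ℝ → ℝ} {f : ℝ → E}

lemma mul_norm_integral_comp_mul_smul_le_of_coprime (hg_per : Function.Periodic g 1)
    (hg : ∀ s t, IntervalIntegrable g volume s t) (hf_per : Function.Periodic f 1)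
    (hf : ∀ s t, IntervalIntegrable f volume s t) (hf_mean : ∫ x in (0 : ℝ)..1, f x = 0)
    (hf_bv : BoundedVariationOn f (Set.Icc 0 1)) {a b : ℕ} (ha : a ≠ 0) (hab : a.Coprime b) :
    a * ‖∫ x in (0 : ℝ)..1, g (a * x) • f (b * x)‖
      ≤ (∫ x in (0 : ℝ)..1, |g x|) * (eVariationOn f (Set.Icc 0 1)).toReal := by
  set V := (eVariationOn f (Set.Icc 0 1)).toReal
  have hprod_per : Function.Periodic (fun x => g (a * x) • f (b * x)) 1 :=
    periodic_comp_natCast_mul_smul hg_per hf_per a b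
  have hprod := intervalIntegrable_comp_mul_smul hg hf
    (norm_le_eVariationOn_of_integral_eq_zero hf_per hf hf_mean hf_bv) a b
  calc a * ‖∫ x in (0 : ℝ)..1, g (a * x) • f (b * x)‖
      = ‖∫ x in (0 : ℝ)..1, g (a * x) • shiftSum f a (b * x)‖ := by
        simp only [← shiftSum_comp_mul_smul hg_per hf_per ha hab,
          integral_shiftSum hprod_per hprod, ← Nat.cast_smul_eq_nsmul ℝ, norm_smul,
          RCLike.norm_natCast]
    _ ≤ ∫ x in (0 : ℝ)..1, |g (a * x)| * V := by
        refine intervalIntegral.norm_integral_le_of_norm_le zero_le_one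
          (ae_of_all _ fun x _ => ?_) ((intervalIntegrable_comp_mul hg a 0 1).abs.mul_const V)
        rw [norm_smul, Real.norm_eq_abs]
        gcongr
        exact norm_shiftSum_le hf_per hf hf_mean hf_bv ha _
    _ = (∫ x in (0 : ℝ)..1, |g x|) * V := by
        rw [intervalIntegral.integral_mul_const]
        exact congrArg (· * V) (integral_comp_natCast_mul_of_periodic (hg_per.comp abs)
          (fun s t => (hg s t).abs) ha)

theorem norm_integral_comp_mul_smul_le_gcd_div (hg_per : Function.Periodic g 1)
    (hg : ∀ s t, IntervalIntegrable g volume s t) (hf_per : Function.Periodic f 1)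
    (hf : ∀ s t, IntervalIntegrable f volume s t) (hf_mean : ∫ x in (0 : ℝ)..1, f x = 0)
    (hf_bv : BoundedVariationOn f (Set.Icc 0 1)) {m : ℕ} (hm : 0 < m) (l : ℕ) :
    ‖∫ x in (0 : ℝ)..1, g (m * x) • f (l * x)‖
      ≤ m.gcd l / m * ((∫ x in (0 : ℝ)..1, |g x|) * (eVariationOn f (Set.Icc 0 1)).toReal) := by
  obtain ⟨d, a, b, hd, hab, rfl, rfl⟩ :=
    Nat.exists_coprime' (Nat.gcd_pos_of_pos_left l hm)
  have ha : a ≠ 0 := by rintro rfl; simp at hm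
  have hprod_per : Function.Periodic (fun x => g (a * x) • f (b * x)) 1 :=
    periodic_comp_natCast_mul_smul hg_per hf_per a b
  have hprod := intervalIntegrable_comp_mul_smul hg hf
    (norm_le_eVariationOn_of_integral_eq_zero hf_per hf hf_mean hf_bv) a b
  have hdilate := integral_comp_natCast_mul_of_periodic hprod_per hprod hd.ne'
  simp only [← mul_assoc] at hdilate
  rw [natCast_gcd_mul_right_div_mul hab hd.ne', one_div_mul_eq_div, le_div_iff₀' (by positivity)]
  push_cast
  rw [hdilate]
  exact mul_norm_integral_comp_mul_smul_le_of_coprime hg_per hg hf_per hf hf_mean hf_bv ha hab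

end Correlation

section GcdSums

lemma sq_sum_eq_sum_sq_add_two_mul_sum_lt {ι α R : Type*} [LinearOrder α] [CommSemiring R]
    {n : ι → α} (hn : Function.Injective n) (s : Finset ι) (u : ι → R) :
    (∑ k ∈ s, u k) ^ 2
      = ∑ k ∈ s, u k ^ 2 + 2 * ∑ k ∈ s, ∑ l ∈ s with n l < n k, u k * u l := by
  classical
  have hsplit : ∀ k ∈ s, ∑ l ∈ s, u k * u l = u k ^ 2 + ∑ l ∈ s with n l < n k, u k * u l
      + ∑ l ∈ s with n k < n l, u k * u l := fun k hk => by
    have hdiag : u k ^ 2 = ∑ l ∈ s, if k = l then u k * u l else 0 := by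
      rw [Finset.sum_ite_eq, if_pos hk, sq]
    rw [hdiag, Finset.sum_filter, Finset.sum_filter, ← Finset.sum_add_distrib,
      ← Finset.sum_add_distrib]
    refine Finset.sum_congr rfl fun l _ => ?_
    rcases lt_trichotomy (n k) (n l) with h | h | h
    · simp [h, h.not_gt, ne_of_apply_ne n h.ne]
    · simp [hn h]
    · simp [h, h.not_gt, ne_of_apply_ne n h.ne']
  have hswap : ∑ k ∈ s, ∑ l ∈ s with n k < n l, u k * u l
      = ∑ k ∈ s, ∑ l ∈ s with n l < n k, u k * u l := by
    simp only [Finset.sum_filter]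
    rw [Finset.sum_comm]
    simp only [mul_comm]
  rw [sq, Finset.sum_mul_sum, Finset.sum_congr rfl hsplit, Finset.sum_add_distrib,
    Finset.sum_add_distrib, hswap, add_assoc, two_mul]

variable {ι : Type*} {n : ι → ℕ}

/-- The indices of the elements of the sequence `n` below `n k`. Injectivity of `n` makes this set
finite; its cardinality is the rank of `n k` in the sequence, counted from `0`. -/
def indicesBelow (hn : Function.Injective n) (k : ι) : Finset ι :=
  (Finset.Iio (n k)).preimage n hn.injOn

lemma mem_indicesBelow {hn : Function.Injective n} {k l : ι} :
    l ∈ indicesBelow hn k ↔ n l < n k := by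
  simp only [indicesBelow, Finset.mem_preimage, Finset.mem_Iio]

lemma card_indicesBelow_lt_of_lt {hn : Function.Injective n} {k l : ι} (hkl : n k < n l) :
    (indicesBelow hn k).card < (indicesBelow hn l).card := by
  have hsub : indicesBelow hn k ⊆ indicesBelow hn l := fun j hj =>
    mem_indicesBelow.2 ((mem_indicesBelow.1 hj).trans hkl)
  exact Finset.card_lt_card ((Finset.ssubset_iff_of_subset hsub).2
    ⟨k, mem_indicesBelow.2 hkl, fun hk => (mem_indicesBelow.1 hk).false⟩)

lemma card_indicesBelow_injective (hn : Function.Injective n) :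
    Function.Injective fun k => (indicesBelow hn k).card := fun _ _ hkl =>
  hn <| le_antisymm (not_lt.1 fun h => (card_indicesBelow_lt_of_lt h).ne' hkl)
    (not_lt.1 fun h => (card_indicesBelow_lt_of_lt h).ne hkl)

/-- The part of the GCD sum `∑ gcd(n_k, n_l) / max(n_k, n_l)` that comes from the elements `n_l`
below a given `n_k`. -/
def gcdSumBelow (hn : Function.Injective n) (k : ι) : ℝ :=
  ∑ l ∈ indicesBelow hn k, ((n k).gcd (n l) : ℝ) / n k

variable {f : ℝ → ℝ}

lemma intervalIntegrable_of_boundedVariationOn {a b : ℝ}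
    (hf : BoundedVariationOn f (Set.uIcc a b)) : IntervalIntegrable f volume a b := by
  obtain ⟨p, q, hp, hq, rfl⟩ := hf.locallyBoundedVariationOn.exists_monotoneOn_sub_monotoneOn
  exact hp.intervalIntegrable.sub hq.intervalIntegrable

lemma integral_sq_sum_comp_mul (hn : Function.Injective n) (hn_pos : ∀ k, 0 < n k)
    (hf_per : Function.Periodic f 1) (hf : ∀ s t, IntervalIntegrable f volume s t) {K : ℝ}
    (hK : ∀ x, |f x| ≤ K) (s : Finset ι) :
    ∫ x in (0 : ℝ)..1, (∑ k ∈ s, f (n k * x)) ^ 2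
      = (∫ x in (0 : ℝ)..1, f x ^ 2) * s.card
        + 2 * ∑ k ∈ s, ∑ l ∈ s with n l < n k, ∫ x in (0 : ℝ)..1, f (n k * x) * f (n l * x) := by
  have hprod : ∀ a b s t : ℝ, IntervalIntegrable (fun x => f (a * x) * f (b * x)) volume s t :=
    intervalIntegrable_comp_mul_smul hf hf hK
  have hsq : ∀ s t, IntervalIntegrable (fun x => f x ^ 2) volume s t := fun s t => by
    simpa only [one_mul, ← sq] using hprod 1 1 s t
  have hsq_mul : ∀ a : ℕ, IntervalIntegrable (fun x => f (a * x) ^ 2) volume 0 1 := fun a =>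
    intervalIntegrable_comp_mul hsq a 0 1
  have hdiag : ∀ k, ∫ x in (0 : ℝ)..1, f (n k * x) ^ 2 = ∫ x in (0 : ℝ)..1, f x ^ 2 := fun k =>
    integral_comp_natCast_mul_of_periodic (hf_per.comp (· ^ 2)) hsq (hn_pos k).ne'
  have hrow : ∀ k, IntervalIntegrable
      (fun x => ∑ l ∈ s with n l < n k, f (n k * x) * f (n l * x)) volume 0 1 := fun k => by
    simpa only [Finset.sum_fn] using IntervalIntegrable.sum _ fun l _ => hprod (n k) (n l) 0 1
  simp only [sq_sum_eq_sum_sq_add_two_mul_sum_lt hn]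
  rw [intervalIntegral.integral_add, intervalIntegral.integral_const_mul,
    intervalIntegral.integral_finsetSum fun k _ => hsq_mul (n k),
    intervalIntegral.integral_finsetSum fun k _ => hrow k]
  · simp only [hdiag, Finset.sum_const, nsmul_eq_mul, mul_comm (s.card : ℝ)]
    congr! 3 with k
    exact intervalIntegral.integral_finsetSum fun l _ => hprod (n k) (n l) 0 1
  · simpa only [Finset.sum_fn] using IntervalIntegrable.sum _ fun k _ => hsq_mul (n k)
  · refine IntervalIntegrable.const_mul ?_ 2
    simpa only [Finset.sum_fn] using IntervalIntegrable.sum _ fun k _ => hrow k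

theorem abs_integral_sq_sum_comp_mul_sub_le (hn : Function.Injective n) (hn_pos : ∀ k, 0 < n k)
    (hf_per : Function.Periodic f 1) (hf_mean : ∫ x in (0 : ℝ)..1, f x = 0)
    (hf_bv : BoundedVariationOn f (Set.Icc 0 1)) (s : Finset ι) :
    |(∫ x in (0 : ℝ)..1, (∑ k ∈ s, f (n k * x)) ^ 2) - (∫ x in (0 : ℝ)..1, f x ^ 2) * s.card|
      ≤ 2 * ((∫ x in (0 : ℝ)..1, |f x|) * (eVariationOn f (Set.Icc 0 1)).toReal)
        * ∑ k ∈ s, gcdSumBelow hn k := by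
  set C := (∫ x in (0 : ℝ)..1, |f x|) * (eVariationOn f (Set.Icc 0 1)).toReal
  have hC : 0 ≤ C := mul_nonneg
    (intervalIntegral.integral_nonneg zero_le_one fun x _ => abs_nonneg _) ENNReal.toReal_nonneg
  have hf : ∀ s t, IntervalIntegrable f volume s t := hf_per.intervalIntegrable₀ one_ne_zero
    (intervalIntegrable_of_boundedVariationOn (by rwa [Set.uIcc_of_le zero_le_one]))
  have hrow : ∀ k, |∑ l ∈ s with n l < n k, ∫ x in (0 : ℝ)..1, f (n k * x) * f (n l * x)|
      ≤ C * gcdSumBelow hn k := fun k => by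
    rw [gcdSumBelow, Finset.mul_sum]
    refine (Finset.abs_sum_le_sum_abs _ _).trans
      ((Finset.sum_le_sum fun l _ => ?_).trans (Finset.sum_le_sum_of_subset_of_nonneg
        (fun l hl => mem_indicesBelow.2 (Finset.mem_filter.1 hl).2) fun l _ _ => by positivity))
    rw [mul_comm C]
    exact norm_integral_comp_mul_smul_le_gcd_div hf_per hf hf_per hf hf_mean hf_bv (hn_pos k) (n l)
  rw [integral_sq_sum_comp_mul hn hn_pos hf_per hf
    (norm_le_eVariationOn_of_integral_eq_zero hf_per hf hf_mean hf_bv), add_sub_cancel_left,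
    abs_mul, abs_two, mul_assoc, Finset.mul_sum]
  gcongr
  exact (Finset.abs_sum_le_sum_abs _ _).trans (Finset.sum_le_sum fun k _ => hrow k)

theorem tendsto_integral_sq_sum_comp_mul_div {n : ℕ → ℕ} (hn : Function.Injective n)
    (hn_pos : ∀ k, 0 < n k) (hgcd : Tendsto (gcdSumBelow hn) atTop (𝓝 0))
    (hf_per : Function.Periodic f 1) (hf_mean : ∫ x in (0 : ℝ)..1, f x = 0)
    (hf_bv : BoundedVariationOn f (Set.Icc 0 1)) :
    Tendsto (fun N : ℕ => (∫ x in (0 : ℝ)..1, (∑ k ∈ Finset.range N, f (n k * x)) ^ 2) / N)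
      atTop (𝓝 (∫ x in (0 : ℝ)..1, f x ^ 2)) := by
  set C := 2 * ((∫ x in (0 : ℝ)..1, |f x|) * (eVariationOn f (Set.Icc 0 1)).toReal) with hC
  have hmean : Tendsto (fun N : ℕ => C * ((N : ℝ)⁻¹ * ∑ k ∈ Finset.range N, gcdSumBelow hn k))
      atTop (𝓝 0) := by
    simpa using hgcd.cesaro.const_mul C
  rw [tendsto_iff_norm_sub_tendsto_zero]
  refine squeeze_zero' (Eventually.of_forall fun _ => norm_nonneg _) ?_ hmean
  filter_upwards [eventually_gt_atTop 0] with N hN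
  have hN' : (0 : ℝ) < N := by exact_mod_cast hN
  have hbound := abs_integral_sq_sum_comp_mul_sub_le hn hn_pos hf_per hf_mean hf_bv
    (Finset.range N)
  rw [Finset.card_range, ← hC] at hbound
  rw [Real.norm_eq_abs, div_sub' hN'.ne', abs_div, abs_of_pos hN', div_le_iff₀ hN',
    mul_comm (N : ℝ)]
  refine hbound.trans_eq ?_
  field_simp

end GcdSums

section ConditionA

variable {ω : ℕ → ℝ} {n : ℕ → ℕ}

lemma not_amongSmallest_card_indicesBelow (hn : Function.Injective n) (k : ℕ) :
    ¬ AmongSmallest n (indicesBelow hn k).card k := by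
  have hset : {j : ℕ | n j ≤ n k} = insert k (indicesBelow hn k : Set ℕ) := by
    ext j
    simp [mem_indicesBelow, le_iff_eq_or_lt, hn.eq_iff]
  have hk : k ∉ (indicesBelow hn k : Set ℕ) := fun h => (mem_indicesBelow.1 h).false
  rw [AmongSmallest, hset, Set.ncard_insert_of_notMem hk, Set.ncard_coe_finset]
  exact Nat.not_succ_le_self _

lemma CondAWith.rpow_lt_of_mul_eq_mul {N₀ M : ℕ} (hA : CondAWith ω n N₀) (hM : N₀ ≤ M)
    (hω : 2 ≤ ω M) {k l : ℕ} (hkl : k ≠ l) (hk : ¬ AmongSmallest n M k) {a b : ℕ} (hb : 0 < b)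
    (hba : b ≤ a) (hrel : b * n k = a * n l) : (M : ℝ) ^ ω M < a := by
  by_contra! ha_le
  have hb_le : (b : ℝ) ≤ (M : ℝ) ^ ω M := (Nat.cast_le.2 hba).trans ha_le
  have hrel' : (b : ℤ) * n k = a * n l := by exact_mod_cast hrel
  exact hk <| hA M hM 2 ![k, l] ![(b : ℤ), -(a : ℤ)] le_rfl (by exact_mod_cast hω)
    (by simpa [Function.Injective, Fin.forall_fin_two] using ⟨hkl, hkl.symm⟩)
    (by simpa [Fin.forall_fin_two] using ⟨hb.ne', (hb.trans_le hba).ne'⟩)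
    (by simpa [Fin.forall_fin_two] using ⟨hb_le, ha_le⟩)
    (by simp [Fin.sum_univ_two, hrel']) 0

lemma CondAWith.gcd_div_le_one_div_sq_card {N₀ : ℕ} (hA : CondAWith ω n N₀)
    (hn : Function.Injective n) {k l : ℕ} (hN₀ : N₀ ≤ (indicesBelow hn k).card)
    (hω : 2 ≤ ω (indicesBelow hn k).card) (hl : 0 < n l) (hlk : n l < n k) :
    ((n k).gcd (n l) : ℝ) / n k ≤ 1 / ((indicesBelow hn k).card : ℝ) ^ 2 := by
  have hM : 0 < (indicesBelow hn k).card := Finset.card_pos.2 ⟨l, mem_indicesBelow.2 hlk⟩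
  have hnot := not_amongSmallest_card_indicesBelow hn k
  set M := (indicesBelow hn k).card
  obtain ⟨d, a, b, hd, hab, hka, hlb⟩ :=
    Nat.exists_coprime' (Nat.gcd_pos_of_pos_right (n k) hl)
  have hb : 0 < b := Nat.pos_of_mul_pos_right (hlb ▸ hl)
  have hba : b < a := by
    rw [hka, hlb] at hlk
    exact Nat.lt_of_mul_lt_mul_right hlk
  have hrel : b * n k = a * n l := by
    rw [hka, hlb]
    ring
  have hsq : (M : ℝ) ^ 2 ≤ a := by
    rw [← Real.rpow_two]
    exact (Real.rpow_le_rpow_of_exponent_le (by exact_mod_cast hM) hω).trans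
      (hA.rpow_lt_of_mul_eq_mul hN₀ hω (ne_of_apply_ne n hlk.ne') hnot hb hba.le hrel).le
  rw [hka, hlb, natCast_gcd_mul_right_div_mul hab hd.ne']
  gcongr

theorem CondA.tendsto_gcdSumBelow (hA : CondA ω n) (hω : ∀ᶠ N in atTop, 2 ≤ ω N)
    (hn : Function.Injective n) (hn_pos : ∀ k, 0 < n k) :
    Tendsto (gcdSumBelow hn) atTop (𝓝 0) := by
  obtain ⟨N₀, hA⟩ := hA
  have hrank := (card_indicesBelow_injective hn).nat_tendsto_atTop
  refine squeeze_zero' (Eventually.of_forall fun k => Finset.sum_nonneg fun l _ => by positivity)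
    ?_ (tendsto_one_div_atTop_nhds_zero_nat.comp hrank)
  filter_upwards [hrank.eventually_ge_atTop N₀, hrank.eventually hω] with k hk hωk
  calc gcdSumBelow hn k
      ≤ (indicesBelow hn k).card • (1 / ((indicesBelow hn k).card : ℝ) ^ 2) :=
        Finset.sum_le_card_nsmul _ _ _ fun l hl =>
          hA.gcd_div_le_one_div_sq_card hn hk hωk (hn_pos l) (mem_indicesBelow.1 hl)
    _ = 1 / ((indicesBelow hn k).card : ℝ) := by
        rw [nsmul_eq_mul]
        field_simp

end ConditionA

theorem statement8_general {ω : ℕ → ℝ} (hω : ∀ᶠ N in atTop, 2 ≤ ω N) {n : ℕ → ℕ}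
    (hn_pos : ∀ k, 0 < n k) (hn_inj : Function.Injective n) (hA : CondA ω n) {f : ℝ → ℝ}
    (hf_per : ∀ x, f (x + 1) = f x) (hf_int : ∫ x in (0 : ℝ)..1, f x = 0)
    (hf_bv : BoundedVariationOn f (Set.Icc 0 1)) :
    Tendsto (fun N : ℕ => (∫ x in (0 : ℝ)..1, (∑ k ∈ Finset.range N, f (n k * x)) ^ 2) / N)
      atTop (𝓝 (∫ x in (0 : ℝ)..1, f x ^ 2)) :=
  tendsto_integral_sq_sum_comp_mul_div hn_inj hn_pos (hA.tendsto_gcdSumBelow hω hn_inj hn_pos)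
    hf_per hf_int hf_bv

/-- Lemma 2 of the paper: under Condition `A_ω`,
`∫₀¹ (∑_{k<N} f(n_k x))² dx ∼ ‖f‖² N` as `N → ∞`; that is, the ratio tends to `1` when
`‖f‖ > 0`, and the left-hand side is `o(N)` when `‖f‖ = 0`. -/
theorem statement8
    (ω : ℕ → ℝ) (hω_pos : ∀ k, 0 < ω k) (hω_mono : Monotone ω)
    (hω_top : Tendsto ω atTop atTop)
    (n : ℕ → ℕ) (hn_pos : ∀ k, 0 < n k) (hn_inj : Function.Injective n)
    (hA : CondA ω n)
    (f : ℝ → ℝ) (hf_meas : Measurable f)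
    (hf_per : ∀ x, f (x + 1) = f x)
    (hf_int : ∫ x in (0:ℝ)..1, f x = 0)
    (hf_bv : BoundedVariationOn f (Set.Icc 0 1)) :
    ((0 : ℝ) < ∫ x in (0:ℝ)..1, f x ^ 2 →
      Tendsto (fun N : ℕ =>
          (∫ x in (0:ℝ)..1, (∑ k ∈ Finset.range N, f (n k * x)) ^ 2) /
            ((∫ x in (0:ℝ)..1, f x ^ 2) * N))
        atTop (𝓝 1)) ∧
    ((∫ x in (0:ℝ)..1, f x ^ 2) = 0 →
      Tendsto (fun N : ℕ =>
          (∫ x in (0:ℝ)..1, (∑ k ∈ Finset.range N, f (n k * x)) ^ 2) / N)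
        atTop (𝓝 0)) := by
  have hlim :=
    statement8_general (hω_top.eventually_ge_atTop 2) hn_pos hn_inj hA hf_per hf_int hf_bv
  refine ⟨fun hF => ?_, fun hF => by rwa [hF] at hlim⟩
  have hratio := hlim.div_const (∫ x in (0:ℝ)..1, f x ^ 2)
  rw [div_self hF.ne'] at hratio
  simpa only [div_div, mul_comm] using hratio
end
end

section
/- There exists a strictly increasing sequence (μ_k) of positive integers — namely the increasing enumeration of ∪_{j≥1} {m_j, 2m_j, …, r_j m_j}, where each m_j is a power of 2, m_{j+1} ≥ r_j 2^{2j} m_j, and r_j ∼ j log j — such that limsup_{N→∞} | Σ_{k=1}^N cos(2π μ_k x) | / √(N log N) > 0 for Lebesgue-almost every x ∈ (0,1); in particular, limsup_{N→∞} | Σ_{k=1}^N cos(2π μ_k x) | / √(2N log log N) = +∞ almost everywhere. -/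
/-!
Let `m` be a sequence of positive integers in which each term divides the next, and let `q_j` be
the quotient `m_{j+1} / m_j`. Under Lebesgue measure on `[0, 1)`, the integer and fractional parts
`⌊m_j x⌋` and `{m_j x}` are independent and the latter is uniform. For an integer `p_j ≤ q_j`,
whether `{m_j x} < p_j / q_j` can be read off `⌊m_{j+1} x⌋`, so these events are independent. If
`q_j ≥ 6 r_j`, then `p_j = ⌊q_j / (6 r_j)⌋` gives probability at least `1 / (12 r_j)`. Since
`∑ 1 / (j log j)` diverges, the second Borel–Cantelli lemma shows that almost every `x` satisfies
`r_j {m_j x} ≤ 1 / 6` for infinitely many `j`.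

For such `j` every `cos (2π i m_j x)` with `1 ≤ i ≤ r_j` is at least `1 / 2`. The partial sum thus
moves by at least `r_j / 2` across the `j`-th block, and is at least `r_j / 4` in absolute value at
one of its two ends. The number `N` of frequencies up to there is `O(j² log j)`, whence
`√(N log N) = O(j log j) = O(r_j)`.
-/

open MeasureTheory Filter Real Topology

noncomputable section

open ProbabilityTheory Asymptotics

/-! ### Small fractional parts along a divisibility chain -/

theorem iIndepSet_of_indep_filtration {Ω : Type*} {mΩ : MeasurableSpace Ω} {P : Measure Ω}
    [IsProbabilityMeasure P] (ℱ : Filtration ℕ mΩ) {E : ℕ → Set Ω}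
    (hE : ∀ j, MeasurableSet[ℱ (j + 1)] (E j))
    (hindep : ∀ j A, MeasurableSet[ℱ j] A → P (A ∩ E j) = P A * P (E j)) :
    iIndepSet E P := by
  rw [iIndepSet_iff_meas_biInter fun j => ℱ.le _ _ (hE j)]
  intro s
  induction s using Finset.induction_on_max with
  | empty => simp
  | insert n s hlt ih =>
    have hpast : MeasurableSet[ℱ n] (⋂ i ∈ s, E i) :=
      Finset.measurableSet_biInter s fun i hi => ℱ.mono (hlt i hi) _ (hE i)
    rw [Finset.set_biInter_insert, Set.inter_comm, hindep n _ hpast, ih,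
      Finset.prod_insert fun hn => (hlt n hn).false, mul_comm]

/-- Lebesgue measure on `[0, 1)`, as a probability measure on `ℝ`. -/
abbrev unitMeasure : Measure ℝ := volume.restrict (Set.Ico 0 1)

instance : IsProbabilityMeasure unitMeasure := ⟨by simp⟩

theorem volume_floor_mul_eq_and_fract_mul_mem {c : ℝ} (hc : 0 < c) (l : ℤ) (A : Set ℝ) :
    volume {x : ℝ | ⌊c * x⌋ = l ∧ Int.fract (c * x) ∈ A} =
      ENNReal.ofReal c⁻¹ * unitMeasure A := by
  have hset : {x : ℝ | ⌊c * x⌋ = l ∧ Int.fract (c * x) ∈ A} =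
      (c * ·) ⁻¹' ((· + -(l : ℝ)) ⁻¹' (A ∩ Set.Ico 0 1)) := by
    ext x
    simp only [Set.mem_ofPred_eq, Set.mem_preimage, Set.mem_inter_iff, Set.mem_Ico, Int.fract,
      Int.floor_eq_iff, ← sub_eq_add_neg, sub_nonneg, sub_lt_iff_lt_add']
    constructor
    · rintro ⟨h, hA⟩
      rw [Int.floor_eq_iff.2 h] at hA
      exact ⟨hA, h⟩
    · rintro ⟨hA, h⟩
      rw [Int.floor_eq_iff.2 h]
      exact ⟨h, hA⟩
  rw [hset, Real.volume_preimage_mul_left hc.ne', measure_preimage_add_right,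
    abs_of_pos (inv_pos.2 hc), Measure.restrict_apply' measurableSet_Ico]

section FloorFract

variable {n : ℕ} (hn : 0 < n)
include hn

open Classical in
theorem unitMeasure_floor_mul_mem_and_fract_mul_mem (S : Set ℤ) {A : Set ℝ}
    (hA : MeasurableSet A) :
    unitMeasure {x | ⌊(n : ℝ) * x⌋ ∈ S ∧ Int.fract ((n : ℝ) * x) ∈ A} =
      {l ∈ Finset.Ico (0 : ℤ) n | l ∈ S}.card * ENNReal.ofReal (n : ℝ)⁻¹ * unitMeasure A := by
  have hn' : (0 : ℝ) < n := by exact_mod_cast hn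
  have hfloor {x : ℝ} : x ∈ Set.Ico 0 1 ↔ ⌊(n : ℝ) * x⌋ ∈ Finset.Ico (0 : ℤ) n := by
    rw [Finset.mem_Ico, Int.floor_nonneg, Int.floor_lt, Int.cast_natCast, Set.mem_Ico,
      mul_nonneg_iff_of_pos_left hn', mul_lt_iff_lt_one_right hn']
  have hunion : {x | ⌊(n : ℝ) * x⌋ ∈ S ∧ Int.fract ((n : ℝ) * x) ∈ A} ∩ Set.Ico 0 1 =
      ⋃ l ∈ {l ∈ Finset.Ico (0 : ℤ) n | l ∈ S},
        {x : ℝ | ⌊(n : ℝ) * x⌋ = l ∧ Int.fract ((n : ℝ) * x) ∈ A} := by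
    ext x
    simp only [Set.mem_inter_iff, hfloor, Set.mem_iUnion, Finset.mem_filter, exists_prop,
      Set.mem_ofPred_eq]
    grind
  rw [Measure.restrict_apply' measurableSet_Ico, hunion, measure_biUnion_finset]
  · simp only [volume_floor_mul_eq_and_fract_mul_mem hn', Finset.sum_const, nsmul_eq_mul, mul_assoc]
  · intro l _ l' _ hne
    refine Set.disjoint_left.2 fun x hx hx' => hne ?_
    exact hx.1.symm.trans hx'.1
  · intro l _
    have hmul : Measurable fun x : ℝ => (n : ℝ) * x := measurable_const_mul _
    exact (hmul.floor (measurableSet_singleton l)).inter (hmul.fract hA)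

theorem measurePreserving_fract_mul :
    MeasurePreserving (fun x : ℝ => Int.fract (n * x)) unitMeasure unitMeasure := by
  refine ⟨(measurable_const_mul _).fract, Measure.ext fun A hA => ?_⟩
  rw [Measure.map_apply (measurable_const_mul _).fract hA]
  have h := unitMeasure_floor_mul_mem_and_fract_mul_mem hn Set.univ hA
  have hn' : (0 : ℝ) < n := by exact_mod_cast hn
  have hcard : (n : ENNReal) * ENNReal.ofReal (n : ℝ)⁻¹ = 1 := by
    rw [ENNReal.ofReal_inv_of_pos hn', ENNReal.ofReal_natCast,
      ENNReal.mul_inv_cancel (by exact_mod_cast hn.ne') (ENNReal.natCast_ne_top n)]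
  simpa only [Set.preimage, Set.mem_univ, true_and, Finset.filter_true, Int.card_Ico, sub_zero,
    Int.toNat_natCast, hcard, one_mul] using h

theorem indepFun_floor_mul_fract_mul :
    IndepFun (fun x : ℝ => ⌊(n : ℝ) * x⌋) (fun x => Int.fract (n * x)) unitMeasure := by
  rw [indepFun_iff_measure_inter_preimage_eq_mul]
  intro S A _ hA
  have hfloor := unitMeasure_floor_mul_mem_and_fract_mul_mem hn S MeasurableSet.univ
  simp only [Set.mem_univ, and_true, measure_univ, mul_one] at hfloor
  rw [(measurePreserving_fract_mul hn).measure_preimage hA.nullMeasurableSet]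
  exact (unitMeasure_floor_mul_mem_and_fract_mul_mem hn S hA).trans
    (congrArg (· * unitMeasure A) hfloor.symm)

end FloorFract

theorem fract_lt_div_iff_floor_mul_emod_lt {p q : ℕ} (hq : 0 < q) (y : ℝ) :
    Int.fract y < p / q ↔ ⌊(q : ℝ) * y⌋ % q < p := by
  have hq' : (0 : ℝ) < q := by exact_mod_cast hq
  have hsplit : (q : ℝ) * y = q * Int.fract y + (q * ⌊y⌋ : ℤ) := by
    push_cast
    rw [← mul_add, Int.fract_add_floor]
  have hnonneg : 0 ≤ ⌊(q : ℝ) * Int.fract y⌋ :=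
    Int.floor_nonneg.2 (mul_nonneg hq'.le (Int.fract_nonneg y))
  have hlt : ⌊(q : ℝ) * Int.fract y⌋ < q := by
    rw [Int.floor_lt, Int.cast_natCast, mul_lt_iff_lt_one_right hq']
    exact Int.fract_lt_one y
  rw [hsplit, Int.floor_add_intCast, Int.add_mul_emod_self_left, Int.emod_eq_of_lt hnonneg hlt,
    Int.floor_lt, Int.cast_natCast, lt_div_iff₀' hq']

section Windows

variable {m p q : ℕ → ℕ}

/-- The filtration whose `j`-th σ-algebra is generated by `x ↦ ⌊m j * x⌋`, that is, by the partition
of `ℝ` into intervals of length `1 / m j`. It increases because each `m j` divides the next. -/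
def floorFiltration (m : ℕ → ℕ) (hpos : ∀ j, 0 < m j) (hdvd : ∀ j, m j ∣ m (j + 1)) :
    Filtration ℕ (borel ℝ) where
  seq j := MeasurableSpace.comap (fun x : ℝ => ⌊(m j : ℝ) * x⌋) ⊤
  mono' := by
    refine monotone_nat_of_le_succ fun j => ?_
    obtain ⟨q, hq⟩ := hdvd j
    have hq0 : q ≠ 0 := by rintro rfl; simpa [hq] using hpos (j + 1)
    have hquot (x : ℝ) : ⌊(m j : ℝ) * x⌋ = ⌊(m (j + 1) : ℝ) * x⌋ / q := by
      rw [← Int.natCast_mul_floor_div_cancel hq0, hq]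
      push_cast
      ring_nf
    rintro _ ⟨S, -, rfl⟩
    refine ⟨(· / (q : ℤ)) ⁻¹' S, trivial, ?_⟩
    ext x
    simp only [Set.mem_preimage, hquot]
  le' j := by
    rw [← BorelSpace.measurable_eq (α := ℝ)]
    exact ((measurable_const_mul (m j : ℝ)).floor).comap_le

theorem unitMeasure_Iio {t : ℝ} (ht : t ≤ 1) : unitMeasure (Set.Iio t) = ENNReal.ofReal t := by
  rw [Measure.restrict_apply measurableSet_Iio, Set.inter_comm, Set.Ico_inter_Iio,
    min_eq_right ht, Real.volume_Ico, sub_zero]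

theorem unitMeasure_fract_mul_lt {n : ℕ} (hn : 0 < n) {t : ℝ} (ht : t ≤ 1) :
    unitMeasure {x | Int.fract ((n : ℝ) * x) < t} = ENNReal.ofReal t :=
  ((measurePreserving_fract_mul hn).measure_preimage
    measurableSet_Iio.nullMeasurableSet).trans (unitMeasure_Iio ht)

theorem tsum_ofReal_eq_top_of_not_summable {ι : Type*} {f : ι → ℝ}
    (hf : ∀ j, 0 ≤ f j) (h : ¬ Summable f) : ∑' j, ENNReal.ofReal (f j) = ⊤ := by
  contrapose! h
  simpa only [ENNReal.toReal_ofReal (hf _)] using ENNReal.summable_toReal h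

theorem measurableSet_floorFiltration_fract_mul_lt (hpos : ∀ j, 0 < m j)
    (hm : ∀ j, m (j + 1) = m j * q j) (j : ℕ) :
    MeasurableSet[floorFiltration m hpos (fun j => ⟨q j, hm j⟩) (j + 1)]
      {x | Int.fract ((m j : ℝ) * x) < p j / q j} := by
  have hq : 0 < q j := Nat.pos_of_mul_pos_left (hm j ▸ hpos (j + 1))
  refine ⟨{l | l % q j < p j}, trivial, ?_⟩
  ext x
  have h := fract_lt_div_iff_floor_mul_emod_lt (p := p j) hq (m j * x)
  rw [← mul_assoc, mul_comm (q j : ℝ), ← Nat.cast_mul, ← hm] at h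
  exact h.symm

theorem iIndepSet_fract_mul_lt (hpos : ∀ j, 0 < m j) (hm : ∀ j, m (j + 1) = m j * q j) :
    iIndepSet (fun j => {x | Int.fract ((m j : ℝ) * x) < p j / q j}) unitMeasure := by
  refine iIndepSet_of_indep_filtration (P := unitMeasure) _
    (measurableSet_floorFiltration_fract_mul_lt hpos hm) ?_
  rintro j _ ⟨S, -, rfl⟩
  exact (indepFun_floor_mul_fract_mul (hpos j)).measure_inter_preimage_eq_mul S
    (Set.Iio (p j / q j : ℝ)) trivial measurableSet_Iio

theorem ae_frequently_fract_mul_lt (hpos : ∀ j, 0 < m j) (hm : ∀ j, m (j + 1) = m j * q j)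
    (hpq : ∀ j, p j ≤ q j) (hdiv : ¬ Summable fun j => (p j / q j : ℝ)) :
    ∀ᵐ x ∂unitMeasure, ∃ᶠ j in atTop, Int.fract ((m j : ℝ) * x) < p j / q j := by
  have hmeas (j : ℕ) : MeasurableSet {x | Int.fract ((m j : ℝ) * x) < p j / q j} :=
    (measurable_const_mul _).fract measurableSet_Iio
  have hprob (j : ℕ) := unitMeasure_fract_mul_lt (hpos j)
    (div_le_one_of_le₀ (Nat.cast_le.2 (hpq j)) (Nat.cast_nonneg (q j)) : (p j / q j : ℝ) ≤ 1)
  have hsum : ∑' j, unitMeasure {x | Int.fract ((m j : ℝ) * x) < p j / q j} = ⊤ := by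
    simp only [hprob]
    exact tsum_ofReal_eq_top_of_not_summable (fun j => by positivity) hdiv
  have hone := measure_limsup_eq_one hmeas (iIndepSet_fract_mul_lt hpos hm) hsum
  rw [← prob_compl_eq_zero_iff (MeasurableSet.measurableSet_limsup hmeas)] at hone
  filter_upwards [measure_eq_zero_iff_ae_notMem.1 hone] with x hx
  exact mem_limsup_iff_frequently_mem.1 (not_not.1 hx)

end Windows

theorem inv_two_mul_le_natDiv_div {d q : ℕ} (h : d ≤ q) :
    (2 * (d : ℝ))⁻¹ ≤ (q / d : ℕ) / (q : ℝ) := by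
  rcases d.eq_zero_or_pos with rfl | hd
  · simp
  have hq : 0 < q := hd.trans_le h
  have hlt : q ≤ 2 * d * (q / d) := by
    nlinarith [Nat.div_add_mod q d, Nat.mod_lt q hd, Nat.div_pos h hd]
  rw [inv_le_iff_one_le_mul₀ (by positivity), ← mul_div_right_comm, one_le_div (by positivity)]
  exact_mod_cast (hlt.trans_eq (mul_comm _ _))

theorem mul_natDiv_div_le_one (d q : ℕ) : (d : ℝ) * ((q / d : ℕ) / (q : ℝ)) ≤ 1 := by
  rw [← mul_div_assoc]
  exact div_le_one_of_le₀ (by exact_mod_cast Nat.mul_div_le q d) q.cast_nonneg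

theorem ae_frequently_natCast_mul_fract_le_one {m d : ℕ → ℕ} (hpos : ∀ j, 0 < m j)
    (hdvd : ∀ j, m j ∣ m (j + 1)) (hgap : ∀ᶠ j in atTop, d j * m j ≤ m (j + 1))
    (hd : ¬ Summable fun j => (d j : ℝ)⁻¹) :
    ∀ᵐ x ∂unitMeasure, ∃ᶠ j in atTop, d j * Int.fract ((m j : ℝ) * x) ≤ 1 := by
  choose q hq using hdvd
  have hdiv : ¬ Summable fun j => ((q j / d j : ℕ) : ℝ) / q j := by
    contrapose! hd
    refine (hd.mul_left 2).of_norm_bounded_eventually_nat ?_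
    filter_upwards [hgap] with j hj
    have hle : d j ≤ q j := by
      rw [hq, mul_comm] at hj
      exact Nat.le_of_mul_le_mul_left hj (hpos j)
    have h := inv_two_mul_le_natDiv_div hle
    rw [mul_inv, inv_mul_le_iff₀ two_pos] at h
    rwa [Real.norm_of_nonneg (by positivity)]
  filter_upwards [ae_frequently_fract_mul_lt hpos hq (fun j => Nat.div_le_self (q j) (d j)) hdiv]
    with x hx
  exact hx.mono fun j hj => (mul_le_mul_of_nonneg_left hj.le (d j).cast_nonneg).trans
    (mul_natDiv_div_le_one (d j) (q j))

/-! ### Sums over the blocks -/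

theorem half_le_cos_of_mul_fract_le {i : ℕ} {y : ℝ} (h : i * Int.fract y ≤ 1 / 6) :
    1 / 2 ≤ Real.cos (2 * π * (i * y)) := by
  have hperiod : Real.cos (2 * π * (i * y)) = Real.cos (2 * π * (i * Int.fract y)) := by
    rw [← Real.cos_add_int_mul_two_pi (2 * π * (i * Int.fract y)) (i * ⌊y⌋)]
    conv_lhs => rw [← Int.fract_add_floor y]
    push_cast
    ring_nf
  have hnonneg : 0 ≤ i * Int.fract y := mul_nonneg i.cast_nonneg (Int.fract_nonneg y)
  rw [hperiod, ← Real.cos_pi_div_three]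
  apply Real.cos_le_cos_of_nonneg_of_le_pi <;> nlinarith [Real.pi_pos]

theorem div_two_le_sum_cos_of_mul_fract_le {r : ℕ} {y : ℝ} (h : r * Int.fract y ≤ 1 / 6) :
    r / 2 ≤ ∑ i ∈ Finset.Icc 1 r, Real.cos (2 * π * (i * y)) := by
  have hterm (i : ℕ) (hi : i ∈ Finset.Icc 1 r) : 1 / 2 ≤ Real.cos (2 * π * (i * y)) := by
    have hir : (i : ℝ) ≤ r := Nat.cast_le.2 (Finset.mem_Icc.1 hi).2
    exact half_le_cos_of_mul_fract_le
      ((mul_le_mul_of_nonneg_right hir (Int.fract_nonneg y)).trans h)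
  have hsum := Finset.card_nsmul_le_sum _ _ _ hterm
  rwa [Nat.card_Icc, Nat.add_sub_cancel, nsmul_eq_mul, mul_one_div] at hsum

theorem sum_nth_range_count {M : Type*} [AddCommMonoid M] (p : ℕ → Prop) [DecidablePred p]
    (f : ℕ → M) (n : ℕ) :
    ∑ k ∈ Finset.range (Nat.count p n), f (Nat.nth p k) = ∑ v ∈ Finset.range n with p v, f v := by
  induction n with
  | zero => simp
  | succ n ih =>
    rw [Finset.range_add_one, Finset.filter_insert, Nat.count_succ]
    split_ifs with hn
    · rw [Finset.sum_range_succ, ih, Nat.nth_count hn, Finset.sum_insert (by simp), add_comm]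
    · rw [add_zero, ih]

/-- The union `⋃ j, {m j, 2 * m j, …, r j * m j}` of the blocks. Blocks are indexed from `j = 0`;
the choice `r 0 = 0` starts the union at `j = 1`. -/
def blockSet (m r : ℕ → ℕ) : Set ℕ := ⋃ j, (· * m j) '' Set.Icc 1 (r j)

theorem mem_blockSet {m r : ℕ → ℕ} {v : ℕ} :
    v ∈ blockSet m r ↔ ∃ j, ∃ i, 1 ≤ i ∧ i ≤ r j ∧ v = i * m j := by
  simp only [blockSet, Set.mem_iUnion, Set.mem_image, Set.mem_Icc, and_assoc, eq_comm]

/-- The number `r 0 + ⋯ + r (n - 1)` of frequencies in the blocks before the `n`-th one. -/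
def blockCount (r : ℕ → ℕ) (n : ℕ) : ℕ := ∑ j ∈ Finset.range n, r j

section Block

variable {m r : ℕ → ℕ} (hmono : Monotone m) (hsep : ∀ j, r j * m j < m (j + 1))

include hmono hsep in
theorem mem_blockSet_iff_of_mem_Ico {n v : ℕ} (hv : v ∈ Finset.Ico (m n) (m (n + 1))) :
    v ∈ blockSet m r ↔ v ∈ (Finset.Icc 1 (r n)).image (· * m n) := by
  simp only [mem_blockSet, Finset.mem_image, Finset.mem_Icc, Finset.mem_Ico] at hv ⊢
  constructor
  · rintro ⟨j, i, hi, hir, rfl⟩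
    obtain hjn | rfl | hnj := lt_trichotomy j n
    · have hub := (Nat.mul_le_mul_right (m j) hir).trans_lt (hsep j)
      exact absurd (hub.trans_le (hmono hjn)) hv.1.not_gt
    · exact ⟨i, ⟨hi, hir⟩, rfl⟩
    · have hlb := (hmono hnj).trans (Nat.le_mul_of_pos_left (m j) hi)
      exact absurd hv.2 hlb.not_gt
  · rintro ⟨i, ⟨hi, hir⟩, rfl⟩
    exact ⟨n, i, hi, hir, rfl⟩

open Classical in
include hmono hsep in
theorem filter_mem_blockSet_Ico (n : ℕ) :
    {v ∈ Finset.Ico (m n) (m (n + 1)) | v ∈ blockSet m r} =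
      (Finset.Icc 1 (r n)).image (· * m n) := by
  ext v
  rw [Finset.mem_filter]
  constructor
  · rintro ⟨hv, hB⟩
    exact (mem_blockSet_iff_of_mem_Ico hmono hsep hv).1 hB
  · intro hB
    have hv : v ∈ Finset.Ico (m n) (m (n + 1)) := by
      obtain ⟨i, hi, rfl⟩ := Finset.mem_image.1 hB
      rw [Finset.mem_Icc] at hi
      exact Finset.mem_Ico.2 ⟨Nat.le_mul_of_pos_left _ hi.1,
        (Nat.mul_le_mul_right _ hi.2).trans_lt (hsep n)⟩
    exact ⟨hv, (mem_blockSet_iff_of_mem_Ico hmono hsep hv).2 hB⟩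

variable (hpos : ∀ j, 0 < m j)

open Classical in
include hmono hsep hpos in
theorem sum_filter_mem_blockSet_range {M : Type*} [AddCommMonoid M] (f : ℕ → M) (n : ℕ) :
    ∑ v ∈ Finset.range (m n) with v ∈ blockSet m r, f v =
      ∑ j ∈ Finset.range n, ∑ i ∈ Finset.Icc 1 (r j), f (i * m j) := by
  induction n with
  | zero =>
    refine Finset.sum_eq_zero fun v hv => ?_
    obtain ⟨hv, j, i, hi, -, rfl⟩ := by
      simpa only [Finset.mem_filter, mem_blockSet, Finset.mem_range] using hv
    exact absurd hv ((hmono j.zero_le).trans (Nat.le_mul_of_pos_left _ hi)).not_gt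
  | succ n ih =>
    rw [Finset.sum_range_succ, ← ih, ← Finset.sum_image (g := (· * m n)) (f := f)
      (mul_left_injective₀ (hpos n).ne').injOn, ← filter_mem_blockSet_Ico hmono hsep]
    simp only [Finset.sum_filter]
    exact (Finset.sum_range_add_sum_Ico _ (hmono n.le_succ)).symm

open Classical in
include hmono hsep hpos in
theorem count_mem_blockSet (n : ℕ) : Nat.count (· ∈ blockSet m r) (m n) = blockCount r n := by
  rw [Nat.count_eq_card_filter_range, Finset.card_eq_sum_ones,
    sum_filter_mem_blockSet_range hmono hsep hpos]
  simp [blockCount]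

include hmono hsep hpos in
theorem sum_nth_blockSet {M : Type*} [AddCommMonoid M] (f : ℕ → M) (n : ℕ) :
    ∑ k ∈ Finset.range (blockCount r n), f (Nat.nth (· ∈ blockSet m r) k) =
      ∑ j ∈ Finset.range n, ∑ i ∈ Finset.Icc 1 (r j), f (i * m j) := by
  classical
  rw [← count_mem_blockSet hmono hsep hpos, sum_nth_range_count,
    sum_filter_mem_blockSet_range hmono hsep hpos]

include hmono hsep hpos in
theorem infinite_blockSet (hr : Tendsto (blockCount r) atTop atTop) :
    (blockSet m r).Infinite := by
  classical
  intro hfin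
  obtain ⟨n, hn⟩ := (hr.eventually_gt_atTop hfin.toFinset.card).exists
  rw [← count_mem_blockSet hmono hsep hpos] at hn
  exact hn.not_ge (Nat.count_le_card (p := (· ∈ blockSet m r)) hfin _)

end Block

/-! ### Growth of the number of frequencies -/

theorem isBigO_sum_range_succ {f g : ℕ → ℝ} (hg : Monotone g) (hpos : ∀ n, 0 < g n)
    (hfg : f =O[atTop] g) :
    (fun n => ∑ i ∈ Finset.range (n + 1), f i) =O[atTop] fun n => ((n + 1 : ℕ) : ℝ) * g n := by
  obtain ⟨C, hC, hbound⟩ := bound_of_isBigO_nat_atTop hfg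
  refine .of_bound C (.of_forall fun n => ?_)
  have hterm (i : ℕ) (hi : i ∈ Finset.range (n + 1)) : ‖f i‖ ≤ C * g n := by
    refine (hbound (hpos i).ne').trans ?_
    rw [Real.norm_of_nonneg (hpos i).le]
    exact mul_le_mul_of_nonneg_left (hg (Nat.lt_succ_iff.1 (Finset.mem_range.1 hi))) hC.le
  calc ‖∑ i ∈ Finset.range (n + 1), f i‖ ≤ ∑ _i ∈ Finset.range (n + 1), C * g n :=
        norm_sum_le_of_le _ hterm
    _ = C * ‖((n + 1 : ℕ) : ℝ) * g n‖ := by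
        rw [Finset.sum_const, Finset.card_range, nsmul_eq_mul, mul_left_comm,
          Real.norm_of_nonneg (mul_nonneg (Nat.cast_nonneg _) (hpos n).le)]

theorem isBigO_log_of_isBigO_pow {f : ℕ → ℝ} (hf : ∀ᶠ n in atTop, 1 ≤ f n) {k : ℕ}
    (h : f =O[atTop] fun n => (n : ℝ) ^ k) :
    (fun n => Real.log (f n)) =O[atTop] fun n : ℕ => Real.log n := by
  obtain ⟨C, hC, hbound⟩ := h.exists_pos
  have hlarge := tendsto_natCast_atTop_atTop.eventually_ge_atTop C
  refine .of_bound (1 + k) ?_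
  filter_upwards [hf, hbound.bound, hlarge, eventually_ge_atTop 1] with n h1 hn hCn hn1
  have hn0 : (0 : ℝ) < n := by exact_mod_cast hn1
  rw [Real.norm_of_nonneg (by linarith), Real.norm_of_nonneg (by positivity)] at hn
  rw [Real.norm_of_nonneg (Real.log_nonneg h1), Real.norm_of_nonneg (Real.log_natCast_nonneg n)]
  calc Real.log (f n) ≤ Real.log (C * n ^ k) := Real.log_le_log (by linarith) hn
    _ = Real.log C + k * Real.log n := by
        rw [Real.log_mul hC.ne' (by positivity), Real.log_pow]
    _ ≤ (1 + k) * Real.log n := by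
        rw [add_mul, one_mul]
        gcongr

theorem natCast_mul_log_nonneg (n : ℕ) : 0 ≤ (n : ℝ) * Real.log n :=
  mul_nonneg n.cast_nonneg (Real.log_natCast_nonneg n)

theorem monotone_natCast_mul_log : Monotone fun n : ℕ => (n : ℝ) * Real.log n := by
  intro a b hab
  obtain rfl | ha := a.eq_zero_or_pos
  · simpa only [Nat.cast_zero, zero_mul] using natCast_mul_log_nonneg b
  · have := Real.log_natCast_nonneg a
    dsimp only
    gcongr

theorem tendsto_natCast_mul_log_atTop :
    Tendsto (fun n : ℕ => (n : ℝ) * Real.log n) atTop atTop :=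
  tendsto_natCast_atTop_atTop.atTop_mul_atTop₀
    (Real.tendsto_log_atTop.comp tendsto_natCast_atTop_atTop)

theorem not_summable_inv_natCast_mul_log :
    ¬ Summable fun n : ℕ => ((n : ℝ) * Real.log n)⁻¹ := by
  rw [← summable_condensed_iff_of_eventually_nonneg
    (.of_forall fun n => inv_nonneg.2 (natCast_mul_log_nonneg n))]
  · have hcond (k : ℕ) : (2 : ℝ) ^ k * (((2 ^ k : ℕ) : ℝ) * Real.log (2 ^ k : ℕ))⁻¹ =
        (k : ℝ)⁻¹ * (Real.log 2)⁻¹ := by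
      rw [Nat.cast_pow, Nat.cast_ofNat, Real.log_pow, mul_inv, mul_inv,
        mul_inv_cancel_left₀ (by positivity)]
    simp only [hcond, summable_mul_right_iff (inv_ne_zero (Real.log_pos one_lt_two).ne')]
    exact Real.not_summable_natCast_inv
  · filter_upwards [eventually_gt_atTop 1] with n hn
    have hn1 : (1 : ℝ) < n := by exact_mod_cast hn
    have hlog := Real.log_pos hn1
    push_cast
    gcongr <;> linarith

section BlockAsymptotics

variable {r : ℕ → ℕ} (hr : (fun j => (r j : ℝ)) =Θ[atTop] fun j : ℕ => (j : ℝ) * Real.log j)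
include hr

theorem not_summable_inv_of_isTheta : ¬ Summable fun j => (r j : ℝ)⁻¹ := fun h =>
  not_summable_inv_natCast_mul_log (summable_of_isBigO_nat h hr.inv.symm.isBigO)

theorem tendsto_atTop_of_isTheta : Tendsto (fun j => (r j : ℝ)) atTop atTop := by
  have hnorm := hr.tendsto_norm_atTop_iff.2
    (tendsto_norm_atTop_atTop.comp tendsto_natCast_mul_log_atTop)
  exact hnorm.congr fun j => Real.norm_natCast (r j)

theorem tendsto_blockCount : Tendsto (blockCount r) atTop atTop := by
  have hdiv : ¬ Summable fun j => (r j : ℝ) := fun h =>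
    not_tendsto_nhds_of_tendsto_atTop (tendsto_atTop_of_isTheta hr) 0 h.tendsto_atTop_zero
  rw [← tendsto_natCast_atTop_iff (R := ℝ)]
  simpa only [blockCount, Nat.cast_sum] using
    (not_summable_iff_tendsto_nat_atTop_of_nonneg fun j => (r j).cast_nonneg).1 hdiv

theorem blockCount_succ_isBigO :
    (fun n => (blockCount r (n + 1) : ℝ)) =O[atTop] fun n : ℕ => n ^ 2 * Real.log n := by
  have hone : (fun _ => 1 : ℕ → ℝ) =O[atTop] fun n : ℕ => (n : ℝ) * Real.log n :=
    ((isLittleO_const_left_of_ne one_ne_zero).2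
      (tendsto_norm_atTop_atTop.comp tendsto_natCast_mul_log_atTop)).isBigO
  have hsucc : (fun n : ℕ => ((n + 1 : ℕ) : ℝ)) =O[atTop] fun n : ℕ => (n : ℝ) := by
    refine .of_bound 2 ((eventually_ge_atTop 1).mono fun n hn => ?_)
    rw [Real.norm_natCast, Real.norm_natCast]
    exact_mod_cast (by lia : n + 1 ≤ 2 * n)
  have hadd : (fun j => (r j : ℝ)) =O[atTop] fun j : ℕ => j * Real.log j + 1 := by
    refine hr.isBigO.trans (.of_norm_le fun n => ?_)
    rw [Real.norm_of_nonneg (natCast_mul_log_nonneg n)]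
    exact (lt_add_one _).le
  have hsum := isBigO_sum_range_succ (monotone_natCast_mul_log.add_const 1)
    (fun n => by linarith [natCast_mul_log_nonneg n]) hadd
  simp only [blockCount, Nat.cast_sum]
  exact hsum.trans ((hsucc.mul ((isBigO_refl _ _).add hone)).congr_right fun n => by ring)

theorem log_blockCount_succ_isBigO :
    (fun n => Real.log (blockCount r (n + 1))) =O[atTop] fun n : ℕ => Real.log n := by
  refine isBigO_log_of_isBigO_pow (k := 3) ?_ ?_
  · have h := ((tendsto_blockCount hr).comp (tendsto_add_atTop_nat 1)).eventually_ge_atTop 1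
    filter_upwards [h] with n hn
    exact_mod_cast hn
  · have hlog : (fun n : ℕ => Real.log n) =O[atTop] fun n : ℕ => (n : ℝ) :=
      Real.isLittleO_log_id_atTop.isBigO.comp_tendsto tendsto_natCast_atTop_atTop
    exact (blockCount_succ_isBigO hr).trans
      (((isBigO_refl _ _).mul hlog).congr_right fun n => (pow_succ (n : ℝ) 2).symm)

theorem sqrt_blockCount_succ_mul_log_isBigO :
    (fun n => √(blockCount r (n + 1) * Real.log (blockCount r (n + 1)))) =O[atTop]
      fun n => (r n : ℝ) := by
  have hsq : (fun n => (blockCount r (n + 1) : ℝ) * Real.log (blockCount r (n + 1))) =O[atTop]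
      fun n : ℕ => ((n : ℝ) * Real.log n) ^ 2 :=
    ((blockCount_succ_isBigO hr).mul (log_blockCount_succ_isBigO hr)).congr_right fun n => by ring
  have hsqrt := hsq.sqrt (.of_forall fun n => sq_nonneg _)
  simp only [Real.sqrt_sq (natCast_mul_log_nonneg _)] at hsqrt
  exact hsqrt.trans hr.symm.isBigO

end BlockAsymptotics

/-! ### Large partial sums -/

theorem frequently_mul_le_abs_of_increment {S g b : ℕ → ℝ} {N : ℕ → ℕ}
    (hN : Monotone N) (hN_top : Tendsto N atTop atTop) (hg : Monotone g)
    (hgb : (fun j => g (N (j + 1))) =O[atTop] b)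
    (hinc : ∃ᶠ j in atTop, |b j| ≤ |S (N (j + 1)) - S (N j)|) :
    ∃ c > 0, ∃ᶠ n in atTop, c * g n ≤ |S n| := by
  obtain ⟨C, hC, hbound⟩ := hgb.exists_pos
  refine ⟨(2 * C)⁻¹, by positivity, fun hsmall => ?_⟩
  have hright := (hN_top.comp (tendsto_add_atTop_nat 1)).eventually hsmall
  refine hinc (((hN_top.eventually hsmall).and (hright.and hbound.bound)).mono ?_)
  rintro j ⟨hleft, hright, hgj⟩ hj
  rw [not_le, lt_inv_mul_iff₀ (by positivity)] at hleft hright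
  have hgj' : g (N (j + 1)) ≤ C * |b j| := (le_abs_self _).trans hgj
  have htri := hj.trans (abs_sub _ _)
  have hmono : g (N j) ≤ g (N (j + 1)) := hg (hN j.le_succ)
  dsimp only [Function.comp_apply] at hright
  nlinarith

section Limsup

variable {ι : Type*} {l : Filter ι} {u g h : ι → ℝ} {c : ℝ}

theorem coe_le_limsup_div (hg : ∀ᶠ n in l, 0 < g n) (hu : ∃ᶠ n in l, c * g n ≤ u n) :
    (c : EReal) ≤ limsup (fun n => ((u n / g n : ℝ) : EReal)) l :=
  le_limsup_of_frequently_le <| (hu.and_eventually hg).mono fun _ ⟨hn, hgn⟩ =>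
    EReal.coe_le_coe_iff.2 ((le_div_iff₀ hgn).2 hn)

theorem limsup_div_eq_top_of_isLittleO (hc : 0 < c)
    (hg : ∀ᶠ n in l, 0 < g n) (hh : ∀ᶠ n in l, 0 < h n) (hhg : h =o[l] g)
    (hu : ∃ᶠ n in l, c * g n ≤ u n) :
    limsup (fun n => ((u n / h n : ℝ) : EReal)) l = ⊤ := by
  rw [EReal.eq_top_iff_forall_lt]
  intro y
  have hy : (y : EReal) < (|y| + 1 : ℝ) :=
    EReal.coe_lt_coe_iff.2 ((le_abs_self y).trans_lt (lt_add_one _))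
  refine hy.trans_le (coe_le_limsup_div hh ?_)
  have hsmall := hhg.bound (c := c / (|y| + 1)) (by positivity)
  refine (hu.and_eventually (hsmall.and (hg.and hh))).mono ?_
  rintro n ⟨hun, hn, hgn, hhn⟩
  rw [Real.norm_of_nonneg hgn.le, Real.norm_of_nonneg hhn.le, div_mul_eq_mul_div,
    le_div_iff₀' (by positivity)] at hn
  exact hn.trans hun

end Limsup

theorem eventually_sqrt_mul_log_pos : ∀ᶠ n : ℕ in atTop, 0 < √(n * Real.log n) :=
  (tendsto_natCast_mul_log_atTop.eventually_gt_atTop 0).mono fun _ => Real.sqrt_pos.2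

theorem eventually_sqrt_mul_log_log_pos :
    ∀ᶠ n : ℕ in atTop, 0 < √(2 * n * Real.log (Real.log n)) := by
  have hloglog : Tendsto (fun n : ℕ => Real.log (Real.log n)) atTop atTop :=
    Real.tendsto_log_atTop.comp (Real.tendsto_log_atTop.comp tendsto_natCast_atTop_atTop)
  filter_upwards [hloglog.eventually_gt_atTop 0, eventually_gt_atTop 0] with n hlog hn
  positivity

theorem sqrt_mul_log_log_isLittleO_sqrt_mul_log :
    (fun n : ℕ => √(2 * n * Real.log (Real.log n))) =o[atTop] fun n => √(n * Real.log n) := by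
  have hlog : (fun n : ℕ => Real.log (Real.log n)) =o[atTop] fun n => Real.log n :=
    Real.isLittleO_log_id_atTop.comp_tendsto
      (Real.tendsto_log_atTop.comp tendsto_natCast_atTop_atTop)
  have htwo : (fun n : ℕ => (2 * n : ℝ)) =O[atTop] fun n => (n : ℝ) :=
    isBigO_const_mul_self 2 _ _
  exact (htwo.mul_isLittleO hlog).sqrt (.of_forall natCast_mul_log_nonneg)

theorem blockCount_mono (r : ℕ → ℕ) : Monotone (blockCount r) :=
  (Finset.sum_mono_set r).comp Finset.range_mono

theorem monotone_of_dvd_succ {m : ℕ → ℕ} (hpos : ∀ j, 0 < m j) (hdvd : ∀ j, m j ∣ m (j + 1)) :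
    Monotone m :=
  monotone_nat_of_le_succ fun j => Nat.le_of_dvd (hpos _) (hdvd j)

theorem frequently_mul_sqrt_mul_log_le_abs_sum {m r : ℕ → ℕ} (hpos : ∀ j, 0 < m j)
    (hmono : Monotone m) (hsep : ∀ j, r j * m j < m (j + 1))
    (hr : (fun j => (r j : ℝ)) =Θ[atTop] fun j : ℕ => (j : ℝ) * Real.log j) {x : ℝ}
    (hx : ∃ᶠ j in atTop, r j * Int.fract ((m j : ℝ) * x) ≤ 1 / 6) :
    ∃ c > 0, ∃ᶠ N : ℕ in atTop, c * √(N * Real.log N) ≤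
      |∑ k ∈ Finset.range N, Real.cos (2 * π * Nat.nth (· ∈ blockSet m r) k * x)| := by
  refine frequently_mul_le_abs_of_increment (b := fun j => 2⁻¹ * (r j : ℝ))
    (blockCount_mono r) (tendsto_blockCount hr)
    (fun a b hab => Real.sqrt_le_sqrt (monotone_natCast_mul_log hab))
    ((isBigO_const_mul_right_iff (by norm_num)).2 (sqrt_blockCount_succ_mul_log_isBigO hr)) ?_
  refine hx.mono fun j hj => ?_
  simp only [sum_nth_blockSet hmono hsep hpos (fun v => Real.cos (2 * π * v * x))]
  rw [Finset.sum_range_succ, add_sub_cancel_left]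
  have hblock := div_two_le_sum_cos_of_mul_fract_le hj
  rw [abs_of_nonneg (by positivity), inv_mul_eq_div]
  refine (hblock.trans_eq (Finset.sum_congr rfl fun i _ => ?_)).trans (le_abs_self _)
  push_cast
  ring_nf

theorem statement10_general {m r : ℕ → ℕ} (hdvd : ∀ j, m j ∣ m (j + 1))
    (hsep : ∀ j, r j * m j < m (j + 1)) (hgap : ∀ᶠ j in atTop, 6 * r j * m j ≤ m (j + 1))
    (hr : (fun j => (r j : ℝ)) =Θ[atTop] fun j : ℕ => (j : ℝ) * Real.log j) :
    ∃ μ : ℕ → ℕ, StrictMono μ ∧ (∀ k, 0 < μ k) ∧ Set.range μ = blockSet m r ∧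
      ∀ᵐ x ∂(volume.restrict (Set.Ioo (0 : ℝ) 1)),
        (0 : EReal) < limsup (fun N : ℕ => ((|∑ k ∈ Finset.range N, Real.cos (2 * π * μ k * x)| /
          √(N * Real.log N) : ℝ) : EReal)) atTop ∧
        limsup (fun N : ℕ => ((|∑ k ∈ Finset.range N, Real.cos (2 * π * μ k * x)| /
          √(2 * N * Real.log (Real.log N)) : ℝ) : EReal)) atTop = ⊤ := by
  have hpos (j : ℕ) : 0 < m j := Nat.pos_of_dvd_of_pos (hdvd j) (Nat.zero_lt_of_lt (hsep j))
  have hmono := monotone_of_dvd_succ hpos hdvd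
  have hinf := infinite_blockSet hmono hsep hpos (tendsto_blockCount hr)
  refine ⟨Nat.nth (· ∈ blockSet m r), Nat.nth_strictMono hinf, fun k => ?_,
    Nat.range_nth_of_infinite hinf, ?_⟩
  · obtain ⟨j, i, hi, -, hv⟩ := mem_blockSet.1 (Nat.nth_mem_of_infinite hinf k)
    exact hv ▸ Nat.mul_pos hi (hpos j)
  have hsummable : ¬ Summable fun j => ((6 * r j : ℕ) : ℝ)⁻¹ := by
    have hsix : (6 : ℝ)⁻¹ ≠ 0 := by norm_num
    simpa only [Nat.cast_mul, Nat.cast_ofNat, mul_inv, summable_mul_left_iff hsix] using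
      not_summable_inv_of_isTheta hr
  have hae := ae_frequently_natCast_mul_fract_le_one hpos hdvd hgap hsummable
  filter_upwards [ae_mono (Measure.restrict_mono Set.Ioo_subset_Ico_self le_rfl) hae] with x hx
  obtain ⟨c, hc, hfreq⟩ := frequently_mul_sqrt_mul_log_le_abs_sum hpos hmono hsep hr
    (x := x) (hx.mono fun j hj => by push_cast at hj; linarith)
  exact ⟨(EReal.coe_pos.2 hc).trans_le (coe_le_limsup_div eventually_sqrt_mul_log_pos hfreq),
    limsup_div_eq_top_of_isLittleO hc eventually_sqrt_mul_log_pos eventually_sqrt_mul_log_log_pos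
      sqrt_mul_log_log_isLittleO_sqrt_mul_log hfreq⟩

/-! ### Dyadic blocks -/

/-- Block lengths `r_j ∼ j log j`, with `r_0 = 0` and `r_j ≥ 1` for `j ≥ 1`. -/
def blockLen (j : ℕ) : ℕ := ⌈(j : ℝ) * (Real.log j + 1)⌉₊

theorem blockLen_isEquivalent :
    (fun j => (blockLen j : ℝ)) ~[atTop] fun j : ℕ => (j : ℝ) * Real.log j := by
  have hlog : (fun j : ℕ => Real.log j + 1) ~[atTop] fun j : ℕ => Real.log j :=
    IsEquivalent.refl.add_isLittleO
      (Real.isLittleO_const_log_atTop.comp_tendsto tendsto_natCast_atTop_atTop)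
  have hmul : (fun j : ℕ => (j : ℝ) * (Real.log j + 1)) ~[atTop] fun j : ℕ => j * Real.log j :=
    IsEquivalent.refl.mul hlog
  have htop := hmul.symm.tendsto_atTop tendsto_natCast_mul_log_atTop
  have hceil : (fun j => (blockLen j : ℝ)) ~[atTop] fun j : ℕ => (j : ℝ) * (Real.log j + 1) :=
    (isEquivalent_nat_ceil (R := ℝ)).comp_tendsto htop
  exact hceil.trans hmul

theorem tendsto_blockLen_div :
    Tendsto (fun j : ℕ => (blockLen j : ℝ) / (j * Real.log j)) atTop (𝓝 1) :=
  (isEquivalent_iff_tendsto_one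
    (tendsto_natCast_mul_log_atTop.eventually_ne_atTop 0)).1 blockLen_isEquivalent

/-- Powers of `2` serving as bases `m_j` for blocks of length `r_j`. As `Nat.size n` is the number
of binary digits of `n`, this exponent gives `r_j 2 ^ (2 j) m_j < m_{j+1}`. -/
def dyadicBase (r : ℕ → ℕ) (j : ℕ) : ℕ := 2 ^ ∑ i ∈ Finset.range j, (Nat.size (r i) + 2 * i)

theorem dyadicBase_dvd_succ (r : ℕ → ℕ) (j : ℕ) : dyadicBase r j ∣ dyadicBase r (j + 1) :=
  pow_dvd_pow 2 (Finset.sum_mono_set _ (Finset.range_mono j.le_succ))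

theorem mul_two_pow_mul_dyadicBase_lt (r : ℕ → ℕ) (j : ℕ) :
    r j * 2 ^ (2 * j) * dyadicBase r j < dyadicBase r (j + 1) := by
  rw [dyadicBase, dyadicBase, Finset.sum_range_succ, pow_add, pow_add, mul_comm]
  gcongr
  exact Nat.lt_size_self (r j)

theorem mul_dyadicBase_lt (r : ℕ → ℕ) (j : ℕ) : r j * dyadicBase r j < dyadicBase r (j + 1) :=
  (Nat.mul_le_mul_right _ (Nat.le_mul_of_pos_right _ (by positivity))).trans_lt
    (mul_two_pow_mul_dyadicBase_lt r j)

theorem eventually_mul_dyadicBase_le (r : ℕ → ℕ) (c : ℕ) :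
    ∀ᶠ j in atTop, c * r j * dyadicBase r j ≤ dyadicBase r (j + 1) := by
  filter_upwards [eventually_ge_atTop c] with j hj
  refine (Nat.mul_le_mul_right _ ?_).trans (mul_two_pow_mul_dyadicBase_lt r j).le
  rw [mul_comm]
  gcongr
  have := (2 * j).lt_two_pow_self
  lia

theorem blockSet_eq_of_zero {m r : ℕ → ℕ} (hr : r 0 = 0) :
    blockSet m r = {v | ∃ j, 1 ≤ j ∧ ∃ i, 1 ≤ i ∧ i ≤ r j ∧ v = i * m j} := by
  ext v
  rw [mem_blockSet]
  refine ⟨fun ⟨j, i, hi, hir, hv⟩ => ⟨j, Nat.one_le_iff_ne_zero.2 ?_, i, hi, hir, hv⟩,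
    fun ⟨j, _, h⟩ => ⟨j, h⟩⟩
  rintro rfl
  lia

/-- Construction in the LIL part of the proof of Theorem 1: there is a strictly increasing
sequence `(μ_k)` of positive integers — the increasing enumeration of
`⋃_{j≥1} {m_j, 2m_j, …, r_j m_j}` with `m_j` powers of `2`, `m_{j+1} ≥ r_j 2^{2j} m_j` and
`r_j ∼ j log j` — such that `limsup_N |∑_{k≤N} cos 2π μ_k x| / √(N log N) > 0` a.e. on
`(0,1)`, and in particular `limsup_N |∑_{k≤N} cos 2π μ_k x| / √(2N log log N) = +∞` a.e. -/
theorem statement10 :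
    ∃ (μ : ℕ → ℕ) (m r : ℕ → ℕ),
      StrictMono μ ∧ (∀ k, 0 < μ k) ∧
      (∀ j : ℕ, 1 ≤ j → ∃ s : ℕ, m j = 2 ^ s) ∧
      (∀ j : ℕ, 1 ≤ j → r j * 2 ^ (2 * j) * m j ≤ m (j + 1)) ∧
      Tendsto (fun j : ℕ => (r j : ℝ) / (j * Real.log j)) atTop (𝓝 1) ∧
      Set.range μ
        = {v : ℕ | ∃ j : ℕ, 1 ≤ j ∧ ∃ i : ℕ, 1 ≤ i ∧ i ≤ r j ∧ v = i * m j} ∧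
      (∀ᵐ x ∂(volume.restrict (Set.Ioo (0:ℝ) 1)),
        (0 : EReal) < Filter.limsup (fun N : ℕ =>
            ((|∑ k ∈ Finset.range N, Real.cos (2 * π * μ k * x)| /
                Real.sqrt (N * Real.log N) : ℝ) : EReal)) atTop ∧
        Filter.limsup (fun N : ℕ =>
            ((|∑ k ∈ Finset.range N, Real.cos (2 * π * μ k * x)| /
                Real.sqrt (2 * N * Real.log (Real.log N)) : ℝ) : EReal)) atTop = ⊤) := by
  obtain ⟨μ, hμ, hpos, hrange, hae⟩ := statement10_general (dyadicBase_dvd_succ blockLen)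
    (mul_dyadicBase_lt blockLen) (eventually_mul_dyadicBase_le blockLen 6)
    blockLen_isEquivalent.isTheta
  exact ⟨μ, dyadicBase blockLen, blockLen, hμ, hpos, fun j _ => ⟨_, rfl⟩,
    fun j _ => (mul_two_pow_mul_dyadicBase_lt blockLen j).le, tendsto_blockLen_div,
    hrange.trans (blockSet_eq_of_zero (by simp [blockLen])), hae⟩
end
end
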